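/- arXiv:1805.09956 — 3 statements merged into one kernel-verified Lean document; each statement's English description precedes it below -/
import Mathlib

section
/- Let G be the ℓ×ℓ grid with n = ℓ² vertices and log₂ n ≥ 25 (so that η = 2^⌈√(log₂ n)⌉ > 16), let ρ be a positive integer with ρ ≤ √(log₂ n), and d_h = η^{ρ−h+3}. Let H̃ = (Q₁,…,Q_ρ) be a hierarchical system of squares of G disjoint from the top row R*, let L = (ℓ₁,…,ℓ_ρ) be a sequence of integral powers of η with ℓ₁ > … > ℓ_ρ, and let (J₁,…,J_ρ) be the L-hierarchical decomposition of R*. Suppose M̃** is a set of demand pairs with all sources distinct and lying on R* and all destinations distinct and belonging to H̃, such that M̃** is compatible with L and every square of H̃ has the (1/η²)-shadow property with respect to M̃**. Then there exist a valid coloring f of H̃ and a subset M̃' ⊆ M̃** such that M̃' is perfect for f and |M̃'| ≥ |M̃**|/2^ρ. -/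
/-!
The coloring is built level by level, from the coarsest squares to the finest ones, keeping at
each level at least half of the surviving demand pairs, all of which have their source in the
color of the square that contains their destination.

The key point (`mem_first_or_last`) is that the sources of the pairs with destination in a level-`h`
square `Q` meet at most two intervals of the level-`h` decomposition. If a source lay in an
interval strictly between those of the leftmost and the rightmost source, that interval would be
contained in the shadow of `Q`. By compatibility it holds at least `d_h / (16 η)` sources, which for
`η > 16` exceeds the bound `d_h / η²` on the number of sources in the shadow. So the more popular
of the two extreme intervals contains the sources of at least half of the pairs
(`exists_color`). As the decompositions are nested, and the surviving pairs have their sources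
in the color of the parent of `Q`, this interval lies in that color too. Squares of one level are
disjoint, so the choices for different squares do not interact (`exists_refinement`). After `ρ`
levels a fraction `2^{-ρ}` of the pairs is left, and the upper bound on the number of sources per
interval is part of compatibility.
-/

open Finset

abbrev Vtx := ℕ × ℕ
abbrev DPair := Vtx × Vtx

/-- The grid graph on rows `r₁..r₂` and columns `c₁..c₂` (vertices outside are isolated). -/
def rectGrid (r₁ r₂ c₁ c₂ : ℕ) : SimpleGraph Vtx :=
  SimpleGraph.fromRel (fun u v =>
    r₁ ≤ u.1 ∧ u.1 ≤ r₂ ∧ c₁ ≤ u.2 ∧ u.2 ≤ c₂ ∧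
    r₁ ≤ v.1 ∧ v.1 ≤ r₂ ∧ c₁ ≤ v.2 ∧ v.2 ≤ c₂ ∧
    ((u.1 = v.1 ∧ u.2 + 1 = v.2) ∨ (u.2 = v.2 ∧ u.1 + 1 = v.1)))

/-- The ℓ×ℓ grid graph. -/
def gridG (ℓ : ℕ) : SimpleGraph Vtx := rectGrid 1 ℓ 1 ℓ

/-- The demand pairs of `M` can be simultaneously routed via node-disjoint paths in `G`. -/
def NodeDisjointRoutable {V : Type*} (G : SimpleGraph V) (M : Finset (V × V)) : Prop :=
  ∃ P : ∀ m : {m // m ∈ M}, G.Walk m.val.1 m.val.2,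
    (∀ m, (P m).IsPath) ∧
    ∀ m m' : {m // m ∈ M}, m ≠ m' → ∀ x, x ∈ (P m).support → x ∉ (P m').support

def OnTopRow (ℓ : ℕ) (v : Vtx) : Prop := v.1 = 1 ∧ 1 ≤ v.2 ∧ v.2 ≤ ℓ

def OnBoundary (ℓ : ℕ) (v : Vtx) : Prop :=
  1 ≤ v.1 ∧ v.1 ≤ ℓ ∧ 1 ≤ v.2 ∧ v.2 ≤ ℓ ∧ (v.1 = 1 ∨ v.1 = ℓ ∨ v.2 = 1 ∨ v.2 = ℓ)

def DistinctSources (M : Finset DPair) : Prop := ∀ m ∈ M, ∀ m' ∈ M, m.1 = m'.1 → m = m'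
def DistinctDests (M : Finset DPair) : Prop := ∀ m ∈ M, ∀ m' ∈ M, m.2 = m'.2 → m = m'

noncomputable def lg (n : ℕ) : ℝ := Real.logb 2 n

def IsIntervalIn (W : ℕ) (I : Finset ℕ) : Prop :=
  ∃ a b : ℕ, 1 ≤ a ∧ a ≤ b ∧ b ≤ W ∧ I = Finset.Icc a b

def IntSeparated (d : ℕ) (I J : Finset ℕ) : Prop :=
  ∀ i ∈ I, ∀ j ∈ J, (d : ℤ) < |(i : ℤ) - (j : ℤ)|

def IsCanonicalIntervals (W d : ℕ) (Is : Finset (Finset ℕ)) : Prop :=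
  (∀ I ∈ Is, IsIntervalIn W I ∧ I.card = d) ∧
    ∀ I ∈ Is, ∀ J ∈ Is, I ≠ J → IntSeparated d I J

abbrev SquareSpec := Finset ℕ × Finset ℕ

def memSquare (v : Vtx) (Q : SquareSpec) : Prop := v.1 ∈ Q.1 ∧ v.2 ∈ Q.2

instance (v : Vtx) (Q : SquareSpec) : Decidable (memSquare v Q) := by
  unfold memSquare; infer_instance

def IsCanonicalSquares (W d : ℕ) (Qs : Finset SquareSpec) : Prop :=
  ∃ I₁ I₂ : Finset (Finset ℕ),
    IsCanonicalIntervals W d I₁ ∧ IsCanonicalIntervals W d I₂ ∧ Qs = I₁ ×ˢ I₂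

/-- The number of sources of `M` lying on the shadow of the square `Q` with respect to `M`,
i.e. on the shortest sub-path of the top row containing all sources of pairs of `M` whose
destination lies in `Q`. -/
def shadowCount (M : Finset DPair) (Q : SquareSpec) : ℕ :=
  (M.filter (fun m => ∃ m₁ ∈ M, memSquare m₁.2 Q ∧ ∃ m₂ ∈ M, memSquare m₂.2 Q ∧
      m₁.1.2 ≤ m.1.2 ∧ m.1.2 ≤ m₂.1.2)).card

/-- The square `Q` (of side `d`) has the β-shadow property with respect to `M`. -/
def HasShadowProp (β : ℝ) (d : ℕ) (M : Finset DPair) (Q : SquareSpec) : Prop :=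
  (shadowCount M Q : ℝ) ≤ β * d

/-- A hierarchical system of squares `Qs 1, …, Qs ρ`. -/
def IsHierSquares (W η ρ : ℕ) (Qs : ℕ → Finset SquareSpec) : Prop :=
  (∀ h, 1 ≤ h → h ≤ ρ → IsCanonicalSquares W (η ^ (ρ - h + 3)) (Qs h)) ∧
    ∀ h, 1 < h → h ≤ ρ → ∀ Q ∈ Qs h, ∃ Q' ∈ Qs (h - 1), Q.1 ⊆ Q'.1 ∧ Q.2 ⊆ Q'.2

/-- `I` is an interval of the level-`h` decomposition of the first `W` vertices of the top
row into consecutive intervals of exactly `lh` vertices each (the last possibly shorter). -/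
def IsLevelInterval (W lh : ℕ) (I : Finset ℕ) : Prop :=
  ∃ k : ℕ, k * lh < W ∧ I = Finset.Icc (k * lh + 1) (min ((k + 1) * lh) W)

/-- `M` is compatible with the sequence `L`. -/
def CompatibleWith (W ρ η : ℕ) (L : ℕ → ℕ) (M : Finset DPair) : Prop :=
  ∀ h, 1 ≤ h → h ≤ ρ → ∀ I, IsLevelInterval W (L h) I →
    (∀ m ∈ M, m.1.2 ∉ I) ∨
    ((η : ℝ) ^ (ρ - h + 3) / (16 * η) ≤ ((M.filter (fun m => m.1.2 ∈ I)).card : ℝ) ∧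
      ((M.filter (fun m => m.1.2 ∈ I)).card : ℝ) ≤ (η : ℝ) ^ (ρ - h + 3) / 4)

/-- A valid coloring `f` of the hierarchical system `Qs` with respect to the
`L`-hierarchical decomposition of the top row: each level-`h` square gets a level-`h`
interval, consistently with the parent structure. -/
def ValidColoring (W ρ : ℕ) (L : ℕ → ℕ) (Qs : ℕ → Finset SquareSpec)
    (f : ℕ → SquareSpec → Finset ℕ) : Prop :=
  (∀ h, 1 ≤ h → h ≤ ρ → ∀ Q ∈ Qs h, IsLevelInterval W (L h) (f h Q)) ∧
    ∀ h, 1 < h → h ≤ ρ → ∀ Q ∈ Qs h, ∀ Q' ∈ Qs (h - 1),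
      (Q.1 ⊆ Q'.1 ∧ Q.2 ⊆ Q'.2) → f h Q ⊆ f (h - 1) Q'

/-- `M` is a perfect set of demand pairs for the coloring `f`. -/
def PerfectFor (W ρ η : ℕ) (L : ℕ → ℕ) (Qs : ℕ → Finset SquareSpec)
    (f : ℕ → SquareSpec → Finset ℕ) (M : Finset DPair) : Prop :=
  DistinctSources M ∧ DistinctDests M ∧
    (∀ m ∈ M, ∀ Q ∈ Qs ρ, memSquare m.2 Q → m.1.2 ∈ f ρ Q) ∧
    ∀ h, 1 ≤ h → h ≤ ρ → ∀ I, IsLevelInterval W (L h) I →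
      (M.filter (fun m => m.1.2 ∈ I)).card ≤ η ^ (ρ - h + 3)

/-- The interval containing `x` in the decomposition of `1, …, W` into consecutive intervals of `l`
positions, the last one possibly shorter. -/
def lvl (W l x : ℕ) : Finset ℕ :=
  Finset.Icc ((x - 1) / l * l + 1) (min (((x - 1) / l + 1) * l) W)

lemma mem_lvl {W l x y : ℕ} (hl : 0 < l) :
    y ∈ lvl W l x ↔ 1 ≤ y ∧ y ≤ W ∧ (y - 1) / l = (x - 1) / l := by
  unfold lvl
  rw [Finset.mem_Icc, le_min_iff, Nat.div_eq_iff hl]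
  have h1 : ((x - 1) / l + 1) * l = (x - 1) / l * l + l := by ring
  rw [h1]
  generalize (x - 1) / l * l = z
  omega

lemma self_mem_lvl {W l x : ℕ} (hl : 0 < l) (hx : 1 ≤ x) (hx' : x ≤ W) : x ∈ lvl W l x :=
  (mem_lvl hl).2 ⟨hx, hx', rfl⟩

lemma isLevelInterval_lvl {W l x : ℕ} (hx : 1 ≤ x) (hx' : x ≤ W) :
    IsLevelInterval W l (lvl W l x) := by
  refine ⟨(x - 1) / l, ?_, rfl⟩
  have := Nat.div_mul_le_self (x - 1) l
  omega

lemma IsLevelInterval.eq_lvl {W l : ℕ} (hl : 0 < l) {J : Finset ℕ} (hJ : IsLevelInterval W l J) :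
    ∃ x, 1 ≤ x ∧ x ≤ W ∧ J = lvl W l x := by
  obtain ⟨k, hk, rfl⟩ := hJ
  refine ⟨k * l + 1, by omega, by omega, ?_⟩
  have : (k * l + 1 - 1) / l = k := by
    rw [Nat.add_sub_cancel, Nat.mul_div_cancel _ hl]
  rw [lvl, this]

/-- If the fine length divides the coarse one, a fine interval that meets a coarse interval lies
inside it. -/
lemma lvl_subset {W a b x : ℕ} (hb : 0 < b) (ha : 0 < a) (hab : b ∣ a) {J : Finset ℕ}
    (hJ : IsLevelInterval W a J) (hx : x ∈ J) : lvl W b x ⊆ J := by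
  obtain ⟨z, -, -, rfl⟩ := hJ.eq_lvl ha
  obtain ⟨c, rfl⟩ := hab
  intro y hy
  rw [mem_lvl hb] at hy
  rw [mem_lvl ha] at hx ⊢
  refine ⟨hy.1, hy.2.1, ?_⟩
  rw [← hx.2.2, ← Nat.div_div_eq_div_mul, ← Nat.div_div_eq_div_mul, hy.2.2]

lemma IsCanonicalIntervals.eq_of_mem {W d : ℕ} {Is : Finset (Finset ℕ)}
    (h : IsCanonicalIntervals W d Is) {I J : Finset ℕ} (hI : I ∈ Is) (hJ : J ∈ Is) {x : ℕ}
    (hxI : x ∈ I) (hxJ : x ∈ J) : I = J := by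
  by_contra hne
  have := h.2 I hI J hJ hne x hxI x hxJ
  simp at this
  omega

/-- The squares of a canonical family are pairwise disjoint. -/
lemma IsCanonicalSquares.eq_of_mem {W d : ℕ} {Qs : Finset SquareSpec}
    (h : IsCanonicalSquares W d Qs) {Q Q' : SquareSpec} (hQ : Q ∈ Qs) (hQ' : Q' ∈ Qs) {v : Vtx}
    (hv : memSquare v Q) (hv' : memSquare v Q') : Q = Q' := by
  obtain ⟨I₁, I₂, h₁, h₂, rfl⟩ := h
  rw [Finset.mem_product] at hQ hQ'
  exact Prod.ext (h₁.eq_of_mem hQ.1 hQ'.1 hv.1 hv'.1) (h₂.eq_of_mem hQ.2 hQ'.2 hv.2 hv'.2)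

lemma IsCanonicalSquares.exists_mem {W d : ℕ} {Qs : Finset SquareSpec}
    (h : IsCanonicalSquares W d Qs) {Q : SquareSpec} (hQ : Q ∈ Qs) : ∃ v, memSquare v Q := by
  obtain ⟨I₁, I₂, h₁, h₂, rfl⟩ := h
  rw [Finset.mem_product] at hQ
  obtain ⟨a, b, -, hab, -, h1⟩ := (h₁.1 _ hQ.1).1
  obtain ⟨a', b', -, hab', -, h2⟩ := (h₂.1 _ hQ.2).1
  refine ⟨(a, a'), ?_, ?_⟩
  · rw [h1]; exact Finset.left_mem_Icc.2 hab
  · rw [h2]; exact Finset.left_mem_Icc.2 hab'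

/-- Every vertex of a finest square lies in a square of each coarser level. -/
lemma exists_square {W η ρ : ℕ} {Qs : ℕ → Finset SquareSpec} (hH : IsHierSquares W η ρ Qs)
    {v : Vtx} (hv : ∃ Q ∈ Qs ρ, memSquare v Q) {h : ℕ} (h1 : 1 ≤ h) (hh : h ≤ ρ) :
    ∃ Q ∈ Qs h, memSquare v Q := by
  induction hh using Nat.decreasingInduction with
  | self => exact hv
  | of_succ k hk ih =>
    obtain ⟨Q, hQ, hvQ⟩ := ih (by omega)
    obtain ⟨Q', hQ', hs⟩ := hH.2 (k + 1) (by omega) (by omega) Q hQ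
    exact ⟨Q', by simpa using hQ', hs.1 hvQ.1, hs.2 hvQ.2⟩

/-- A source between those of two pairs `m₀`, `m₁` with destination in `Q` lies in the interval of
one of these two sources: otherwise its interval is contained in the shadow
of `Q` and holds more sources than the shadow property allows. -/
lemma mem_first_or_last {W η d l : ℕ} (hη : 16 < η) (hd : 0 < d) (hl : 0 < l)
    {M : Finset DPair} (hsrc : ∀ m ∈ M, OnTopRow W m.1) {Q : SquareSpec}
    (hcompat : ∀ I, IsLevelInterval W l I → (∀ m ∈ M, m.1.2 ∉ I) ∨
      (d : ℝ) / (16 * η) ≤ ((M.filter (fun m => m.1.2 ∈ I)).card : ℝ))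
    (hshadow : HasShadowProp (1 / (η : ℝ) ^ 2) d M Q)
    {m m₀ m₁ : DPair} (hm : m ∈ M) (hm₀ : m₀ ∈ M) (hm₁ : m₁ ∈ M)
    (hQ₀ : memSquare m₀.2 Q) (hQ₁ : memSquare m₁.2 Q)
    (h₀ : m₀.1.2 ≤ m.1.2) (h₁ : m.1.2 ≤ m₁.1.2) :
    m.1.2 ∈ lvl W l m₀.1.2 ∨ m.1.2 ∈ lvl W l m₁.1.2 := by
  by_contra! hcon
  obtain ⟨hc₀, hc₁⟩ := hcon
  obtain ⟨-, hm1, hmW⟩ := hsrc m hm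
  rw [mem_lvl hl] at hc₀ hc₁
  have e₀ : (m₀.1.2 - 1) / l ≤ (m.1.2 - 1) / l := Nat.div_le_div_right (by omega)
  have e₁ : (m.1.2 - 1) / l ≤ (m₁.1.2 - 1) / l := Nat.div_le_div_right (by omega)
  have f₀ : (m₀.1.2 - 1) / l < (m.1.2 - 1) / l :=
    lt_of_le_of_ne e₀ fun h => hc₀ ⟨hm1, hmW, h.symm⟩
  have f₁ : (m.1.2 - 1) / l < (m₁.1.2 - 1) / l :=
    lt_of_le_of_ne e₁ fun h => hc₁ ⟨hm1, hmW, h⟩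
  have hsub : (M.filter (fun m' => m'.1.2 ∈ lvl W l m.1.2)).card ≤ shadowCount M Q := by
    apply Finset.card_le_card
    intro m' hm'
    rw [Finset.mem_filter, mem_lvl hl] at hm'
    obtain ⟨hm'M, -, -, he⟩ := hm'
    refine Finset.mem_filter.2 ⟨hm'M, m₀, hm₀, hQ₀, m₁, hm₁, hQ₁, ?_, ?_⟩
    · rw [← he] at f₀
      by_contra! hlt
      exact absurd (Nat.div_le_div_right (c := l) (by omega : m'.1.2 - 1 ≤ m₀.1.2 - 1)) (by omega)
    · rw [← he] at f₁
      by_contra! hlt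
      exact absurd (Nat.div_le_div_right (c := l) (by omega : m₁.1.2 - 1 ≤ m'.1.2 - 1)) (by omega)
  rcases hcompat _ (isLevelInterval_lvl hm1 hmW) with h | h
  · exact h m hm (self_mem_lvl hl hm1 hmW)
  · have h2 : (d : ℝ) / (16 * η) ≤ 1 / (η : ℝ) ^ 2 * d :=
      (h.trans (by exact_mod_cast hsub)).trans hshadow
    have hη' : (16 : ℝ) < η := by exact_mod_cast hη
    have hd' : (0 : ℝ) < d := by exact_mod_cast hd
    rw [one_div_mul_eq_div, div_le_div_iff₀ (by positivity) (by positivity)] at h2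
    have h3 : (η : ℝ) ^ 2 ≤ 16 * η := le_of_mul_le_mul_left h2 hd'
    nlinarith

/-- The color of a single square. Here `S` is a set of surviving pairs with destination in `Q`,
and `P` is the set of positions allowed by the color of the parent of `Q`; it is closed under
passing to another position of the same interval, and contains a position of the top row. -/
lemma exists_color {W η d l : ℕ} (hη : 16 < η) (hd : 0 < d) (hl : 0 < l)
    {M : Finset DPair} (hsrc : ∀ m ∈ M, OnTopRow W m.1) {Q : SquareSpec}
    (hcompat : ∀ I, IsLevelInterval W l I → (∀ m ∈ M, m.1.2 ∉ I) ∨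
      (d : ℝ) / (16 * η) ≤ ((M.filter (fun m => m.1.2 ∈ I)).card : ℝ))
    (hshadow : HasShadowProp (1 / (η : ℝ) ^ 2) d M Q)
    {S : Finset DPair} (hS : S ⊆ M) (hSQ : ∀ m ∈ S, memSquare m.2 Q)
    {P : Set ℕ} (hP : ∀ x ∈ P, ∀ y ∈ lvl W l x, y ∈ P)
    (hPne : ∃ x ∈ P, 1 ≤ x ∧ x ≤ W) (hSP : ∀ m ∈ S, m.1.2 ∈ P) :
    ∃ I, IsLevelInterval W l I ∧ (∀ y ∈ I, y ∈ P) ∧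
      S.card ≤ 2 * (S.filter (fun m => m.1.2 ∈ I)).card := by
  rcases S.eq_empty_or_nonempty with rfl | hne
  · obtain ⟨x, hx, hx1, hxW⟩ := hPne
    exact ⟨_, isLevelInterval_lvl hx1 hxW, hP x hx, by simp⟩
  obtain ⟨m₀, hm₀, hmin⟩ := S.exists_min_image (fun m => m.1.2) hne
  obtain ⟨m₁, hm₁, hmax⟩ := S.exists_max_image (fun m => m.1.2) hne
  have hcov : S.card ≤ (S.filter (fun m => m.1.2 ∈ lvl W l m₀.1.2)).card +
      (S.filter (fun m => m.1.2 ∈ lvl W l m₁.1.2)).card := by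
    refine (Finset.card_le_card fun m hm => ?_).trans (Finset.card_union_le _ _)
    rw [Finset.mem_union, Finset.mem_filter, Finset.mem_filter]
    rcases mem_first_or_last hη hd hl hsrc hcompat hshadow (hS hm) (hS hm₀) (hS hm₁)
      (hSQ _ hm₀) (hSQ _ hm₁) (hmin m hm) (hmax m hm) with h | h
    · exact Or.inl ⟨hm, h⟩
    · exact Or.inr ⟨hm, h⟩
  have key : ∀ m ∈ S, IsLevelInterval W l (lvl W l m.1.2) ∧ ∀ y ∈ lvl W l m.1.2, y ∈ P :=
    fun m hm => ⟨isLevelInterval_lvl (hsrc m (hS hm)).2.1 (hsrc m (hS hm)).2.2,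
      hP _ (hSP m hm)⟩
  rcases le_total (S.filter (fun m => m.1.2 ∈ lvl W l m₀.1.2)).card
    (S.filter (fun m => m.1.2 ∈ lvl W l m₁.1.2)).card with h | h
  · exact ⟨_, (key m₁ hm₁).1, (key m₁ hm₁).2, by omega⟩
  · exact ⟨_, (key m₀ hm₀).1, (key m₀ hm₀).2, by omega⟩

/-- Combining the colors `g Q` of disjoint squares that cover the destinations of `M`: if each
square keeps at least half of its pairs, so does the whole family. -/
lemma exists_half {M : Finset DPair} {Qs : Finset SquareSpec}
    (hcov : ∀ m ∈ M, ∃ Q ∈ Qs, memSquare m.2 Q)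
    (huniq : ∀ v, ∀ Q ∈ Qs, ∀ Q' ∈ Qs, memSquare v Q → memSquare v Q' → Q = Q')
    (g : SquareSpec → Finset ℕ)
    (hg : ∀ Q ∈ Qs, (M.filter (fun m => memSquare m.2 Q)).card ≤
      2 * ((M.filter (fun m => memSquare m.2 Q)).filter (fun m => m.1.2 ∈ g Q)).card) :
    ∃ N ⊆ M, M.card ≤ 2 * N.card ∧ ∀ m ∈ N, ∀ Q ∈ Qs, memSquare m.2 Q → m.1.2 ∈ g Q := by
  refine ⟨M.filter (fun m => ∀ Q ∈ Qs, memSquare m.2 Q → m.1.2 ∈ g Q), Finset.filter_subset _ _,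
    ?_, fun m hm => (Finset.mem_filter.1 hm).2⟩
  calc M.card ≤ (Qs.biUnion fun Q => M.filter (fun m => memSquare m.2 Q)).card := by
        refine Finset.card_le_card fun m hm => ?_
        obtain ⟨Q, hQ, hmQ⟩ := hcov m hm
        exact Finset.mem_biUnion.2 ⟨Q, hQ, Finset.mem_filter.2 ⟨hm, hmQ⟩⟩
    _ ≤ ∑ Q ∈ Qs, (M.filter (fun m => memSquare m.2 Q)).card := Finset.card_biUnion_le
    _ ≤ ∑ Q ∈ Qs,
        2 * ((M.filter (fun m => memSquare m.2 Q)).filter (fun m => m.1.2 ∈ g Q)).card :=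
        Finset.sum_le_sum hg
    _ = 2 * (Qs.biUnion fun Q =>
        (M.filter (fun m => memSquare m.2 Q)).filter (fun m => m.1.2 ∈ g Q)).card := by
        rw [← Finset.mul_sum, Finset.card_biUnion]
        intro Q hQ Q' hQ' hne
        rw [Function.onFun, Finset.disjoint_left]
        intro m hm hm'
        simp only [Finset.mem_filter] at hm hm'
        exact hne (huniq m.2 Q hQ Q' hQ' hm.1.2 hm'.1.2)
    _ ≤ _ := by
        refine Nat.mul_le_mul_left 2 (Finset.card_le_card fun m hm => ?_)
        obtain ⟨Q, hQ, hm⟩ := Finset.mem_biUnion.1 hm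
        simp only [Finset.mem_filter] at hm ⊢
        refine ⟨hm.1.1, fun Q' hQ' hmQ' => ?_⟩
        rw [← huniq m.2 Q hQ Q' hQ' hm.1.2 hmQ']
        exact hm.2

/-- The level-by-level construction: the first `H` levels can be colored so that at least a
`2^{-H}` fraction of the pairs has its source in the colors of all squares of these levels that
contain its destination. -/
lemma exists_refinement {W η ρ : ℕ} (hW : 1 ≤ W) (hη : 16 < η)
    {Qs : ℕ → Finset SquareSpec} (hH : IsHierSquares W η ρ Qs) {L : ℕ → ℕ}
    (hLpos : ∀ h, 1 ≤ h → h ≤ ρ → 0 < L h)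
    (hLdvd : ∀ h, 1 ≤ h → h + 1 ≤ ρ → L (h + 1) ∣ L h)
    {M : Finset DPair} (hsrc : ∀ m ∈ M, OnTopRow W m.1)
    (hdest : ∀ m ∈ M, ∃ Q ∈ Qs ρ, memSquare m.2 Q)
    (hcompat : CompatibleWith W ρ η L M)
    (hshadow : ∀ h, 1 ≤ h → h ≤ ρ → ∀ Q ∈ Qs h,
      HasShadowProp (1 / (η : ℝ) ^ 2) (η ^ (ρ - h + 3)) M Q)
    (H : ℕ) (hHρ : H ≤ ρ) :
    ∃ f : ℕ → SquareSpec → Finset ℕ, ValidColoring W H L Qs f ∧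
      ∃ M' ⊆ M, M.card ≤ 2 ^ H * M'.card ∧
        ∀ h, 1 ≤ h → h ≤ H → ∀ m ∈ M', ∀ Q ∈ Qs h, memSquare m.2 Q → m.1.2 ∈ f h Q := by
  induction H with
  | zero =>
    refine ⟨fun _ _ => ∅, ⟨fun h h1 h2 => by omega, fun h h1 h2 => by omega⟩, M, subset_rfl,
      by simp, fun h h1 h2 => by omega⟩
  | succ H ih =>
    obtain ⟨f, ⟨hf1, hf2⟩, M', hM', hcard, hin⟩ := ih (by omega)
    have hcan := hH.1 (H + 1) (by omega) hHρ
    have hl := hLpos (H + 1) (by omega) hHρ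
    have hchoice : ∀ Q ∈ Qs (H + 1), ∃ I, IsLevelInterval W (L (H + 1)) I ∧
        (∀ Q' ∈ Qs H, 1 ≤ H → Q.1 ⊆ Q'.1 ∧ Q.2 ⊆ Q'.2 → I ⊆ f H Q') ∧
        (M'.filter (fun m => memSquare m.2 Q)).card ≤
          2 * ((M'.filter (fun m => memSquare m.2 Q)).filter (fun m => m.1.2 ∈ I)).card := by
      intro Q hQ
      -- the positions allowed by the colors of all parents; on the first level, all positions
      let P : Set ℕ := {x | ∀ Q' ∈ Qs H, 1 ≤ H → Q.1 ⊆ Q'.1 ∧ Q.2 ⊆ Q'.2 → x ∈ f H Q'}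
      have hPne : ∃ x ∈ P, 1 ≤ x ∧ x ≤ W := by
        rcases Nat.eq_zero_or_pos H with rfl | hpos
        · exact ⟨1, fun Q' _ h => by omega, le_rfl, hW⟩
        · obtain ⟨Q', hQ', hs⟩ := hH.2 (H + 1) (by omega) hHρ Q hQ
          rw [Nat.add_sub_cancel] at hQ'
          have hlH := hLpos H hpos (by omega)
          obtain ⟨x, hx1, hxW, hx⟩ := (hf1 H hpos le_rfl Q' hQ').eq_lvl hlH
          refine ⟨x, fun Q'' hQ'' _ hs' => ?_, hx1, hxW⟩
          -- the parent is unique, so its color is the only constraint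
          obtain ⟨v, hv⟩ := hcan.exists_mem hQ
          have : Q' = Q'' := (hH.1 H hpos (by omega)).eq_of_mem hQ' hQ''
            ⟨hs.1 hv.1, hs.2 hv.2⟩ ⟨hs'.1 hv.1, hs'.2 hv.2⟩
          rw [← this, hx]
          exact self_mem_lvl hlH hx1 hxW
      have hP : ∀ x ∈ P, ∀ y ∈ lvl W (L (H + 1)) x, y ∈ P := by
        intro x hx y hy Q' hQ' hpos hs
        exact lvl_subset hl (hLpos H hpos (by omega)) (hLdvd H hpos hHρ)
          (hf1 H hpos le_rfl Q' hQ') (hx Q' hQ' hpos hs) hy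
      obtain ⟨I, hI, hIP, hIc⟩ := exists_color (S := M'.filter (fun m => memSquare m.2 Q)) hη
        (d := η ^ (ρ - (H + 1) + 3)) (by positivity) hl hsrc
        (fun I hI => (hcompat (H + 1) (by omega) hHρ I hI).imp_right fun h => by
          push_cast; exact h.1)
        (hshadow (H + 1) (by omega) hHρ Q hQ)
        ((Finset.filter_subset _ _).trans hM') (fun m hm => (Finset.mem_filter.1 hm).2) hP hPne
        (fun m hm Q' hQ' hpos hs => by
          rw [Finset.mem_filter] at hm
          exact hin H hpos le_rfl m hm.1 Q' hQ' ⟨hs.1 hm.2.1, hs.2 hm.2.2⟩)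
      exact ⟨I, hI, fun Q' hQ' hpos hs y hy => hIP y hy Q' hQ' hpos hs, hIc⟩
    choose! g hg1 hg2 hg3 using hchoice
    have hne : ∀ h, h ≤ H → Function.update f (H + 1) g h = f h := fun h hh =>
      Function.update_of_ne (by omega) _ _
    have heq : Function.update f (H + 1) g (H + 1) = g := Function.update_self _ _ _
    obtain ⟨N, hN, hhalf, hNg⟩ := exists_half (M := M') (Qs := Qs (H + 1))
      (fun m hm => exists_square hH (hdest m (hM' hm)) (by omega) hHρ)
      (fun v Q hQ Q' hQ' hv hv' => hcan.eq_of_mem hQ hQ' hv hv') g hg3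
    refine ⟨Function.update f (H + 1) g, ⟨?_, ?_⟩, N, hN.trans hM', ?_, ?_⟩
    · intro h h1 hh Q hQ
      rcases Nat.lt_or_ge H h with hlt | hle
      · obtain rfl : h = H + 1 := by omega
        rw [heq]
        exact hg1 Q hQ
      · rw [hne h hle]
        exact hf1 h h1 hle Q hQ
    · intro h h1 hh Q hQ Q' hQ' hs
      rw [hne (h - 1) (by omega)]
      rcases Nat.lt_or_ge H h with hlt | hle
      · obtain rfl : h = H + 1 := by omega
        rw [heq]
        exact hg2 Q hQ Q' hQ' (by omega) hs
      · rw [hne h hle]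
        exact hf2 h h1 hle Q hQ Q' hQ' hs
    · calc M.card ≤ 2 ^ H * M'.card := hcard
        _ ≤ 2 ^ H * (2 * _) := Nat.mul_le_mul_left _ hhalf
        _ = _ := by rw [pow_succ, mul_assoc]
    · intro h h1 hh m hm Q hQ hmQ
      rcases Nat.lt_or_ge H h with hlt | hle
      · obtain rfl : h = H + 1 := by omega
        rw [heq]
        exact hNg m hm Q hQ hmQ
      · rw [hne h hle]
        exact hin h h1 hle m (hN hm) Q hQ hmQ

/-- Theorem: existence of a perfect set for some valid coloring. -/
theorem statement4
    (ℓ n : ℕ) (hn : n = ℓ * ℓ) (hlog : (25 : ℝ) ≤ lg n)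
    (η ρ : ℕ) (hη : η = 2 ^ ⌈Real.sqrt (lg n)⌉₊)
    (hρ : 1 ≤ ρ) (hρ' : (ρ : ℝ) ≤ Real.sqrt (lg n))
    (Qs : ℕ → Finset SquareSpec) (hH : IsHierSquares ℓ η ρ Qs)
    (hdisj : ∀ h, 1 ≤ h → h ≤ ρ → ∀ Q ∈ Qs h, (1 : ℕ) ∉ Q.1)
    (L : ℕ → ℕ)
    (hLpow : ∀ h, 1 ≤ h → h ≤ ρ → ∃ k : ℕ, L h = η ^ k)
    (hLdec : ∀ h h', 1 ≤ h → h < h' → h' ≤ ρ → L h' < L h)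
    (Mss : Finset DPair)
    (hds : DistinctSources Mss) (hdt : DistinctDests Mss)
    (hsrc : ∀ m ∈ Mss, OnTopRow ℓ m.1)
    (hdest : ∀ m ∈ Mss, ∃ Q ∈ Qs ρ, memSquare m.2 Q)
    (hcompat : CompatibleWith ℓ ρ η L Mss)
    (hshadow : ∀ h, 1 ≤ h → h ≤ ρ → ∀ Q ∈ Qs h,
      HasShadowProp (1 / (η : ℝ) ^ 2) (η ^ (ρ - h + 3)) Mss Q) :
    ∃ f : ℕ → SquareSpec → Finset ℕ, ValidColoring ℓ ρ L Qs f ∧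
      ∃ M' ⊆ Mss, PerfectFor ℓ ρ η L Qs f M' ∧
        (Mss.card : ℝ) / 2 ^ ρ ≤ (M'.card : ℝ) := by
  have hη16 : 16 < η := by
    have h5 : 5 ≤ ⌈Real.sqrt (lg n)⌉₊ := by
      have : (5 : ℝ) ≤ Real.sqrt (lg n) := Real.le_sqrt_of_sq_le (by norm_num; exact hlog)
      exact_mod_cast this.trans (Nat.le_ceil _)
    have : 2 ^ 5 ≤ 2 ^ ⌈Real.sqrt (lg n)⌉₊ := Nat.pow_le_pow_right (by norm_num) h5
    omega
  have hℓ : 1 ≤ ℓ := by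
    by_contra! h
    have h0 : n = 0 := by rw [hn]; interval_cases ℓ; rfl
    rw [h0] at hlog
    norm_num [lg] at hlog
  have hLpos : ∀ h, 1 ≤ h → h ≤ ρ → 0 < L h := by
    intro h h1 hh
    obtain ⟨k, hk⟩ := hLpow h h1 hh
    rw [hk]
    positivity
  have hLdvd : ∀ h, 1 ≤ h → h + 1 ≤ ρ → L (h + 1) ∣ L h := by
    intro h h1 hh
    have hlt := hLdec h (h + 1) h1 (by omega) hh
    obtain ⟨k, hk⟩ := hLpow h h1 (by omega)
    obtain ⟨j, hj⟩ := hLpow (h + 1) (by omega) hh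
    rw [hk, hj] at hlt ⊢
    exact pow_dvd_pow η ((Nat.pow_lt_pow_iff_right (by omega)).1 hlt).le
  obtain ⟨f, hf, M', hM', hcard, hin⟩ := exists_refinement hℓ hη16 hH hLpos hLdvd hsrc hdest
    hcompat hshadow ρ le_rfl
  refine ⟨f, hf, M', hM', ⟨fun m hm m' hm' => hds m (hM' hm) m' (hM' hm'),
    fun m hm m' hm' => hdt m (hM' hm) m' (hM' hm'), hin ρ hρ le_rfl, ?_⟩, ?_⟩
  · intro h h1 hh I hI
    have hle : (M'.filter (fun m => m.1.2 ∈ I)).card ≤ (Mss.filter (fun m => m.1.2 ∈ I)).card :=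
      Finset.card_le_card (Finset.filter_subset_filter _ hM')
    rcases hcompat h h1 hh I hI with h0 | ⟨-, h2⟩
    · rw [Finset.filter_eq_empty_iff.2 fun m hm => h0 m (hM' hm)]
      simp
    · have hpos : (0 : ℝ) ≤ (η : ℝ) ^ (ρ - h + 3) := by positivity
      have : ((Mss.filter (fun m => m.1.2 ∈ I)).card : ℝ) ≤ (η : ℝ) ^ (ρ - h + 3) := by linarith
      exact hle.trans (by exact_mod_cast this)
  · rw [div_le_iff₀ (by positivity), mul_comm]
    exact_mod_cast hcard
end

section
/- Let G be the ℓ×ℓ grid with n = ℓ² vertices, η = 2^⌈√(log₂ n)⌉, ρ a positive integer with ρ ≤ √(log₂ n), d_h = η^{ρ−h+3}, and ℓ > 8·d₁. Let H̃ = (Q₁,…,Q_ρ) be a hierarchical system of squares of G disjoint from the top row R*, let (J₁,…,J_ρ) be the L-hierarchical decomposition of R* for some sequence L = (ℓ₁,…,ℓ_ρ) of integral powers of η with ℓ₁ > … > ℓ_ρ, let f be a valid coloring of H̃, and let M̃' be a set of demand pairs that is perfect for f, with |M̃'| ≤ d₁, all sources on R*, and every destination at distance greater than 4·d₁ from the boundary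 Γ(G). Then there exists a set of pairwise node-disjoint paths in G routing at least ⌈|M̃'|/(2η³)⌉ demand pairs of M̃'. -/
/-!
Write `d₁ = η ^ (ρ + 2)` and `K = ⌈|M'| / (2η³)⌉`. List the pairs of `M'` by increasing source and
keep every `2η³`-th one; the kept pairs are the colours `0, …, K - 1`. A level-`h` interval holds at
most `d_h = η³ · η ^ (ρ - h)` sources, hence at most `η ^ (ρ - h)` colours (`colour_count`), and
these are consecutive colours (`lowC`, `highC`). All kept pairs are routed.

Paths are replaced by connected vertex sets: disjoint connected sets contain disjoint paths
(`routable_of_lk`), and no path ever has to be written down. A linkage `Lk` consists of disjoint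
connected sets, one for each colour of an interval, in a prescribed region and through prescribed
vertices.

Each square of side `d = 4μ` is enlarged by `μ` on all sides to a box; since squares of one level
are `d`-separated, the boxes are disjoint with room to spare. By induction from level `ρ` up to
level `1`, the colours belonging to a square can be linked through its box, entering in the top
rows of the left side and leaving in the bottom rows of the right side, such that every colour
whose destination lies in the square visits that destination (`box_all_levels`). At level `ρ` there
is at most one colour, which takes the whole box (`lk_base`). For the induction step the bundle
of all colours of the square meanders through the boxes of the children like a snake (`lk_step`):
it traverses each horizontal strip of children from left to right and returns below the strip
(`lk_strip`, `lk_pass`). At a child box, the colours of the child run through it, the smaller ones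
pass above and the larger ones below (`lk_cell`), which is possible without crossings because the
colours of the child are consecutive.

The destinations are further than `4 * d₁` from the boundary, so the same step applies to the
level-1 squares inside one big box of the grid, for all `K` colours. The region around the big box
is free for a bundle from the sources in the top row along the right side of the grid to the exits
of the big box (`lk_sources`).
-/

open Finset

namespace SnakeRouting

/-! ### Connected vertex sets in the integer grid -/

/-- The infinite grid graph on `ℤ × ℤ`, first coordinate the row. Integer coordinates avoid
truncated subtraction; the `ℓ × ℓ` grid is recovered by `Int.toNat`. -/
def zGrid : SimpleGraph (ℤ × ℤ) where
  Adj u v := (u.1 = v.1 ∧ (u.2 + 1 = v.2 ∨ v.2 + 1 = u.2)) ∨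
    (u.2 = v.2 ∧ (u.1 + 1 = v.1 ∨ v.1 + 1 = u.1))
  symm := ⟨by intro u v h; omega⟩
  loopless := ⟨by intro u h; omega⟩

/-- `S` induces a (pre)connected subgraph of the integer grid. -/
def Conn (S : Set (ℤ × ℤ)) : Prop := (zGrid.induce S).Preconnected

/-- The rectangle with rows `r₁..r₂` and columns `c₁..c₂`; with `r₁ = r₂` or `c₁ = c₂` it is a
straight segment. -/
def Rc (r₁ r₂ c₁ c₂ : ℤ) : Set (ℤ × ℤ) :=
  {p | r₁ ≤ p.1 ∧ p.1 ≤ r₂ ∧ c₁ ≤ p.2 ∧ p.2 ≤ c₂}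

lemma mem_Rc {r₁ r₂ c₁ c₂ : ℤ} {p : ℤ × ℤ} :
    p ∈ Rc r₁ r₂ c₁ c₂ ↔ r₁ ≤ p.1 ∧ p.1 ≤ r₂ ∧ c₁ ≤ p.2 ∧ p.2 ≤ c₂ := Iff.rfl

lemma conn_union {S T : Set (ℤ × ℤ)} (hS : Conn S) (hT : Conn T) (p : ℤ × ℤ)
    (h1 : p ∈ S) (h2 : p ∈ T) : Conn (S ∪ T) :=
  (SimpleGraph.induce_union_connected hS hT ⟨p, h1, h2⟩).preconnected

lemma conn_union_adj {S T : Set (ℤ × ℤ)} (hS : Conn S) (hT : Conn T) (p q : ℤ × ℤ)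
    (h1 : p ∈ S) (h2 : q ∈ T) (h : zGrid.Adj p q) : Conn (S ∪ T) := by
  have hp : Conn {p, q} := (SimpleGraph.induce_pair_connected_of_adj h).preconnected
  have h3 := conn_union (conn_union hS hp p h1 (by simp)) hT q (by simp) h2
  have : S ∪ {p, q} ∪ T = S ∪ T := by
    ext x
    simp only [Set.mem_union, Set.mem_insert_iff, Set.mem_singleton_iff]
    constructor
    · rintro ((h | rfl | rfl) | h) <;> tauto
    · tauto
  rwa [this] at h3

lemma conn_Rc (r₁ r₂ c₁ c₂ : ℤ) : Conn (Rc r₁ r₂ c₁ c₂) := by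
  by_cases hne : r₁ ≤ r₂ ∧ c₁ ≤ c₂
  swap
  · rintro ⟨p, hp⟩
    rw [mem_Rc] at hp
    omega
  have h0 : (r₁, c₁) ∈ Rc r₁ r₂ c₁ c₂ := by rw [mem_Rc]; simp; omega
  have key : ∀ k : ℕ, ∀ p (hp : p ∈ Rc r₁ r₂ c₁ c₂), (p.1 - r₁ + (p.2 - c₁)).toNat = k →
      (zGrid.induce (Rc r₁ r₂ c₁ c₂)).Reachable ⟨p, hp⟩ ⟨(r₁, c₁), h0⟩ := by
    intro k
    induction k with
    | zero =>
      rintro ⟨a, b⟩ hp h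
      have hp' := mem_Rc.1 hp
      simp only at hp' h
      obtain rfl : a = r₁ := by omega
      obtain rfl : b = c₁ := by omega
      rfl
    | succ k ih =>
      rintro ⟨a, b⟩ hp h
      have hp' := mem_Rc.1 hp
      simp only at hp' h
      by_cases ha : r₁ < a
      · have h1 : (a - 1, b) ∈ Rc r₁ r₂ c₁ c₂ := by rw [mem_Rc]; simp only; omega
        refine SimpleGraph.Reachable.trans (SimpleGraph.Adj.reachable ?_)
          (ih _ h1 (by simp only; omega))
        simp [zGrid]
      · have h1 : (a, b - 1) ∈ Rc r₁ r₂ c₁ c₂ := by rw [mem_Rc]; simp only; omega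
        refine SimpleGraph.Reachable.trans (SimpleGraph.Adj.reachable ?_)
          (ih _ h1 (by simp only; omega))
        simp [zGrid]
  rintro ⟨p, hp⟩ ⟨q, hq⟩
  exact (key _ p hp rfl).trans (key _ q hq rfl).symm

/-! ### Linkages -/

/-- A linkage: pairwise disjoint connected sets `S i ⊆ R`, one for each colour `i ∈ [a, b)`, where
`S i` contains the two terminals `A i`, `B i` and the set of targets `T i`. Connected sets stand in
for paths, because disjoint connected sets contain disjoint paths between their terminals. -/
def Lk (a b : ℤ) (R : Set (ℤ × ℤ)) (A B : ℤ → ℤ × ℤ) (T : ℤ → Set (ℤ × ℤ)) : Prop :=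
  ∃ S : ℤ → Set (ℤ × ℤ), ∀ i, a ≤ i → i < b →
    Conn (S i) ∧ S i ⊆ R ∧ A i ∈ S i ∧ B i ∈ S i ∧ T i ⊆ S i ∧
      ∀ j, a ≤ j → j < b → i < j → ∀ p, p ∈ S i → p ∉ S j

lemma Lk.mono {a b : ℤ} {R R' : Set (ℤ × ℤ)} {A B A' B' : ℤ → ℤ × ℤ} {T T' : ℤ → Set (ℤ × ℤ)}
    (h : Lk a b R A B T) (hR : R ⊆ R') (hA : ∀ i, a ≤ i → i < b → A i = A' i)
    (hB : ∀ i, a ≤ i → i < b → B i = B' i) (hT : ∀ i, a ≤ i → i < b → T' i ⊆ T i) :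
    Lk a b R' A' B' T' := by
  obtain ⟨S, hS⟩ := h
  refine ⟨S, fun i h1 h2 => ?_⟩
  obtain ⟨k1, k2, k3, k4, k5, k6⟩ := hS i h1 h2
  exact ⟨k1, k2.trans hR, hA i h1 h2 ▸ k3, hB i h1 h2 ▸ k4, (hT i h1 h2).trans k5, k6⟩

lemma Lk.symm {a b : ℤ} {R : Set (ℤ × ℤ)} {A B : ℤ → ℤ × ℤ} {T : ℤ → Set (ℤ × ℤ)}
    (h : Lk a b R A B T) : Lk a b R B A T := by
  obtain ⟨S, hS⟩ := h
  refine ⟨S, fun i h1 h2 => ?_⟩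
  obtain ⟨k1, k2, k3, k4, k5, k6⟩ := hS i h1 h2
  exact ⟨k1, k2, k4, k3, k5, k6⟩

/-- Linkages in disjoint regions compose when the exits of one are adjacent to the entries of the
other. -/
lemma Lk.glue {a b : ℤ} {R R' : Set (ℤ × ℤ)} {A B A' B' : ℤ → ℤ × ℤ} {T T' : ℤ → Set (ℤ × ℤ)}
    (h : Lk a b R A B T) (h' : Lk a b R' A' B' T') (hR : ∀ p ∈ R, p ∉ R')
    (hadj : ∀ i, a ≤ i → i < b → zGrid.Adj (B i) (A' i)) :
    Lk a b (R ∪ R') A B' (fun i => T i ∪ T' i) := by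
  obtain ⟨S, hS⟩ := h
  obtain ⟨S', hS'⟩ := h'
  refine ⟨fun i => S i ∪ S' i, fun i h1 h2 => ?_⟩
  obtain ⟨k1, k2, k3, k4, k5, k6⟩ := hS i h1 h2
  obtain ⟨l1, l2, l3, l4, l5, l6⟩ := hS' i h1 h2
  refine ⟨conn_union_adj k1 l1 _ _ k4 l3 (hadj i h1 h2), Set.union_subset_union k2 l2, Or.inl k3,
    Or.inr l4, Set.union_subset_union k5 l5, ?_⟩
  intro j hj1 hj2 hij p hp hp'
  rcases hp with hp | hp <;> rcases hp' with hp' | hp'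
  · exact k6 j hj1 hj2 hij p hp hp'
  · exact hR p (k2 hp) ((hS' j hj1 hj2).2.1 hp')
  · exact hR p ((hS j hj1 hj2).2.1 hp') (l2 hp)
  · exact l6 j hj1 hj2 hij p hp hp'

/-- Linkages along a one-dimensional sequence of cells: if cells of width `w` starting at the
points of `X` can be linked, as can all intermediate intervals, then so can any interval
containing all the cells. -/
lemma chain {a b : ℤ} (P : ℤ → ℤ → (ℤ → Set (ℤ × ℤ)) → Prop) (w : ℤ) (hw : 0 < w)
    (hstr : ∀ p q, p ≤ q → P p q (fun _ => ∅))
    (hglue : ∀ p q r T T', p ≤ q → q < r → P p q T → P (q + 1) r T' → P p r (fun i => T i ∪ T' i))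
    (hmono : ∀ p q T T', P p q T → (∀ i, a ≤ i → i < b → T' i ⊆ T i) → P p q T')
    (U : ℤ → ℤ → Set (ℤ × ℤ)) (X : Finset ℤ) :
    (∀ x ∈ X, P x (x + w - 1) (U x)) →
    (∀ x ∈ X, ∀ y ∈ X, x < y → x + w < y) → ∀ p q, p ≤ q → (∀ x ∈ X, p < x) →
    (∀ x ∈ X, x + w ≤ q) → P p q (fun i => {z | ∃ x ∈ X, z ∈ U x i}) := by
  induction X using Finset.induction_on_max with
  | empty =>
    intro _ _ p q hpq _ _
    exact hmono _ _ _ _ (hstr p q hpq) (by simp)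
  | insert m s hm ih =>
    intro hcell hsp p q hpq hp hq
    have hpm := hp m (by simp)
    have hqm := hq m (by simp)
    have h1 := ih (fun x hx => hcell x (by simp [hx]))
      (fun x hx y hy => hsp x (by simp [hx]) y (by simp [hy])) p (m - 1) (by omega)
      (fun x hx => hp x (by simp [hx]))
      (fun x hx => by
        have := hsp x (by simp [hx]) m (by simp) (hm x hx)
        omega)
    have h2 := hcell m (by simp)
    have h3 := hstr (m + w) q hqm
    have h4 := hglue p (m - 1) (m + w - 1) _ _ (by omega) (by omega) h1
      (by rw [sub_add_cancel]; exact h2)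
    have h5 := hglue p (m + w - 1) q _ _ (by omega) (by omega) h4
      (by rw [sub_add_cancel]; exact h3)
    refine hmono _ _ _ _ h5 ?_
    rintro i _ _ z ⟨x, hx, hz⟩
    rcases Finset.mem_insert.1 hx with rfl | hx
    · exact Or.inl (Or.inr hz)
    · exact Or.inl (Or.inl ⟨x, hx, hz⟩)

/-! ### Bundles of parallel wires -/

/-- Straight horizontal wires. -/
lemma lk_horizontal (a b : ℤ) (x : ℤ → ℤ) (r₁ r₂ c₁ c₂ : ℤ) (hc : c₁ ≤ c₂)
    (hx : ∀ i j, a ≤ i → i < j → j < b → x i < x j)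
    (hr : ∀ i, a ≤ i → i < b → r₁ ≤ x i ∧ x i ≤ r₂) :
    Lk a b (Rc r₁ r₂ c₁ c₂) (fun i => (x i, c₁)) (fun i => (x i, c₂)) (fun _ => ∅) := by
  refine ⟨fun i => Rc (x i) (x i) c₁ c₂, fun i h1 h2 => ⟨conn_Rc _ _ _ _, ?_, ?_, ?_, by simp, ?_⟩⟩
  · intro p
    have := hr i h1 h2
    simp only [mem_Rc]; omega
  · simp [mem_Rc, hc]
  · simp [mem_Rc, hc]
  · intro j hj1 hj2 hij p
    have := hx i j h1 hij hj2
    simp only [mem_Rc]; omega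

/-- Straight vertical wires, in columns `c₁ + (b - 1 - i)`. -/
lemma lk_vertical (a b : ℤ) (r₁ r₂ c₁ c₂ : ℤ) (hr : r₁ ≤ r₂) (hc : c₁ + (b - a) ≤ c₂ + 1) :
    Lk a b (Rc r₁ r₂ c₁ c₂) (fun i => (r₁, c₁ + (b - 1 - i))) (fun i => (r₂, c₁ + (b - 1 - i)))
      (fun _ => ∅) := by
  refine ⟨fun i => Rc r₁ r₂ (c₁ + (b - 1 - i)) (c₁ + (b - 1 - i)),
    fun i h1 h2 => ⟨conn_Rc _ _ _ _, ?_, ?_, ?_, by simp, ?_⟩⟩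
  · intro p
    simp only [mem_Rc]; omega
  · simp [mem_Rc, hr]
  · simp [mem_Rc, hr]
  · intro j hj1 hj2 hij p
    simp only [mem_Rc]; omega

/-- A bundle of horizontal wires changes its rows from `x` to `y`. Wire `i` has a single vertical
piece; wires moving down turn in decreasing order of colour, wires moving up in increasing order,
so that no wire runs into the next one. -/
lemma lk_shift (a b : ℤ) (x y : ℤ → ℤ) (r₁ r₂ c₁ c₂ : ℤ) (hc : c₁ + (b - a) ≤ c₂)
    (hx : ∀ i j, a ≤ i → i < j → j < b → x i < x j)
    (hy : ∀ i j, a ≤ i → i < j → j < b → y i < y j)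
    (hxr : ∀ i, a ≤ i → i < b → r₁ ≤ x i ∧ x i ≤ r₂)
    (hyr : ∀ i, a ≤ i → i < b → r₁ ≤ y i ∧ y i ≤ r₂) :
    Lk a b (Rc r₁ r₂ c₁ c₂) (fun i => (x i, c₁)) (fun i => (y i, c₂)) (fun _ => ∅) := by
  let m : ℤ → ℤ := fun i => if x i ≤ y i then c₁ + (b - 1 - i) else c₁ + (i - a)
  have hm : ∀ i, (x i ≤ y i ∧ m i = c₁ + (b - 1 - i)) ∨ (y i < x i ∧ m i = c₁ + (i - a)) := by
    intro i
    by_cases h : x i ≤ y i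
    · left; simp [m, h]
    · right; simp [m, h]; omega
  clear_value m
  refine ⟨fun i => (Rc (x i) (x i) c₁ (m i) ∪ Rc (min (x i) (y i)) (max (x i) (y i)) (m i) (m i)) ∪
    Rc (y i) (y i) (m i) c₂, fun i h1 h2 => ⟨?_, ?_, ?_, ?_, by simp, ?_⟩⟩
  · have := hm i
    refine conn_union (conn_union (conn_Rc _ _ _ _) (conn_Rc _ _ _ _) (x i, m i) ?_ ?_)
      (conn_Rc _ _ _ _) (y i, m i) (Or.inr ?_) ?_ <;> simp only [mem_Rc] <;> omega
  · intro p
    have := hm i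
    have := hxr i h1 h2
    have := hyr i h1 h2
    simp only [mem_Rc, Set.mem_union]; omega
  · have := hm i
    simp only [mem_Rc, Set.mem_union]; omega
  · have := hm i
    simp only [mem_Rc, Set.mem_union]; omega
  · intro j hj1 hj2 hij p
    have := hm i
    have := hm j
    have := hx i j h1 hij hj2
    have := hy i j h1 hij hj2
    simp only [mem_Rc, Set.mem_union]
    omega

/-! ### One level of the snake -/

/-- Entry terminals of a box: the top rows of its left side, in increasing order of colour. -/
def entryPt (a r c : ℤ) (i : ℤ) : ℤ × ℤ := (r + (i - a), c)

/-- Exit terminals of a box: the bottom rows of its right side, in increasing order of colour. -/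
def exitPt (b r c : ℤ) (i : ℤ) : ℤ × ℤ := (r - (b - 1 - i), c)

/-- A bundle of wires `[a, b)` passes a box: the wires `[a', b')` belonging to the box run through
it, smaller colours pass above it and larger colours pass below it. -/
lemma lk_cell (a b a' b' r w q K : ℤ) (hK : K = b - a) (h1 : a ≤ a') (h2 : a' ≤ b') (h3 : b' ≤ b)
    (hw : K < w) (T : ℤ → Set (ℤ × ℤ))
    (hbox : Lk a' b' (Rc r (r + w - 1) q (q + w - 1)) (entryPt a' r q)
      (exitPt b' (r + w - 1) (q + w - 1)) T) :
    Lk a b (Rc (r - K) (r + w - 1 + K) (q - K - 1) (q + w + K))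
      (entryPt a (r - K) (q - K - 1)) (entryPt a (r - K) (q + w + K))
      (fun i => {z | a' ≤ i ∧ i < b' ∧ z ∈ T i}) := by
  -- `y i` and `y' i` are the rows of wire `i` on the left and on the right side of the box.
  let y : ℤ → ℤ := fun i =>
    if i < a' then r - K + (i - a) else if i < b' then r + (i - a') else r + w + (i - b')
  let y' : ℤ → ℤ := fun i =>
    if i < a' then r - K + (i - a) else if i < b' then r + w - 1 - (b' - 1 - i)
    else r + w + (i - b')
  have hy : ∀ i, (i < a' ∧ y i = r - K + (i - a)) ∨ (a' ≤ i ∧ i < b' ∧ y i = r + (i - a')) ∨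
      (b' ≤ i ∧ y i = r + w + (i - b')) := by
    intro i; simp only [y]; split_ifs <;> omega
  have hy' : ∀ i, (i < a' ∧ y' i = r - K + (i - a)) ∨
      (a' ≤ i ∧ i < b' ∧ y' i = r + w - 1 - (b' - 1 - i)) ∨
      (b' ≤ i ∧ y' i = r + w + (i - b')) := by
    intro i; simp only [y']; split_ifs <;> omega
  clear_value y y'
  have hmid : Lk a b (Rc (r - K) (r + w - 1 + K) q (q + w - 1)) (fun i => (y i, q))
      (fun i => (y' i, q + w - 1)) (fun i => {z | a' ≤ i ∧ i < b' ∧ z ∈ T i}) := by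
    obtain ⟨S, hS⟩ := hbox
    refine ⟨fun i => {z | (a' ≤ i ∧ i < b' ∧ z ∈ S i) ∨
      ((i < a' ∨ b' ≤ i) ∧ z ∈ Rc (y i) (y i) q (q + w - 1))}, fun i k1 k2 => ?_⟩
    by_cases hi : a' ≤ i ∧ i < b'
    · obtain ⟨l1, l2, l3, l4, l5, l6⟩ := hS i hi.1 hi.2
      have e : {z | (a' ≤ i ∧ i < b' ∧ z ∈ S i) ∨
          ((i < a' ∨ b' ≤ i) ∧ z ∈ Rc (y i) (y i) q (q + w - 1))} = S i := by
        ext z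
        have : ¬ (i < a' ∨ b' ≤ i) := by omega
        simp [hi, this]
      have e1 : y i = r + (i - a') := by have := hy i; omega
      have e2 : y' i = r + w - 1 - (b' - 1 - i) := by have := hy' i; omega
      simp only [e]
      refine ⟨l1, ?_, by rw [e1]; exact l3, by rw [e2]; exact l4, fun z hz => l5 hz.2.2, ?_⟩
      · intro p hp
        have := l2 hp
        simp only [mem_Rc] at this ⊢
        omega
      · rintro j hj1 hj2 hij p hp (⟨h4, h5, h6⟩ | ⟨h4, h5⟩)
        · exact l6 j h4 h5 hij p hp h6
        · have h7 := l2 hp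
          have := hy j
          simp only [mem_Rc] at h5 h7
          omega
    · have e : {z | (a' ≤ i ∧ i < b' ∧ z ∈ S i) ∨
          ((i < a' ∨ b' ≤ i) ∧ z ∈ Rc (y i) (y i) q (q + w - 1))} =
          Rc (y i) (y i) q (q + w - 1) := by
        ext z
        have : (i < a' ∨ b' ≤ i) := by omega
        simp only [Set.mem_ofPred_eq, this, true_and, or_iff_right_iff_imp]
        tauto
      simp only [e]
      have := hy i
      have := hy' i
      refine ⟨conn_Rc _ _ _ _, ?_, ?_, ?_, fun z hz => absurd ⟨hz.1, hz.2.1⟩ hi, ?_⟩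
      · intro p
        simp only [mem_Rc]
        omega
      · simp only [mem_Rc]; omega
      · simp only [mem_Rc]; omega
      · rintro j hj1 hj2 hij p hp (⟨h4, h5, h6⟩ | ⟨h4, h5⟩)
        · have h7 := (hS j h4 h5).2.1 h6
          simp only [mem_Rc] at h7 hp
          omega
        · have := hy j
          simp only [mem_Rc] at h5 hp
          omega
  have hl := lk_shift a b (fun i => r - K + (i - a)) y (r - K) (r + w - 1 + K) (q - K - 1) (q - 1)
    (by omega) (by intros; omega)
    (by intro i j _ _ _; have := hy i; have := hy j; omega)
    (by intros; omega) (by intro i _ _; have := hy i; omega)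
  have hr := lk_shift a b y' (fun i => r - K + (i - a)) (r - K) (r + w - 1 + K) (q + w)
    (q + w + K) (by omega)
    (by intro i j _ _ _; have := hy' i; have := hy' j; omega)
    (by intros; omega)
    (by intro i _ _; have := hy' i; omega) (by intros; omega)
  have hg := (hl.glue hmid (by intro p; simp only [mem_Rc]; omega)
    (by intro i _ _; simp [zGrid])).glue hr
    (by intro p; simp only [mem_Rc, Set.mem_union]; omega)
    (by intro i _ _; simp [zGrid])
  refine hg.mono ?_ (fun i _ _ => rfl) (fun i _ _ => rfl) ?_
  · intro p; simp only [mem_Rc, Set.mem_union]; omega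
  · intro i _ _ z hz; exact Or.inl (Or.inr hz)

/-- A bundle of wires passes, from left to right, all the boxes in one horizontal strip. -/
lemma lk_strip (a b r w K cL cR : ℤ) (hK : K = b - a) (hK0 : 0 ≤ K) (hw : K < w) (hLR : cL ≤ cR)
    (X : Finset ℤ) (a' b' : ℤ → ℤ) (T : ℤ → ℤ → Set (ℤ × ℤ))
    (hab : ∀ q ∈ X, a ≤ a' q ∧ a' q ≤ b' q ∧ b' q ≤ b)
    (hbox : ∀ q ∈ X, Lk (a' q) (b' q) (Rc r (r + w - 1) q (q + w - 1)) (entryPt (a' q) r q)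
      (exitPt (b' q) (r + w - 1) (q + w - 1)) (T q))
    (hsp : ∀ q ∈ X, ∀ q' ∈ X, q < q' → q + w + 2 * K + 2 < q')
    (hL : ∀ q ∈ X, cL + K + 1 < q) (hR : ∀ q ∈ X, q + w + K + 1 ≤ cR) :
    Lk a b (Rc (r - K) (r + w - 1 + K) cL cR) (entryPt a (r - K) cL) (entryPt a (r - K) cR)
      (fun i => {z | ∃ q ∈ X, a' q ≤ i ∧ i < b' q ∧ z ∈ T q i}) := by
  have h := chain (a := a) (b := b)
    (fun p q T => Lk a b (Rc (r - K) (r + w - 1 + K) p q) (entryPt a (r - K) p) (entryPt a (r - K) q) T)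
    (w + 2 * K + 2) (by omega) ?_ ?_ ?_
    (fun x i => {z | a' (x + (K + 1)) ≤ i ∧ i < b' (x + (K + 1)) ∧ z ∈ T (x + (K + 1)) i})
    (X.image (fun q => q - (K + 1))) ?_ ?_ cL cR hLR ?_ ?_
  · refine h.mono subset_rfl (fun _ _ _ => rfl) (fun _ _ _ => rfl) ?_
    rintro i _ _ z ⟨q, hq, hz⟩
    exact ⟨q - (K + 1), Finset.mem_image_of_mem _ hq, by simpa using hz⟩
  · intro p q hpq
    exact lk_horizontal a b (fun i => r - K + (i - a)) _ _ p q hpq (by intros; omega)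
      (by intros; omega)
  · intro p q s T T' h1 h2 h3 h4
    refine (h3.glue h4 ?_ ?_).mono ?_ (fun _ _ _ => rfl) (fun _ _ _ => rfl) (fun _ _ _ => subset_rfl)
    · intro z; simp only [mem_Rc]; omega
    · intro i _ _; simp [zGrid, entryPt]
    · intro z; simp only [mem_Rc, Set.mem_union]; omega
  · intro p q T T' h h'
    exact h.mono subset_rfl (fun _ _ _ => rfl) (fun _ _ _ => rfl) h'
  · intro x hx
    obtain ⟨q, hq, rfl⟩ := Finset.mem_image.1 hx
    obtain ⟨k1, k2, k3⟩ := hab q hq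
    have := lk_cell a b (a' q) (b' q) r w q K hK k1 k2 k3 hw (T q) (hbox q hq)
    simp only [sub_add_cancel]
    convert this using 2 <;> ring_nf
  · intro x hx y hy
    obtain ⟨q, hq, rfl⟩ := Finset.mem_image.1 hx
    obtain ⟨q', hq', rfl⟩ := Finset.mem_image.1 hy
    have := hsp q hq q' hq'
    omega
  · intro x hx
    obtain ⟨q, hq, rfl⟩ := Finset.mem_image.1 hx
    have := hL q hq
    omega
  · intro x hx
    obtain ⟨q, hq, rfl⟩ := Finset.mem_image.1 hx
    have := hR q hq
    omega

/-- One double pass of the snake. Vertical wires arriving on the left turn right, traverse the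
strip (rows `u..v`), and return leftwards in reversed order through the `K` rows below it, to leave
downwards in the columns where they arrived. -/
lemma lk_pass (a b K u v c₁ c₂ : ℤ) (hK : K = b - a) (hK0 : 0 ≤ K) (huv : u + K ≤ v)
    (hc : c₁ + 2 * K ≤ c₂) (T : ℤ → Set (ℤ × ℤ))
    (hstrip : Lk a b (Rc u v (c₁ + K) (c₂ - K)) (entryPt a u (c₁ + K)) (entryPt a u (c₂ - K)) T) :
    Lk a b (Rc u (v + K) c₁ c₂) (fun i => (u, c₁ + (b - 1 - i)))
      (fun i => (v + K, c₁ + (b - 1 - i))) T := by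
  have h1 : Lk a b (Rc u v c₁ (c₁ + K - 1)) (fun i => (u, c₁ + (b - 1 - i)))
      (entryPt a u (c₁ + K - 1)) (fun _ => ∅) := by
    refine ⟨fun i => Rc u (u + (i - a)) (c₁ + (b - 1 - i)) (c₁ + (b - 1 - i)) ∪
      Rc (u + (i - a)) (u + (i - a)) (c₁ + (b - 1 - i)) (c₁ + K - 1),
      fun i h1 h2 => ⟨?_, ?_, ?_, ?_, by simp, ?_⟩⟩
    · refine conn_union (conn_Rc _ _ _ _) (conn_Rc _ _ _ _) (u + (i - a), c₁ + (b - 1 - i)) ?_ ?_ <;>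
        simp only [mem_Rc] <;> omega
    · intro p; simp only [mem_Rc, Set.mem_union]; omega
    · simp only [mem_Rc, Set.mem_union]; omega
    · simp only [mem_Rc, Set.mem_union, entryPt]; omega
    · intro j hj1 hj2 hij p; simp only [mem_Rc, Set.mem_union]; omega
  have h2 : Lk a b (Rc u (v + K) (c₂ - K + 1) c₂ ∪ Rc (v + 1) (v + K) c₁ (c₂ - K))
      (entryPt a u (c₂ - K + 1)) (fun i => (v + K, c₁ + (b - 1 - i))) (fun _ => ∅) := by
    refine ⟨fun i => ((Rc (u + (i - a)) (u + (i - a)) (c₂ - K + 1) (c₂ - (i - a)) ∪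
      Rc (u + (i - a)) (v + K - (i - a)) (c₂ - (i - a)) (c₂ - (i - a))) ∪
      Rc (v + K - (i - a)) (v + K - (i - a)) (c₁ + (b - 1 - i)) (c₂ - (i - a))) ∪
      Rc (v + K - (i - a)) (v + K) (c₁ + (b - 1 - i)) (c₁ + (b - 1 - i)),
      fun i h1 h2 => ⟨?_, ?_, ?_, ?_, by simp, ?_⟩⟩
    · refine conn_union (conn_union (conn_union (conn_Rc _ _ _ _) (conn_Rc _ _ _ _)
        (u + (i - a), c₂ - (i - a)) ?_ ?_) (conn_Rc _ _ _ _)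
        (v + K - (i - a), c₂ - (i - a)) (Or.inr ?_) ?_) (conn_Rc _ _ _ _)
        (v + K - (i - a), c₁ + (b - 1 - i)) (Or.inr ?_) ?_ <;>
        simp only [mem_Rc] <;> omega
    · intro p; simp only [mem_Rc, Set.mem_union]; omega
    · simp only [mem_Rc, Set.mem_union, entryPt]; omega
    · simp only [mem_Rc, Set.mem_union]; omega
    · intro j hj1 hj2 hij p; simp only [mem_Rc, Set.mem_union]; omega
  refine ((h1.glue hstrip ?_ ?_).glue h2 ?_ ?_).mono ?_ (fun _ _ _ => rfl) (fun _ _ _ => rfl) ?_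
  · intro p; simp only [mem_Rc]; omega
  · intro i _ _; simp [zGrid, entryPt]
  · intro p; simp only [mem_Rc, Set.mem_union]; omega
  · intro i _ _; simp [zGrid, entryPt]
  · intro p; simp only [mem_Rc, Set.mem_union]; omega
  · intro i _ _ z hz; exact Or.inl (Or.inr hz)

/-- The recursive step of the snake: given linkages through all the boxes `(y, q) ∈ Y × X` of side
`w`, each using an interval `[a' y q, b' y q)` of the colours `[a, b)`, there is a linkage of all
colours through the surrounding box `Rc r₁ r₂ c₁ c₂` that contains them. -/
lemma lk_step (a b K r₁ r₂ c₁ c₂ w : ℤ) (hK : K = b - a) (hK0 : 0 ≤ K) (hw : K < w)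
    (hr : r₁ + 2 * K < r₂) (hc : c₁ + 2 * K ≤ c₂) (Y X : Finset ℤ) (a' b' : ℤ → ℤ → ℤ)
    (T : ℤ → ℤ → ℤ → Set (ℤ × ℤ))
    (hab : ∀ y ∈ Y, ∀ q ∈ X, a ≤ a' y q ∧ a' y q ≤ b' y q ∧ b' y q ≤ b)
    (hbox : ∀ y ∈ Y, ∀ q ∈ X, Lk (a' y q) (b' y q) (Rc y (y + w - 1) q (q + w - 1))
      (entryPt (a' y q) y q) (exitPt (b' y q) (y + w - 1) (q + w - 1)) (T y q))
    (hspX : ∀ q ∈ X, ∀ q' ∈ X, q < q' → q + w + 4 * K + 4 ≤ q')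
    (hspY : ∀ q ∈ Y, ∀ q' ∈ Y, q < q' → q + w + 4 * K + 4 ≤ q')
    (hX1 : ∀ q ∈ X, c₁ + 4 * K + 4 ≤ q) (hX2 : ∀ q ∈ X, q + w + 4 * K + 4 ≤ c₂)
    (hY1 : ∀ q ∈ Y, r₁ + 4 * K + 4 ≤ q) (hY2 : ∀ q ∈ Y, q + w + 4 * K + 4 ≤ r₂) :
    Lk a b (Rc r₁ r₂ c₁ c₂) (entryPt a r₁ c₁) (exitPt b r₂ c₂)
      (fun i => {z | ∃ y ∈ Y, ∃ q ∈ X, a' y q ≤ i ∧ i < b' y q ∧ z ∈ T y q i}) := by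
  have hstack := chain (a := a) (b := b)
    (fun p q T => Lk a b (Rc p q c₁ c₂) (fun i => (p, c₁ + (b - 1 - i)))
      (fun i => (q, c₁ + (b - 1 - i))) T)
    (w + 3 * K) (by omega) ?_ ?_ ?_
    (fun x i => {z | ∃ q ∈ X, a' (x + K) q ≤ i ∧ i < b' (x + K) q ∧ z ∈ T (x + K) q i})
    (Y.image (fun q => q - K)) ?_ ?_ (r₁ + K) (r₂ - K) (by omega) ?_ ?_
  · have htop : Lk a b (Rc r₁ (r₁ + K - 1) c₁ c₂) (entryPt a r₁ c₁)
        (fun i => (r₁ + K - 1, c₁ + (b - 1 - i))) (fun _ => ∅) := by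
      refine ⟨fun i => Rc (r₁ + (i - a)) (r₁ + (i - a)) c₁ (c₁ + (b - 1 - i)) ∪
        Rc (r₁ + (i - a)) (r₁ + K - 1) (c₁ + (b - 1 - i)) (c₁ + (b - 1 - i)),
        fun i h1 h2 => ⟨?_, ?_, ?_, ?_, by simp, ?_⟩⟩
      · refine conn_union (conn_Rc _ _ _ _) (conn_Rc _ _ _ _)
          (r₁ + (i - a), c₁ + (b - 1 - i)) ?_ ?_ <;> simp only [mem_Rc] <;> omega
      · intro p; simp only [mem_Rc, Set.mem_union]; omega
      · simp only [mem_Rc, Set.mem_union, entryPt]; omega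
      · simp only [mem_Rc, Set.mem_union]; omega
      · intro j hj1 hj2 hij p; simp only [mem_Rc, Set.mem_union]; omega
    have hbot : Lk a b (Rc (r₂ - K + 1) r₂ c₁ c₂) (fun i => (r₂ - K + 1, c₁ + (b - 1 - i)))
        (exitPt b r₂ c₂) (fun _ => ∅) := by
      refine ⟨fun i => Rc (r₂ - K + 1) (r₂ - (b - 1 - i)) (c₁ + (b - 1 - i)) (c₁ + (b - 1 - i)) ∪
        Rc (r₂ - (b - 1 - i)) (r₂ - (b - 1 - i)) (c₁ + (b - 1 - i)) c₂,
        fun i h1 h2 => ⟨?_, ?_, ?_, ?_, by simp, ?_⟩⟩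
      · refine conn_union (conn_Rc _ _ _ _) (conn_Rc _ _ _ _)
          (r₂ - (b - 1 - i), c₁ + (b - 1 - i)) ?_ ?_ <;> simp only [mem_Rc] <;> omega
      · intro p; simp only [mem_Rc, Set.mem_union]; omega
      · simp only [mem_Rc, Set.mem_union]; omega
      · simp only [mem_Rc, Set.mem_union, exitPt]; omega
      · intro j hj1 hj2 hij p; simp only [mem_Rc, Set.mem_union]; omega
    refine ((htop.glue hstack ?_ ?_).glue hbot ?_ ?_).mono ?_ (fun _ _ _ => rfl)
      (fun _ _ _ => rfl) ?_
    · intro p; simp only [mem_Rc]; omega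
    · intro i _ _; simp [zGrid]
    · intro p; simp only [mem_Rc, Set.mem_union]; omega
    · intro i _ _; simp [zGrid]
    · intro p; simp only [mem_Rc, Set.mem_union]; omega
    · rintro i _ _ z ⟨y, hy, hz⟩
      exact Or.inl (Or.inr ⟨y - K, Finset.mem_image_of_mem _ hy, by simpa using hz⟩)
  · intro p q hpq
    exact lk_vertical a b p q c₁ c₂ hpq (by omega)
  · intro p q s T T' h1 h2 h3 h4
    refine (h3.glue h4 ?_ ?_).mono ?_ (fun _ _ _ => rfl) (fun _ _ _ => rfl) (fun _ _ _ => subset_rfl)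
    · intro z; simp only [mem_Rc]; omega
    · intro i _ _; simp [zGrid]
    · intro z; simp only [mem_Rc, Set.mem_union]; omega
  · intro p q T T' h h'
    exact h.mono subset_rfl (fun _ _ _ => rfl) (fun _ _ _ => rfl) h'
  · intro x hx
    obtain ⟨y, hy, rfl⟩ := Finset.mem_image.1 hx
    have h1 := lk_strip a b y w K (c₁ + K) (c₂ - K) hK hK0 hw (by omega) X (a' y) (b' y) (T y)
      (hab y hy) (hbox y hy) (fun q hq q' hq' h => by have := hspX q hq q' hq' h; omega)
      (fun q hq => by have := hX1 q hq; omega) (fun q hq => by have := hX2 q hq; omega)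
    have h2 := lk_pass a b K (y - K) (y + w - 1 + K) c₁ c₂ hK hK0 (by omega) (by omega) _ h1
    simp only [sub_add_cancel]
    have e : y - K + (w + 3 * K) - 1 = y + w - 1 + K + K := by ring
    rw [e]
    exact h2
  · intro x hx y hy
    obtain ⟨q, hq, rfl⟩ := Finset.mem_image.1 hx
    obtain ⟨q', hq', rfl⟩ := Finset.mem_image.1 hy
    have := hspY q hq q' hq'
    omega
  · intro x hx
    obtain ⟨q, hq, rfl⟩ := Finset.mem_image.1 hx
    have := hY1 q hq
    omega
  · intro x hx
    obtain ⟨q, hq, rfl⟩ := Finset.mem_image.1 hx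
    have := hY2 q hq
    omega

/-- The innermost boxes carry at most one wire, which may occupy the whole box. -/
lemma lk_base (a b r₁ r₂ c₁ c₂ : ℤ) (hab : b - a ≤ 1) (hr : r₁ ≤ r₂) (hc : c₁ ≤ c₂) :
    Lk a b (Rc r₁ r₂ c₁ c₂) (entryPt a r₁ c₁) (exitPt b r₂ c₂) (fun _ => Rc r₁ r₂ c₁ c₂) := by
  refine ⟨fun _ => Rc r₁ r₂ c₁ c₂, fun i h1 h2 =>
    ⟨conn_Rc _ _ _ _, subset_rfl, ?_, ?_, subset_rfl, fun j _ _ _ => by omega⟩⟩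
  · simp only [mem_Rc, entryPt]; omega
  · simp only [mem_Rc, exitPt]; omega

/-- The bundle leading from the sources `(1, x i)` on the top row along the right side of the grid
to the exits of the box `Rc r₁ r₂ c₁ c₂`. -/
lemma lk_sources (ℓ K r₁ r₂ c₁ c₂ : ℤ) (x : ℤ → ℤ) (hr₁ : K < r₁) (hr₂ : r₁ + K ≤ r₂)
    (hr₃ : r₂ ≤ ℓ) (hc₀ : 1 ≤ c₁) (hc₁ : c₁ ≤ c₂) (hc : c₂ + K < ℓ)
    (hx1 : ∀ i, 0 ≤ i → i < K → 1 ≤ x i)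
    (hx2 : ∀ i, 0 ≤ i → i < K → x i + (K - 1 - i) ≤ ℓ)
    (hx : ∀ i j, 0 ≤ i → i < j → j < K → x i < x j) :
    Lk 0 K (Rc 1 ℓ 1 ℓ \ Rc r₁ r₂ c₁ c₂) (fun i => (1, x i)) (exitPt K r₂ (c₂ + 1))
      (fun _ => ∅) := by
  refine ⟨fun i => ((Rc 1 (K - i) (x i) (x i) ∪ Rc (K - i) (K - i) (x i) (ℓ - (K - 1 - i))) ∪
    Rc (K - i) (r₂ - (K - 1 - i)) (ℓ - (K - 1 - i)) (ℓ - (K - 1 - i))) ∪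
    Rc (r₂ - (K - 1 - i)) (r₂ - (K - 1 - i)) (c₂ + 1) (ℓ - (K - 1 - i)),
    fun i h1 h2 => ⟨?_, ?_, ?_, ?_, by simp, ?_⟩⟩
  · have := hx1 i h1 h2
    have := hx2 i h1 h2
    refine conn_union (conn_union (conn_union (conn_Rc _ _ _ _) (conn_Rc _ _ _ _)
        (K - i, x i) ?_ ?_) (conn_Rc _ _ _ _)
        (K - i, ℓ - (K - 1 - i)) (Or.inr ?_) ?_) (conn_Rc _ _ _ _)
        (r₂ - (K - 1 - i), ℓ - (K - 1 - i)) (Or.inr ?_) ?_ <;>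
        simp only [mem_Rc] <;> omega
  · intro p
    have := hx1 i h1 h2
    have := hx2 i h1 h2
    simp only [mem_Rc, Set.mem_union, Set.mem_sdiff]; omega
  · simp only [mem_Rc, Set.mem_union]; omega
  · simp only [mem_Rc, Set.mem_union, exitPt]; omega
  · intro j hj1 hj2 hij p
    have := hx1 i h1 h2
    have := hx2 i h1 h2
    have := hx2 j hj1 hj2
    have := hx i j h1 hij hj2
    simp only [mem_Rc, Set.mem_union]; omega

/-! ### From linkages to node-disjoint paths -/

/-- The vertex of the integer grid corresponding to a vertex of the `ℓ × ℓ` grid. -/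
def toZ (v : Vtx) : ℤ × ℤ := ((v.1 : ℤ), (v.2 : ℤ))

lemma path_of_conn (ℓ : ℕ) (S : Set (ℤ × ℤ)) (hS : Conn S) (hsub : S ⊆ Rc 1 ℓ 1 ℓ) (u v : Vtx)
    (hu : toZ u ∈ S) (hv : toZ v ∈ S) :
    ∃ P : (gridG ℓ).Walk u v, P.IsPath ∧ ∀ x ∈ P.support, toZ x ∈ S := by
  let φ : zGrid.induce S →g gridG ℓ :=
    { toFun := fun z => (z.1.1.toNat, z.1.2.toNat)
      map_rel' := by
        rintro ⟨⟨a, b⟩, hz⟩ ⟨⟨c, d⟩, hw⟩ h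
        have h1 := mem_Rc.1 (hsub hz)
        have h2 := mem_Rc.1 (hsub hw)
        simp only [zGrid, SimpleGraph.comap_adj, Function.Embedding.subtype_apply] at h
        simp only at h1 h2
        simp only [gridG, rectGrid, SimpleGraph.fromRel_adj, ne_eq, Prod.mk.injEq]
        omega }
  obtain ⟨w⟩ := hS ⟨toZ u, hu⟩ ⟨toZ v, hv⟩
  have e : ∀ (z : Vtx) (hz : toZ z ∈ S), φ ⟨toZ z, hz⟩ = z := by
    intro z hz
    simp [φ, toZ]
  refine ⟨((w.map φ).copy (e u hu) (e v hv)).bypass, SimpleGraph.Walk.bypass_isPath _, ?_⟩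
  intro x hx
  have hx := SimpleGraph.Walk.support_bypass_subset_support _ hx
  rw [SimpleGraph.Walk.support_copy, SimpleGraph.Walk.support_map, List.mem_map] at hx
  obtain ⟨⟨z, hz⟩, -, rfl⟩ := hx
  have h1 := mem_Rc.1 (hsub hz)
  have : toZ (φ ⟨z, hz⟩) = z := by
    apply Prod.ext <;> simp [φ, toZ] <;> omega
  rwa [this]

lemma routable_of_lk (ℓ K : ℕ) (g : ℕ → DPair) (A B : ℤ → ℤ × ℤ) (T : ℤ → Set (ℤ × ℤ))
    (h : Lk 0 K (Rc 1 ℓ 1 ℓ) A B T) (hA : ∀ i < K, A i = toZ (g i).1)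
    (hT : ∀ i < K, toZ (g i).2 ∈ T i) :
    NodeDisjointRoutable (gridG ℓ) ((range K).image g) := by
  obtain ⟨S, hS⟩ := h
  have hidx : ∀ m : {m // m ∈ (range K).image g}, ∃ i < K, g i = m.1 := by
    rintro ⟨m, hm⟩
    simpa using hm
  choose idx hlt hidx using hidx
  have hP : ∀ m : {m // m ∈ (range K).image g}, ∃ P : (gridG ℓ).Walk m.1.1 m.1.2,
      P.IsPath ∧ ∀ x ∈ P.support, toZ x ∈ S (idx m) := by
    intro m
    obtain ⟨k1, k2, k3, k4, k5, -⟩ := hS (idx m) (by positivity) (by exact_mod_cast hlt m)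
    refine path_of_conn ℓ _ k1 k2 _ _ ?_ ?_
    · rw [← hidx m, ← hA _ (hlt m)]; exact k3
    · rw [← hidx m]; exact k5 (hT _ (hlt m))
  choose P hP1 hP2 using hP
  refine ⟨P, hP1, ?_⟩
  intro m m' hne x hx hx'
  have h1 := hP2 _ _ hx
  have h2 := hP2 _ _ hx'
  have hne' : idx m ≠ idx m' := by
    intro h
    apply hne
    apply Subtype.ext
    rw [← hidx m, ← hidx m', h]
  have l1 : (idx m : ℤ) < K := by exact_mod_cast hlt m
  have l2 : (idx m' : ℤ) < K := by exact_mod_cast hlt m'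
  rcases lt_or_gt_of_ne hne' with h | h
  · exact (hS _ (by positivity) l1).2.2.2.2.2 _ (by positivity) l2 (by exact_mod_cast h) _ h1 h2
  · exact (hS _ (by positivity) l2).2.2.2.2.2 _ (by positivity) l1 (by exact_mod_cast h) _ h2 h1

/-! ### Canonical families of intervals and squares -/

/-- The `d × d` square with top left corner `(p, q)`. -/
def sq (d p q : ℕ) : SquareSpec := (Icc p (p + d - 1), Icc q (q + d - 1))

lemma canonical_form {W d : ℕ} {Is : Finset (Finset ℕ)} (h : IsCanonicalIntervals W d Is)
    {I : Finset ℕ} (hI : I ∈ Is) : ∃ p, 1 ≤ p ∧ p + d - 1 ≤ W ∧ I = Icc p (p + d - 1) := by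
  obtain ⟨⟨a, b, h1, h2, h3, rfl⟩, hc⟩ := h.1 I hI
  rw [Nat.card_Icc] at hc
  refine ⟨a, h1, by omega, ?_⟩
  congr 1
  omega

lemma canonical_sep {W d : ℕ} {Is : Finset (Finset ℕ)} (h : IsCanonicalIntervals W d Is)
    (hd : 0 < d) {p p' : ℕ} (hp : Icc p (p + d - 1) ∈ Is) (hp' : Icc p' (p' + d - 1) ∈ Is)
    (hlt : p < p') : p + 2 * d ≤ p' := by
  have hne : Icc p (p + d - 1) ≠ Icc p' (p' + d - 1) := by
    intro he
    have : p ∈ Icc p' (p' + d - 1) := he ▸ Finset.mem_Icc.2 ⟨le_rfl, by omega⟩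
    have := (Finset.mem_Icc.1 this).1
    omega
  have hs := h.2 _ hp _ hp' hne
  by_cases hov : p' ≤ p + d - 1
  · have := hs p' (Finset.mem_Icc.2 ⟨hlt.le, hov⟩) p' (Finset.mem_Icc.2 ⟨le_rfl, by omega⟩)
    simp at this
    omega
  · have := hs (p + d - 1) (Finset.mem_Icc.2 ⟨by omega, le_rfl⟩) p'
      (Finset.mem_Icc.2 ⟨le_rfl, by omega⟩)
    rw [lt_abs] at this
    omega

lemma canonical_unique {W d : ℕ} {Qs : Finset SquareSpec} (h : IsCanonicalSquares W d Qs)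
    {Q Q' : SquareSpec} (hQ : Q ∈ Qs) (hQ' : Q' ∈ Qs) {v : Vtx} (hv : memSquare v Q)
    (hv' : memSquare v Q') : Q = Q' := by
  obtain ⟨I₁, I₂, h1, h2, rfl⟩ := h
  rw [Finset.mem_product] at hQ hQ'
  apply Prod.ext
  · by_contra hne
    have := h1.2 _ hQ.1 _ hQ'.1 hne _ hv.1 _ hv'.1
    simp at this
    omega
  · by_contra hne
    have := h2.2 _ hQ.2 _ hQ'.2 hne _ hv.2 _ hv'.2
    simp at this
    omega

lemma canonical_sq {W d : ℕ} {Qs : Finset SquareSpec} (h : IsCanonicalSquares W d Qs)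
    {Q : SquareSpec} (hQ : Q ∈ Qs) : ∃ p q, 1 ≤ p ∧ p + d - 1 ≤ W ∧ 1 ≤ q ∧ q + d - 1 ≤ W ∧
      Q = sq d p q := by
  obtain ⟨I₁, I₂, h1, h2, rfl⟩ := h
  rw [Finset.mem_product] at hQ
  obtain ⟨p, hp1, hp2, hp⟩ := canonical_form h1 hQ.1
  obtain ⟨q, hq1, hq2, hq⟩ := canonical_form h2 hQ.2
  exact ⟨p, q, hp1, hp2, hq1, hq2, Prod.ext hp hq⟩

/-! ### Colour ranges of intervals of the top row -/

/-- First colour of the interval `I`: the number of the sources `x 0 < ⋯ < x (K - 1)` to the left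
of `I`. -/
def lowC (K : ℕ) (x : ℕ → ℕ) (I : Finset ℕ) : ℕ := #{i ∈ range K | ∀ z ∈ I, x i < z}

/-- One past the last colour of the interval `I`: the number of sources not to the right of `I`. -/
def highC (K : ℕ) (x : ℕ → ℕ) (I : Finset ℕ) : ℕ := #{i ∈ range K | ∃ z ∈ I, x i ≤ z}

lemma lt_card_filter_iff {K : ℕ} {P : ℕ → Prop} [DecidablePred P]
    (hP : ∀ i j, i ≤ j → j < K → P j → P i) {i : ℕ} (hi : i < K) :
    i < #{j ∈ range K | P j} ↔ P i := by
  constructor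
  · intro h
    by_contra hn
    have : ({j ∈ range K | P j} : Finset ℕ) ⊆ range i := by
      intro j hj
      simp only [Finset.mem_filter, Finset.mem_range] at hj ⊢
      by_contra hij
      exact hn (hP i j (by omega) hj.1 hj.2)
    have := Finset.card_le_card this
    rw [Finset.card_range] at this
    omega
  · intro h
    have : range (i + 1) ⊆ ({j ∈ range K | P j} : Finset ℕ) := by
      intro j hj
      simp only [Finset.mem_filter, Finset.mem_range] at hj ⊢
      exact ⟨by omega, hP j i (by omega) hi h⟩
    have := Finset.card_le_card this
    rw [Finset.card_range] at this
    omega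

lemma lt_lowC_iff {K : ℕ} {x : ℕ → ℕ} (hx : ∀ i j, i < j → j < K → x i < x j) {I : Finset ℕ}
    {i : ℕ} (hi : i < K) : i < lowC K x I ↔ ∀ z ∈ I, x i < z := by
  refine lt_card_filter_iff ?_ hi
  intro i j hij hj h z hz
  rcases hij.lt_or_eq with hij | rfl
  · exact (hx i j hij hj).trans (h z hz)
  · exact h z hz

lemma lt_highC_iff {K : ℕ} {x : ℕ → ℕ} (hx : ∀ i j, i < j → j < K → x i < x j) {I : Finset ℕ}
    {i : ℕ} (hi : i < K) : i < highC K x I ↔ ∃ z ∈ I, x i ≤ z := by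
  refine lt_card_filter_iff ?_ hi
  rintro i j hij hj ⟨z, hz, h⟩
  rcases hij.lt_or_eq with hij | rfl
  · exact ⟨z, hz, (hx i j hij hj).le.trans h⟩
  · exact ⟨z, hz, h⟩

lemma lowC_anti (K : ℕ) (x : ℕ → ℕ) {I J : Finset ℕ} (h : I ⊆ J) : lowC K x J ≤ lowC K x I := by
  apply Finset.card_le_card
  intro i hi
  simp only [Finset.mem_filter] at hi ⊢
  exact ⟨hi.1, fun z hz => hi.2 z (h hz)⟩

lemma highC_mono (K : ℕ) (x : ℕ → ℕ) {I J : Finset ℕ} (h : I ⊆ J) :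
    highC K x I ≤ highC K x J := by
  apply Finset.card_le_card
  intro i hi
  simp only [Finset.mem_filter] at hi ⊢
  obtain ⟨h1, z, hz, h2⟩ := hi
  exact ⟨h1, z, h hz, h2⟩

lemma lowC_le_highC (K : ℕ) (x : ℕ → ℕ) {I : Finset ℕ} (h : I.Nonempty) :
    lowC K x I ≤ highC K x I := by
  obtain ⟨z, hz⟩ := h
  apply Finset.card_le_card
  intro i hi
  simp only [Finset.mem_filter] at hi ⊢
  exact ⟨hi.1, z, hz, (hi.2 z hz).le⟩

lemma highC_le (K : ℕ) (x : ℕ → ℕ) (I : Finset ℕ) : highC K x I ≤ K := by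
  have := Finset.card_le_card (Finset.filter_subset (fun i => ∃ z ∈ I, x i ≤ z) (range K))
  rwa [Finset.card_range] at this

/-- If consecutive selected sources are at least `s ≥ c` apart in the sorted order `g` of all the
sources, an interval with at most `c * e` sources contains at most `e` selected ones. -/
lemma colour_count {M : Finset DPair} {m K s c e : ℕ} {g : ℕ → DPair} (hgM : ∀ j < m, g j ∈ M)
    (hg : ∀ i j, i < j → j < m → (g i).1.2 < (g j).1.2) (hsc : c ≤ s) (hc : 0 < c)
    (hK : ∀ i < K, s * i < m) (lo hi : ℕ)
    (hcard : #{p ∈ M | p.1.2 ∈ Icc lo hi} ≤ c * e) :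
    highC K (fun i => (g (s * i)).1.2) (Icc lo hi) ≤
      lowC K (fun i => (g (s * i)).1.2) (Icc lo hi) + e := by
  set x : ℕ → ℕ := fun i => (g (s * i)).1.2 with hxdef
  have hs : 0 < s := by omega
  have hx : ∀ i j, i < j → j < K → x i < x j := fun i j hij hj =>
    hg _ _ (Nat.mul_lt_mul_of_pos_left hij hs) (hK j hj)
  by_contra hcon
  push Not at hcon
  have hle := highC_le K x (Icc lo hi)
  obtain ⟨i₁, hi₁⟩ : ∃ i₁, highC K x (Icc lo hi) = i₁ + 1 := ⟨highC K x (Icc lo hi) - 1, by omega⟩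
  set i₀ := lowC K x (Icc lo hi) with hi₀
  obtain ⟨z, hz, hz1⟩ := (lt_highC_iff hx (I := Icc lo hi) (i := i₁) (by omega)).1 (by omega)
  have h0 : ¬ ∀ z ∈ Icc lo hi, x i₀ < z := fun h =>
    lt_irrefl i₀ ((lt_lowC_iff hx (by omega)).2 h)
  push Not at h0
  obtain ⟨z', hz', hz1'⟩ := h0
  rw [Finset.mem_Icc] at hz hz'
  have hgle : ∀ i j, i ≤ j → j < m → (g i).1.2 ≤ (g j).1.2 := fun i j hij hj => by
    rcases hij.lt_or_eq with h | rfl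
    · exact (hg i j h hj).le
    · exact le_rfl
  have hm := hK i₁ (by omega)
  have hsub : (Icc (s * i₀) (s * i₁)).image g ⊆ {p ∈ M | p.1.2 ∈ Icc lo hi} := by
    intro p hp
    obtain ⟨j, hj, rfl⟩ := Finset.mem_image.1 hp
    rw [Finset.mem_Icc] at hj
    have h1 := hgle (s * i₀) j hj.1 (by omega)
    have h2 := hgle j (s * i₁) hj.2 hm
    simp only [Finset.mem_filter, Finset.mem_Icc]
    simp only [hxdef] at hz1 hz1'
    exact ⟨hgM j (by omega), by omega, by omega⟩
  have hinj : Set.InjOn g (Icc (s * i₀) (s * i₁) : Finset ℕ) := by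
    intro i hi j hj hij
    simp only [Finset.coe_Icc, Set.mem_Icc] at hi hj
    rcases lt_trichotomy i j with h | h | h
    · have := hg i j h (by omega)
      rw [hij] at this
      omega
    · exact h
    · have := hg j i h (by omega)
      rw [hij] at this
      omega
  have h1 := Finset.card_le_card hsub
  rw [Finset.card_image_of_injOn hinj, Nat.card_Icc] at h1
  have h2 : s * (i₀ + e) ≤ s * i₁ := Nat.mul_le_mul_left s (by omega)
  have h3 : c * e ≤ s * e := Nat.mul_le_mul_right e hsc
  rw [Nat.mul_add] at h2
  omega

/-! ### Recursion over the hierarchy -/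

/-- The box of a `4μ × 4μ` square with corner `(p, q)` is the square enlarged by `μ` on all sides.
`BoxLk` says that the colours of the interval `I` can be linked through this box, so that colour
`i` visits its destination `t i` if that lies in the square. -/
def BoxLk (K : ℕ) (x : ℕ → ℕ) (t : ℤ → ℤ × ℤ) (μ p q : ℕ) (I : Finset ℕ) : Prop :=
  Lk (lowC K x I) (highC K x I)
    (Rc (p - μ) (p - μ + 6 * μ - 1) (q - μ) (q - μ + 6 * μ - 1))
    (entryPt (lowC K x I) (p - μ) (q - μ))
    (exitPt (highC K x I) (p - μ + 6 * μ - 1) (q - μ + 6 * μ - 1))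
    (fun i => {z | z = t i ∧ z ∈ Rc p (p + 4 * μ - 1) q (q + 4 * μ - 1)})

/-- `lk_step` for the squares of a canonical family that lie in a window
`[P₁, P₂] × [Q₁, Q₂]` of the surrounding box. -/
lemma family_step {W μ : ℕ} (hμ : 0 < μ) {Qs : Finset SquareSpec}
    (hcan : IsCanonicalSquares W (4 * μ) Qs) (F : SquareSpec → Finset ℕ) (K : ℕ) (x : ℕ → ℕ)
    (t : ℤ → ℤ × ℤ) (a b k P₁ P₂ Q₁ Q₂ r₁ r₂ c₁ c₂ : ℤ) (hk : k = b - a) (hk0 : 0 ≤ k)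
    (hkμ : 4 * k + 4 ≤ μ) (hr₁ : r₁ + 2 * μ ≤ P₁) (hr₂ : P₂ + 2 * μ + 1 ≤ r₂)
    (hc₁ : c₁ + 2 * μ ≤ Q₁) (hc₂ : Q₂ + 2 * μ + 1 ≤ c₂) (hP : P₁ ≤ P₂) (hQ : Q₁ ≤ Q₂)
    (hchild : ∀ p q : ℕ, sq (4 * μ) p q ∈ Qs → P₁ ≤ p → p + 4 * μ - 1 ≤ P₂ → Q₁ ≤ q →
      q + 4 * μ - 1 ≤ Q₂ → a ≤ lowC K x (F (sq (4 * μ) p q)) ∧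
        lowC K x (F (sq (4 * μ) p q)) ≤ highC K x (F (sq (4 * μ) p q)) ∧
        highC K x (F (sq (4 * μ) p q)) ≤ b ∧ BoxLk K x t μ p q (F (sq (4 * μ) p q))) :
    Lk a b (Rc r₁ r₂ c₁ c₂) (entryPt a r₁ c₁) (exitPt b r₂ c₂)
      (fun i => {z | z = t i ∧ ∃ p q : ℕ, sq (4 * μ) p q ∈ Qs ∧ P₁ ≤ p ∧ p + 4 * μ - 1 ≤ P₂ ∧
        Q₁ ≤ q ∧ q + 4 * μ - 1 ≤ Q₂ ∧ lowC K x (F (sq (4 * μ) p q)) ≤ i ∧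
        i < highC K x (F (sq (4 * μ) p q)) ∧ z ∈ Rc p (p + 4 * μ - 1) q (q + 4 * μ - 1)}) := by
  obtain ⟨I₁, I₂, h1, h2, rfl⟩ := hcan
  have hsq : ∀ p q, sq (4 * μ) p q ∈ I₁ ×ˢ I₂ ↔
      Icc p (p + 4 * μ - 1) ∈ I₁ ∧ Icc q (q + 4 * μ - 1) ∈ I₂ := by
    intro p q
    simp [sq]
  let Y : Finset ℤ := ((range (W + 1)).filter (fun p : ℕ =>
    Icc p (p + 4 * μ - 1) ∈ I₁ ∧ P₁ ≤ p ∧ (p : ℤ) + 4 * μ - 1 ≤ P₂)).image (fun p : ℕ => (p : ℤ) - μ)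
  let X : Finset ℤ := ((range (W + 1)).filter (fun p : ℕ =>
    Icc p (p + 4 * μ - 1) ∈ I₂ ∧ Q₁ ≤ p ∧ (p : ℤ) + 4 * μ - 1 ≤ Q₂)).image (fun p : ℕ => (p : ℤ) - μ)
  have hY : ∀ y ∈ Y, ∃ p : ℕ, y = (p : ℤ) - μ ∧ Icc p (p + 4 * μ - 1) ∈ I₁ ∧ P₁ ≤ p ∧
      (p : ℤ) + 4 * μ - 1 ≤ P₂ := by
    intro y hy
    obtain ⟨p, hp, rfl⟩ := Finset.mem_image.1 hy
    exact ⟨p, rfl, (Finset.mem_filter.1 hp).2⟩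
  have hX : ∀ y ∈ X, ∃ p : ℕ, y = (p : ℤ) - μ ∧ Icc p (p + 4 * μ - 1) ∈ I₂ ∧ Q₁ ≤ p ∧
      (p : ℤ) + 4 * μ - 1 ≤ Q₂ := by
    intro y hy
    obtain ⟨p, hp, rfl⟩ := Finset.mem_image.1 hy
    exact ⟨p, rfl, (Finset.mem_filter.1 hp).2⟩
  have hW : ∀ (Is : Finset (Finset ℕ)), IsCanonicalIntervals W (4 * μ) Is → ∀ p,
      Icc p (p + 4 * μ - 1) ∈ Is → p ∈ range (W + 1) := by
    intro Is hIs p hp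
    obtain ⟨p', k1, k2, k3⟩ := canonical_form hIs hp
    have : p ∈ Icc p' (p' + 4 * μ - 1) := k3 ▸ Finset.mem_Icc.2 ⟨le_rfl, by omega⟩
    rw [Finset.mem_Icc] at this
    rw [Finset.mem_range]
    omega
  let G : ℤ → ℤ → Finset ℕ := fun y q => F (sq (4 * μ) (y + μ).toNat (q + μ).toNat)
  have hG : ∀ p q : ℕ, G ((p : ℤ) - μ) ((q : ℤ) - μ) = F (sq (4 * μ) p q) := by
    intro p q
    simp [G]
  have key := lk_step a b k r₁ r₂ c₁ c₂ (6 * μ) hk hk0 (by omega) (by omega) (by omega) Y X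
    (fun y q => lowC K x (G y q)) (fun y q => highC K x (G y q))
    (fun y q i => {z | z = t i ∧ z ∈ Rc (y + μ) (y + μ + 4 * μ - 1) (q + μ) (q + μ + 4 * μ - 1)})
    ?_ ?_ ?_ ?_ ?_ ?_ ?_ ?_
  · refine key.mono subset_rfl (fun _ _ _ => rfl) (fun _ _ _ => rfl) ?_
    rintro i _ _ z ⟨hz, p, q, k1, k2, k3, k4, k5, k6, k7, k8⟩
    obtain ⟨k9, k10⟩ := (hsq p q).1 k1
    refine ⟨(p : ℤ) - μ, Finset.mem_image.2 ⟨p, Finset.mem_filter.2 ⟨hW _ h1 _ k9, k9, k2, k3⟩, rfl⟩,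
      (q : ℤ) - μ, Finset.mem_image.2 ⟨q, Finset.mem_filter.2 ⟨hW _ h2 _ k10, k10, k4, k5⟩, rfl⟩, ?_⟩
    simp only [hG, sub_add_cancel]
    exact ⟨k6, k7, hz, k8⟩
  · intro y hy q hq
    obtain ⟨p, rfl, k1, k2, k3⟩ := hY y hy
    obtain ⟨q, rfl, l1, l2, l3⟩ := hX q hq
    obtain ⟨m1, m2, m3, -⟩ := hchild p q ((hsq p q).2 ⟨k1, l1⟩) k2 k3 l2 l3
    simp only [hG]
    exact ⟨m1, by exact_mod_cast m2, m3⟩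
  · intro y hy q hq
    obtain ⟨p, rfl, k1, k2, k3⟩ := hY y hy
    obtain ⟨q, rfl, l1, l2, l3⟩ := hX q hq
    obtain ⟨-, -, -, m4⟩ := hchild p q ((hsq p q).2 ⟨k1, l1⟩) k2 k3 l2 l3
    simp only [hG, sub_add_cancel]
    exact m4
  · intro y hy y' hy' hlt
    obtain ⟨p, rfl, k1, k2, k3⟩ := hX y hy
    obtain ⟨p', rfl, l1, l2, l3⟩ := hX y' hy'
    have := canonical_sep h2 (by omega) k1 l1 (by omega)
    omega
  · intro y hy y' hy' hlt
    obtain ⟨p, rfl, k1, k2, k3⟩ := hY y hy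
    obtain ⟨p', rfl, l1, l2, l3⟩ := hY y' hy'
    have := canonical_sep h1 (by omega) k1 l1 (by omega)
    omega
  · intro y hy
    obtain ⟨p, rfl, k1, k2, k3⟩ := hX y hy
    omega
  · intro y hy
    obtain ⟨p, rfl, k1, k2, k3⟩ := hX y hy
    omega
  · intro y hy
    obtain ⟨p, rfl, k1, k2, k3⟩ := hY y hy
    omega
  · intro y hy
    obtain ⟨p, rfl, k1, k2, k3⟩ := hY y hy
    omega

lemma memSquare_sq {d p q : ℕ} {v : Vtx} (hd : 0 < d) : memSquare v (sq d p q) ↔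
    toZ v ∈ Rc p (p + d - 1) q (q + d - 1) := by
  simp only [memSquare, sq, Finset.mem_Icc, mem_Rc, toZ]
  omega

lemma subset_sq {d e p q p' q' : ℕ} (hd : 0 < d) (he : 0 < e)
    (h1 : (sq e p' q').1 ⊆ (sq d p q).1) (h2 : (sq e p' q').2 ⊆ (sq d p q).2) :
    p ≤ p' ∧ p' + e ≤ p + d ∧ q ≤ q' ∧ q' + e ≤ q + d := by
  simp only [sq] at h1 h2
  rw [Finset.Icc_subset_Icc_iff (by omega)] at h1 h2
  omega

lemma sq_subset {d e p q p' q' : ℕ} (h1 : p ≤ p') (h2 : p' + e ≤ p + d) (h3 : q ≤ q')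
    (h4 : q' + e ≤ q + d) :
    (sq e p' q').1 ⊆ (sq d p q).1 ∧ (sq e p' q').2 ⊆ (sq d p q).2 := by
  simp only [sq]
  exact ⟨Finset.Icc_subset_Icc h1 (by omega), Finset.Icc_subset_Icc h3 (by omega)⟩

section hierarchy

variable {ℓ η ρ : ℕ} {L : ℕ → ℕ} {Qs : ℕ → Finset SquareSpec} {f : ℕ → SquareSpec → Finset ℕ}

/-- A destination in a level-`ρ` square lies in a square of every level, and its source lies in
the colour of that square. -/
lemma mem_all_levels (hH : IsHierSquares ℓ η ρ Qs) (hf : ValidColoring ℓ ρ L Qs f) (v : Vtx)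
    (s : ℕ) (hv : ∃ Q ∈ Qs ρ, memSquare v Q) (hs : ∀ Q ∈ Qs ρ, memSquare v Q → s ∈ f ρ Q)
    (j : ℕ) : j < ρ → ∃ Q ∈ Qs (ρ - j), memSquare v Q ∧ s ∈ f (ρ - j) Q := by
  induction j with
  | zero =>
    intro _
    obtain ⟨Q, hQ, hvQ⟩ := hv
    exact ⟨Q, hQ, hvQ, hs Q hQ hvQ⟩
  | succ j ih =>
    intro hj
    obtain ⟨Q, hQ, hvQ, hsQ⟩ := ih (by omega)
    obtain ⟨Q', hQ', hsub⟩ := hH.2 (ρ - j) (by omega) (by omega) Q hQ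
    have e : ρ - j - 1 = ρ - (j + 1) := by omega
    have hcol := hf.2 (ρ - j) (by omega) (by omega) Q hQ Q' hQ' hsub
    rw [e] at hQ' hcol
    exact ⟨Q', hQ', ⟨hsub.1 hvQ.1, hsub.2 hvQ.2⟩, hcol hsQ⟩

lemma level_interval_nonempty {W lh : ℕ} {I : Finset ℕ} (h : IsLevelInterval W lh I)
    (hl : 0 < lh) : I.Nonempty := by
  obtain ⟨k, h1, rfl⟩ := h
  rw [Finset.nonempty_Icc]
  have : (k + 1) * lh = k * lh + lh := by ring
  omega

/-- Every square of every level has a linkage of its colours through its box. -/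
lemma box_all_levels (hη : 8 ≤ η) (hη4 : 4 ∣ η) (hH : IsHierSquares ℓ η ρ Qs)
    (hLpos : ∀ h, 1 ≤ h → h ≤ ρ → 0 < L h) (hf : ValidColoring ℓ ρ L Qs f)
    (K : ℕ) (x : ℕ → ℕ) (v : ℕ → Vtx) (hx : ∀ i j, i < j → j < K → x i < x j)
    (hcount : ∀ h, 1 ≤ h → h ≤ ρ → ∀ Q ∈ Qs h,
      highC K x (f h Q) ≤ lowC K x (f h Q) + η ^ (ρ - h))
    (hv : ∀ i < K, ∃ Q ∈ Qs ρ, memSquare (v i) Q)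
    (hs : ∀ i < K, ∀ Q ∈ Qs ρ, memSquare (v i) Q → x i ∈ f ρ Q) (j : ℕ) :
    j < ρ → ∀ p q μ, 4 * μ = η ^ (j + 3) → sq (4 * μ) p q ∈ Qs (ρ - j) →
      BoxLk K x (fun i => toZ (v i.toNat)) μ p q (f (ρ - j) (sq (4 * μ) p q)) := by
  induction j with
  | zero =>
    intro hj p q μ hμ hQ
    have hc := hcount ρ (by omega) le_rfl _ hQ
    have hpos : 0 < η ^ (0 + 3) := by positivity
    simp only [Nat.sub_self, pow_zero] at hc
    simp only [Nat.sub_zero]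
    refine (lk_base _ _ _ _ _ _ (by omega) (by omega) (by omega)).mono subset_rfl
      (fun _ _ _ => rfl) (fun _ _ _ => rfl) ?_
    rintro i _ _ z ⟨-, hz⟩
    rw [mem_Rc] at hz ⊢
    omega
  | succ j ih =>
    intro hj p q μ hμ hQ
    have hj' : j < ρ := by omega
    obtain ⟨ν, hν⟩ : 4 ∣ η ^ (j + 3) := dvd_pow hη4 (by omega)
    have hjpos : 0 < η ^ (j + 1) := by positivity
    have e1 : η ^ (j + 3) = η * η * η ^ (j + 1) := by ring
    have e2 : η ^ (j + 1 + 3) = η * η ^ (j + 3) := by ring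
    have e3 : 64 * η ^ (j + 1) ≤ η ^ (j + 3) := by
      rw [e1]; exact Nat.mul_le_mul_right _ (Nat.mul_le_mul hη hη)
    have e4 : 8 * η ^ (j + 3) ≤ η ^ (j + 1 + 3) := by
      rw [e2]; exact Nat.mul_le_mul_right _ hη
    have hlev : ρ - (j + 1) = ρ - j - 1 := by omega
    have hcan := hH.1 (ρ - j) (by omega) (by omega)
    have hcan' := hH.1 (ρ - (j + 1)) (by omega) (by omega)
    rw [show ρ - (ρ - j) + 3 = j + 3 by omega, hν] at hcan
    rw [show ρ - (ρ - (j + 1)) + 3 = j + 1 + 3 by omega, ← hμ] at hcan'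
    have hc := hcount (ρ - (j + 1)) (by omega) (by omega) _ hQ
    rw [show ρ - (ρ - (j + 1)) = j + 1 by omega] at hc
    set J := f (ρ - (j + 1)) (sq (4 * μ) p q) with hJ
    have hne : J.Nonempty := level_interval_nonempty (hf.1 (ρ - (j + 1)) (by omega) (by omega) _ hQ)
      (hLpos _ (by omega) (by omega))
    have hlh := lowC_le_highC K x hne
    have key := family_step (by omega) hcan (f (ρ - j)) K x (fun i => toZ (v i.toNat))
      (lowC K x J) (highC K x J) (highC K x J - lowC K x J) p (p + 4 * μ - 1) q (q + 4 * μ - 1)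
      (p - μ) (p - μ + 6 * μ - 1) (q - μ) (q - μ + 6 * μ - 1) rfl (by omega) (by omega) (by omega)
      (by omega) (by omega) (by omega) (by omega) (by omega) ?_
    · refine key.mono subset_rfl (fun _ _ _ => rfl) (fun _ _ _ => rfl) ?_
      rintro i hi1 hi2 z ⟨rfl, hz⟩
      have hiK : i.toNat < K := by
        have := highC_le K x J
        omega
      refine ⟨rfl, ?_⟩
      have hmem : memSquare (v i.toNat) (sq (4 * μ) p q) := by
        rw [memSquare_sq (by omega)]
        exact_mod_cast hz
      obtain ⟨Q', hQ', hvQ', hsQ'⟩ := mem_all_levels hH hf (v i.toNat) (x i.toNat) (hv _ hiK)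
        (hs _ hiK) j hj'
      obtain ⟨Q'', hQ'', hsub⟩ := hH.2 (ρ - j) (by omega) (by omega) Q' hQ'
      rw [← hlev] at hQ''
      obtain rfl := canonical_unique hcan' hQ'' hQ ⟨hsub.1 hvQ'.1, hsub.2 hvQ'.2⟩ hmem
      obtain ⟨p', q', -, -, -, -, rfl⟩ := canonical_sq hcan hQ'
      have hb := subset_sq (by omega) (by omega) hsub.1 hsub.2
      have h1 : ¬ i.toNat < lowC K x (f (ρ - j) (sq (4 * ν) p' q')) := fun h =>
        lt_irrefl _ ((lt_lowC_iff hx hiK).1 h _ hsQ')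
      have h2 : i.toNat < highC K x (f (ρ - j) (sq (4 * ν) p' q')) :=
        (lt_highC_iff hx hiK).2 ⟨_, hsQ', le_rfl⟩
      refine ⟨p', q', hQ', by omega, by omega, by omega, by omega, by omega, by omega, ?_⟩
      have := (memSquare_sq (by omega)).1 hvQ'
      exact_mod_cast this
    · intro p' q' hQ' k1 k2 k3 k4
      have hsub := hf.2 (ρ - j) (by omega) (by omega) _ hQ' (sq (4 * μ) p q) (hlev ▸ hQ)
        (sq_subset (by omega) (by omega) (by omega) (by omega))
      rw [← hlev, ← hJ] at hsub
      have hne' := level_interval_nonempty (hf.1 (ρ - j) (by omega) (by omega) _ hQ')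
        (hLpos _ (by omega) (by omega))
      refine ⟨by exact_mod_cast lowC_anti K x hsub, lowC_le_highC K x hne',
        by exact_mod_cast highC_mono K x hsub, ih hj' p' q' ν hν.symm hQ'⟩

end hierarchy

/-! ### Selection of pairs and distances to the boundary -/

/-- The pairs of `M` listed by increasing source. -/
lemma exists_sorted (M : Finset DPair) (hM : DistinctSources M) (hrow : ∀ m ∈ M, m.1.1 = 1) :
    ∃ g : ℕ → DPair, (∀ j < M.card, g j ∈ M) ∧
      ∀ i j, i < j → j < M.card → (g i).1.2 < (g j).1.2 := by
  classical
  have hinj : Set.InjOn (fun m : DPair => m.1.2) (M : Set DPair) := by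
    intro m hm m' hm' h
    exact hM m hm m' hm' (Prod.ext ((hrow m hm).trans (hrow m' hm').symm) h)
  have hc : (M.image (fun m : DPair => m.1.2)).card = M.card := Finset.card_image_of_injOn hinj
  let o := (M.image (fun m : DPair => m.1.2)).orderEmbOfFin hc
  have ho : ∀ j : Fin M.card, ∃ m ∈ M, m.1.2 = o j := by
    intro j
    exact Finset.mem_image.1 (Finset.orderEmbOfFin_mem _ hc j)
  choose G hG1 hG2 using ho
  refine ⟨fun j => if h : j < M.card then G ⟨j, h⟩ else ((0, 0), (0, 0)), ?_, ?_⟩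
  · intro j hj
    simp only [hj, dif_pos]
    exact hG1 _
  · intro i j hij hj
    have hi : i < M.card := hij.trans hj
    simp only [hi, hj, dif_pos, hG2]
    exact o.strictMono hij

lemma dist_vertical (ℓ r c k : ℕ) (hr : 1 ≤ r) (hrk : r + k ≤ ℓ) (hc : 1 ≤ c) (hc' : c ≤ ℓ) :
    (gridG ℓ).dist (r, c) (r + k, c) ≤ k := by
  have : ∃ p : (gridG ℓ).Walk (r, c) (r + k, c), p.length = k := by
    induction k with
    | zero => exact ⟨SimpleGraph.Walk.nil, rfl⟩
    | succ k ih =>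
      obtain ⟨p, hp⟩ := ih (by omega)
      have hadj : (gridG ℓ).Adj (r + k, c) (r + (k + 1), c) := by
        simp only [gridG, rectGrid, SimpleGraph.fromRel_adj, ne_eq, Prod.mk.injEq, true_and,
          and_true]
        omega
      exact ⟨p.concat hadj, by rw [SimpleGraph.Walk.length_concat, hp]⟩
  obtain ⟨p, hp⟩ := this
  exact (SimpleGraph.dist_le p).trans hp.le

lemma dist_horizontal (ℓ r c k : ℕ) (hr : 1 ≤ r) (hr' : r ≤ ℓ) (hc : 1 ≤ c) (hck : c + k ≤ ℓ) :
    (gridG ℓ).dist (r, c) (r, c + k) ≤ k := by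
  have : ∃ p : (gridG ℓ).Walk (r, c) (r, c + k), p.length = k := by
    induction k with
    | zero => exact ⟨SimpleGraph.Walk.nil, rfl⟩
    | succ k ih =>
      obtain ⟨p, hp⟩ := ih (by omega)
      have hadj : (gridG ℓ).Adj (r, c + k) (r, c + (k + 1)) := by
        simp only [gridG, rectGrid, SimpleGraph.fromRel_adj, ne_eq, Prod.mk.injEq, true_and]
        omega
      exact ⟨p.concat hadj, by rw [SimpleGraph.Walk.length_concat, hp]⟩
  obtain ⟨p, hp⟩ := this
  exact (SimpleGraph.dist_le p).trans hp.le

/-- A vertex at distance more than `D` from the boundary has more than `D` rows and columns on each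
side. -/
lemma far_bounds {ℓ D : ℕ} {v : Vtx} (h1 : 1 ≤ v.1) (h2 : v.1 ≤ ℓ) (h3 : 1 ≤ v.2) (h4 : v.2 ≤ ℓ)
    (hfar : ∀ w : Vtx, OnBoundary ℓ w → D < (gridG ℓ).dist v w) :
    D + 1 < v.1 ∧ v.1 + D < ℓ ∧ D + 1 < v.2 ∧ v.2 + D < ℓ := by
  obtain ⟨r, c⟩ := v
  simp only at *
  have a1 := hfar (1, c) (by simp [OnBoundary]; omega)
  have a2 := hfar (ℓ, c) (by simp [OnBoundary]; omega)
  have a3 := hfar (r, 1) (by simp [OnBoundary]; omega)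
  have a4 := hfar (r, ℓ) (by simp [OnBoundary]; omega)
  have b1 := dist_vertical ℓ 1 c (r - 1) le_rfl (by omega) h3 h4
  have b2 := dist_vertical ℓ r c (ℓ - r) h1 (by omega) h3 h4
  have b3 := dist_horizontal ℓ r 1 (c - 1) h1 h2 le_rfl (by omega)
  have b4 := dist_horizontal ℓ r c (ℓ - c) h1 h2 h3 (by omega)
  rw [SimpleGraph.dist_comm, Nat.add_sub_cancel' h1] at b1
  rw [Nat.add_sub_cancel' h2] at b2
  rw [SimpleGraph.dist_comm, Nat.add_sub_cancel' h3] at b3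
  rw [Nat.add_sub_cancel' h4] at b4
  omega

/-- Used to see that there is enough room in the top row to the right of each source. -/
lemma strictMono_gap {K : ℕ} {x : ℕ → ℕ} (hx : ∀ i j, i < j → j < K → x i < x j) (i k : ℕ) :
    i + k < K → x i + k ≤ x (i + k) := by
  induction k with
  | zero => simp
  | succ k ih =>
    intro h
    have := ih (by omega)
    have := hx (i + k) (i + (k + 1)) (by omega) h
    omega

lemma eta_bounds {ℓ η : ℕ} (hℓ : 8 < ℓ) (hη : η = 2 ^ ⌈Real.sqrt (lg (ℓ * ℓ))⌉₊) :
    8 ≤ η ∧ 4 ∣ η := by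
  have h1 : (4 : ℝ) < lg (ℓ * ℓ) := by
    unfold lg
    rw [Real.lt_logb_iff_rpow_lt (by norm_num) (by positivity)]
    have : 9 * 9 ≤ ℓ * ℓ := Nat.mul_le_mul hℓ hℓ
    have : ((9 * 9 : ℕ) : ℝ) ≤ ((ℓ * ℓ : ℕ) : ℝ) := by exact_mod_cast this
    norm_num at this ⊢
    linarith
  have h2 : 2 < ⌈Real.sqrt (lg (ℓ * ℓ))⌉₊ := by
    rw [Nat.lt_ceil]
    apply Real.lt_sqrt_of_sq_lt
    norm_num
    exact h1
  rw [hη]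
  constructor
  · calc 8 = 2 ^ 3 := by norm_num
      _ ≤ _ := Nat.pow_le_pow_right (by norm_num) h2
  · rw [show (4 : ℕ) = 2 ^ 2 by norm_num]
    exact pow_dvd_pow 2 (by omega)

end SnakeRouting


open SnakeRouting

/-- Theorem: snake-like routing of a perfect set of demand pairs. -/
theorem statement5
    (ℓ n : ℕ) (hn : n = ℓ * ℓ)
    (η ρ : ℕ) (hη : η = 2 ^ ⌈Real.sqrt (lg n)⌉₊)
    (hρ : 1 ≤ ρ) (hρ' : (ρ : ℝ) ≤ Real.sqrt (lg n))
    (hℓ : 8 * η ^ (ρ + 2) < ℓ)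
    (Qs : ℕ → Finset SquareSpec) (hH : IsHierSquares ℓ η ρ Qs)
    (hdisj : ∀ h, 1 ≤ h → h ≤ ρ → ∀ Q ∈ Qs h, (1 : ℕ) ∉ Q.1)
    (L : ℕ → ℕ)
    (hLpow : ∀ h, 1 ≤ h → h ≤ ρ → ∃ k : ℕ, L h = η ^ k)
    (hLdec : ∀ h h', 1 ≤ h → h < h' → h' ≤ ρ → L h' < L h)
    (f : ℕ → SquareSpec → Finset ℕ) (hf : ValidColoring ℓ ρ L Qs f)
    (M' : Finset DPair)
    (hperf : PerfectFor ℓ ρ η L Qs f M')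
    (hcard : M'.card ≤ η ^ (ρ + 2))
    (hsrc : ∀ m ∈ M', OnTopRow ℓ m.1)
    (hdest : ∀ m ∈ M', ∃ Q ∈ Qs ρ, memSquare m.2 Q)
    (hfar : ∀ m ∈ M', ∀ v : Vtx, OnBoundary ℓ v →
      4 * η ^ (ρ + 2) < (gridG ℓ).dist m.2 v) :
    ∃ N ⊆ M', ⌈(M'.card : ℝ) / (2 * η ^ 3)⌉₊ ≤ N.card ∧
      NodeDisjointRoutable (gridG ℓ) N := by
  subst hn
  have hη0 : 0 < η := by rw [hη]; positivity
  have hd0 : 0 < η ^ (ρ + 2) := by positivity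
  obtain ⟨hη8, hη4⟩ := eta_bounds (by omega) hη
  obtain ⟨g, hgM, hg⟩ := exists_sorted M' hperf.1 (fun m hm => (hsrc m hm).1)
  set K := ⌈(M'.card : ℝ) / (2 * η ^ 3)⌉₊ with hK
  have hKs : ∀ i < K, 2 * η ^ 3 * i < M'.card := by
    intro i hi
    rw [hK, Nat.lt_ceil, lt_div_iff₀ (by positivity)] at hi
    have : ((i * (2 * η ^ 3) : ℕ) : ℝ) < (M'.card : ℝ) := by push_cast; exact hi
    rw [mul_comm]
    exact_mod_cast this
  have hs0 : 0 < 2 * η ^ 3 := by positivity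
  have hgK : ∀ i < K, g (2 * η ^ 3 * i) ∈ M' := fun i hi => hgM _ (hKs i hi)
  have hx : ∀ i j, i < j → j < K → (g (2 * η ^ 3 * i)).1.2 < (g (2 * η ^ 3 * j)).1.2 :=
    fun i j hij hj => hg _ _ (Nat.mul_lt_mul_of_pos_left hij hs0) (hKs j hj)
  have hdpow : η ^ (ρ + 2) = η ^ 3 * η ^ (ρ - 1) := by
    rw [← pow_add]; congr 1; omega
  have hKle : K ≤ η ^ (ρ - 1) := by
    by_contra! hlt
    have h1 := hKs _ hlt
    have h2 : 0 < η ^ 3 * η ^ (ρ - 1) := by positivity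
    have h3 : 2 * η ^ 3 * η ^ (ρ - 1) = 2 * (η ^ 3 * η ^ (ρ - 1)) := by ring
    omega
  have hp0 : 0 < η ^ (ρ - 1) := by positivity
  have h512 : 512 * η ^ (ρ - 1) ≤ η ^ (ρ + 2) := by
    rw [hdpow]
    exact Nat.mul_le_mul_right _ (le_trans (by norm_num) (Nat.pow_le_pow_left hη8 3))
  have hLpos : ∀ h, 1 ≤ h → h ≤ ρ → 0 < L h := by
    intro h h1 h2
    obtain ⟨k, hk⟩ := hLpow h h1 h2
    rw [hk]; positivity
  have hcount : ∀ h, 1 ≤ h → h ≤ ρ → ∀ Q ∈ Qs h,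
      highC K (fun i => (g (2 * η ^ 3 * i)).1.2) (f h Q) ≤
        lowC K (fun i => (g (2 * η ^ 3 * i)).1.2) (f h Q) + η ^ (ρ - h) := by
    intro h h1 h2 Q hQ
    have hI := hf.1 h h1 h2 Q hQ
    have hc := hperf.2.2.2 h h1 h2 _ hI
    obtain ⟨k, -, hk⟩ := hI
    rw [hk] at hc ⊢
    refine colour_count (c := η ^ 3) hgM hg (by omega) (by positivity) hKs _ _ ?_
    rw [← pow_add, add_comm 3]
    exact hc
  set x : ℕ → ℕ := fun i => (g (2 * η ^ 3 * i)).1.2 with hxdef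
  replace hx : ∀ i j, i < j → j < K → x i < x j := hx
  set v : ℕ → Vtx := fun i => (g (2 * η ^ 3 * i)).2 with hvdef
  have hv : ∀ i < K, ∃ Q ∈ Qs ρ, memSquare (v i) Q := fun i hi => hdest _ (hgK i hi)
  have hs : ∀ i < K, ∀ Q ∈ Qs ρ, memSquare (v i) Q → x i ∈ f ρ Q :=
    fun i hi => hperf.2.2.1 _ (hgK i hi)
  obtain ⟨μ, hμ⟩ : 4 ∣ η ^ (ρ + 2) := dvd_pow hη4 (by omega)
  have hbox := box_all_levels hη8 hη4 hH hLpos hf K x v hx hcount hv hs (ρ - 1) (by omega)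
  have hlev : ρ - (ρ - 1) = 1 := by omega
  rw [hlev, show ρ - 1 + 3 = ρ + 2 by omega] at hbox
  have hcan := hH.1 1 le_rfl hρ
  rw [show ρ - 1 + 3 = ρ + 2 by omega, hμ] at hcan
  -- The window contains all level-1 squares with a destination, and the boxes of the squares in it
  -- lie in the big box, which is at distance about `2 * d₁ = 8 * μ` from the boundary.
  have hstep := family_step (by omega) hcan (f 1) K x (fun i => toZ (v i.toNat)) 0 K K
    (12 * μ + 1) (ℓ - 12 * μ) (12 * μ + 1) (ℓ - 12 * μ) (8 * μ) (ℓ - 8 * μ) (8 * μ) (ℓ - 8 * μ)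
    (by omega) (by omega) (by omega) (by omega) (by omega) (by omega) (by omega) (by omega)
    (by omega) (by
      intro p q hQ _ _ _ _
      have hne := level_interval_nonempty (hf.1 1 le_rfl hρ _ hQ) (hLpos 1 le_rfl hρ)
      exact ⟨by omega, lowC_le_highC K x hne, by exact_mod_cast highC_le K x _,
        hbox p q μ hμ.symm hQ⟩)
  have hsources := lk_sources ℓ K (8 * μ) (ℓ - 8 * μ) (8 * μ) (ℓ - 8 * μ)
    (fun i => (x i.toNat : ℤ)) (by omega) (by omega) (by omega) (by omega) (by omega) (by omega)
    (by
      intro i h1 h2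
      have := (hsrc _ (hgK i.toNat (by omega))).2.1
      exact_mod_cast this)
    (by
      intro i h1 h2
      have h3 := strictMono_gap hx i.toNat (K - 1 - i.toNat) (by omega)
      rw [show i.toNat + (K - 1 - i.toNat) = K - 1 by omega] at h3
      have h4 : x (K - 1) ≤ ℓ := (hsrc _ (hgK (K - 1) (by omega))).2.2
      omega)
    (by
      intro i j h1 h2 h3
      have := hx i.toNat j.toNat (by omega) (by omega)
      exact_mod_cast this)
  have hall := (hsources.glue hstep.symm (fun p hp => hp.2) (fun i _ _ => Or.inl ⟨rfl, Or.inr rfl⟩)).mono (R' := Rc 1 ℓ 1 ℓ) (by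
      rintro p (hp | hp)
      · exact hp.1
      · rw [mem_Rc] at hp ⊢
        omega) (fun _ _ _ => rfl) (fun _ _ _ => rfl) (fun _ _ _ => subset_rfl)
  refine ⟨(range K).image (fun i => g (2 * η ^ 3 * i)), ?_, ?_, routable_of_lk ℓ K _ _ _ _ hall ?_ ?_⟩
  · intro m hm
    obtain ⟨i, hi, rfl⟩ := Finset.mem_image.1 hm
    exact hgK i (Finset.mem_range.1 hi)
  · rw [Finset.card_image_of_injOn, Finset.card_range]
    intro i hi j hj hij
    rw [Finset.mem_coe, Finset.mem_range] at hi hj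
    have hij' : x i = x j := congrArg (fun m : DPair => m.1.2) hij
    rcases lt_trichotomy i j with h | h | h
    · have := hx i j h hj
      omega
    · exact h
    · have := hx j i h hi
      omega
  · intro i hi
    simp [SnakeRouting.toZ, hxdef, (hsrc _ (hgK i hi)).1]
  · intro i hi
    obtain ⟨Q, hQ, hvQ, hsQ⟩ := mem_all_levels hH hf (v i) (x i) (hv i hi) (hs i hi) (ρ - 1)
      (by omega)
    rw [hlev] at hQ hsQ
    obtain ⟨p, q, k1, k2, k3, k4, rfl⟩ := canonical_sq hcan hQ
    have hmem := (memSquare_sq (by omega)).1 hvQ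
    have hmem' := hmem
    simp only [mem_Rc, SnakeRouting.toZ] at hmem'
    have hb := far_bounds (v := v i) (by omega) (by omega) (by omega) (by omega)
      (hfar _ (hgK i hi))
    have h1 : ¬ i < lowC K x (f 1 (sq (4 * μ) p q)) := fun h =>
      lt_irrefl _ ((lt_lowC_iff hx hi).1 h _ hsQ)
    have h2 : i < highC K x (f 1 (sq (4 * μ) p q)) := (lt_highC_iff hx hi).2 ⟨_, hsQ, le_rfl⟩
    refine Or.inr ⟨by simp [hvdef], p, q, hQ, by omega, by omega, by omega, by omega, by omega,
      by omega, ?_⟩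
    exact_mod_cast hmem
end

section
/- Let G be the √n×√n grid with boundary Γ, let π and π' be two disjoint intervals of Γ, each contained in a single boundary edge of G, and let d > 0 be an integer. Let M' be a set of demand pairs with S(M') ⊆ π, T̃(M') ⊆ π', and d ≤ d(t,t̃) < 2d for every destination t of M'. Assume |M'| ≥ 1024·d and that all demand pairs of M' can be simultaneously routed via node-disjoint paths in G. Let z = ⌈|M'|/(160d)⌉ − 1. Then there exist a collection Σ = {σ₁,…,σ_z} of disjoint sub-intervals of π and a collection Σ' = {σ'₁,…,σ'_z} of disjoint sub-intervals of π' such that: (1) the intervals σ₁,σ₂,…,σ_z,σ'_z,…,σ'₂,σ'₁ appear on Γ in this circular order; (2) every pair of distinct intervals σ ∈ Σ∪Σ' and σ' ∈ Σ' is separated by at least 16d vertices of Γ; (3) every interval σ' ∈ Σ' contains at least 16d and at most √n/2 vertices, and lies within distance at least 16d from every boundary edge of G except the one containing π'; and (4) for each 1 ≤ i ≤ z, there exists a set of node-disjoint paths in G routing at least d demand pairs of M'_{σ_i,σ'_i}. -/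
/-!
Fix node-disjoint paths `P_p` routing the pairs `p ∈ M'`, and cut the circle `Γ` open at the
clockwise end of `π'`, so that `π'` becomes a final segment and every source precedes every `t̃`.
A destination `t` is joined to `t̃` by a straight column of at most `2d` vertices, which meets at
most `2d` of the disjoint paths. Say that `p` conflicts with `q` if `P_q` meets the column of `p`.

* Planarity (`noncrossing_lpos`). If `p` and `q` do not conflict in either direction, prolonging
  `P_p` and `P_q` by their columns gives disjoint walks between boundary vertices, so the order of
  the `t̃` is opposite to that of the sources. The discrete Jordan-type fact behind this
  (`noncrossing`) is proved by counting signed crossings of one walk with a horizontal ray issuing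
  from a vertex of the other: after a correction depending on the endpoints of the first walk, the
  count does not change along the second walk, and on the boundary it can be read off from the
  clockwise positions.
* Density (`Frame.walk_meets_rim`, `Frame.card_rim_le`). If a segment of `L` boundary vertices lies
  between two of the `t̃`, then at most `L + 4d` pairs have `t̃` in it: their paths enter the
  `L × 2d` rectangle resting on the segment from outside, through its rim.
* Combinatorics (`exists_windows`). Cut `M'` by source order into `z` consecutive groups of `160d`
  pairs and remove from each group the `5d` pairs with lowest and the `5d` with highest `t̃`. Any two
  sets of `5d` pairs contain a non-conflicting couple, since there are at most `20d² < 25d²`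
  conflicts between them; hence the ranges of `t̃` of the remaining `150d` pairs of the various
  groups are disjoint and ordered as required. By the density bound, trimming each range by `16d` at
  both ends costs at most `40d` pairs, and one half of what is left carries at least `55d` pairs,
  so it has at least `16d` vertices. These halves are the `σ'ᵢ`; the `σᵢ` are the spans of the
  sources of the surviving pairs.
-/

open Finset

/-- Perimeter (number of boundary vertices) of the m×m grid. -/
def perim (m : ℕ) : ℕ := 4 * (m - 1)

/-- Clockwise position of a boundary vertex of the m×m grid, starting at the top-left
corner `(1,1)` (top row left→right, right column top→bottom, bottom row right→left,
left column bottom→top). -/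
def bpos (m : ℕ) (v : Vtx) : ℕ :=
  if v.1 = 1 then v.2 - 1
  else if v.2 = m then (m - 1) + (v.1 - 1)
  else if v.1 = m then 2 * (m - 1) + (m - v.2)
  else 3 * (m - 1) + (m - v.1)

/-- The `k`-th boundary vertex of the m×m grid in clockwise order. -/
def bvert (m k : ℕ) : Vtx :=
  if k < m - 1 then (1, k + 1)
  else if k < 2 * (m - 1) then (k - (m - 1) + 1, m)
  else if k < 3 * (m - 1) then (m, m - (k - 2 * (m - 1)))
  else (m - (k - 3 * (m - 1)), 1)

/-- `S` is an interval (sub-path) of the boundary of the m×m grid. -/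
def IsBInterval (m : ℕ) (S : Finset Vtx) : Prop :=
  ∃ a len : ℕ, 0 < len ∧ len ≤ perim m ∧
    S = (Finset.range len).image (fun i => bvert m ((a + i) % perim m))

def topEdge (m : ℕ) : Finset Vtx := (Finset.Icc 1 m).image (fun j => (1, j))
def bottomEdge (m : ℕ) : Finset Vtx := (Finset.Icc 1 m).image (fun j => (m, j))
def leftEdge (m : ℕ) : Finset Vtx := (Finset.Icc 1 m).image (fun i => (i, 1))
def rightEdge (m : ℕ) : Finset Vtx := (Finset.Icc 1 m).image (fun i => (i, m))

def boundaryEdges (m : ℕ) : List (Finset Vtx) :=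
  [topEdge m, bottomEdge m, leftEdge m, rightEdge m]

/-- Circular gap (number of boundary positions) between two boundary vertices. -/
def cgap (m : ℕ) (u v : Vtx) : ℕ :=
  min ((bpos m u + perim m - bpos m v) % perim m)
      ((bpos m v + perim m - bpos m u) % perim m)

/-- All vertices of `A` come before all vertices of `B` in the clockwise order on the
boundary, linearized starting from position `r`. -/
def OrdBefore (m r : ℕ) (A B : Finset Vtx) : Prop :=
  ∀ u ∈ A, ∀ v ∈ B, (bpos m u + r) % perim m < (bpos m v + r) % perim m

/-! ### Boundary positions -/

/-- `v` is a vertex of the m×m grid. -/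
def InGrid (m : ℕ) (v : Vtx) : Prop := 1 ≤ v.1 ∧ v.1 ≤ m ∧ 1 ≤ v.2 ∧ v.2 ≤ m

theorem OnBoundary.inGrid {m : ℕ} {v : Vtx} (h : OnBoundary m v) : InGrid m v :=
  ⟨h.1, h.2.1, h.2.2.1, h.2.2.2.1⟩

theorem bpos_lt {m : ℕ} (hm : 2 ≤ m) {v : Vtx} (h : OnBoundary m v) : bpos m v < perim m := by
  obtain ⟨h1, h2, h3, h4, h5⟩ := h
  unfold bpos perim
  split_ifs <;> omega

theorem bvert_bpos {m : ℕ} (hm : 2 ≤ m) {v : Vtx} (h : OnBoundary m v) :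
    bvert m (bpos m v) = v := by
  obtain ⟨h1, h2, h3, h4, h5⟩ := h
  obtain ⟨i, j⟩ := v
  unfold bpos bvert
  simp only at *
  split_ifs <;> simp only [Prod.mk.injEq] <;> omega

theorem onBoundary_bvert {m : ℕ} (hm : 2 ≤ m) {k : ℕ} (h : k < perim m) :
    OnBoundary m (bvert m k) := by
  unfold perim at h
  unfold bvert
  split_ifs <;> refine ⟨?_, ?_, ?_, ?_, ?_⟩ <;> dsimp only <;> omega

theorem bpos_bvert {m : ℕ} (hm : 2 ≤ m) {k : ℕ} (h : k < perim m) :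
    bpos m (bvert m k) = k := by
  unfold perim at h
  unfold bvert
  split_ifs <;> unfold bpos <;> dsimp only <;> split_ifs <;> omega

/-- Clockwise position of a boundary vertex in the linearization of `Γ` with shift `r`. -/
def lpos (m r : ℕ) (v : Vtx) : ℕ := (bpos m v + r) % perim m

theorem perim_pos {m : ℕ} (hm : 2 ≤ m) : 0 < perim m := by unfold perim; omega

theorem lpos_lt {m : ℕ} (hm : 2 ≤ m) (r : ℕ) (v : Vtx) : lpos m r v < perim m :=
  Nat.mod_lt _ (perim_pos hm)

theorem lpos_bvert {m : ℕ} (hm : 2 ≤ m) (r k : ℕ) :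
    lpos m r (bvert m (k % perim m)) = (k + r) % perim m := by
  unfold lpos
  rw [bpos_bvert hm (Nat.mod_lt _ (perim_pos hm)), Nat.mod_add_mod]

theorem lpos_inj {m : ℕ} (hm : 2 ≤ m) {r : ℕ} {u v : Vtx} (hu : OnBoundary m u)
    (hv : OnBoundary m v) (h : lpos m r u = lpos m r v) : u = v := by
  have h1 : bpos m u ≡ bpos m v [MOD perim m] := Nat.ModEq.add_right_cancel' r h
  have h2 := Nat.ModEq.eq_of_lt_of_lt h1 (bpos_lt hm hu) (bpos_lt hm hv)
  rw [← bvert_bpos hm hu, h2, bvert_bpos hm hv]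

/-- The boundary vertices at linearized positions `lo, …, lo + len - 1`. -/
def arc (m r lo len : ℕ) : Finset Vtx :=
  (Finset.range len).image (fun i => bvert m ((lo + r * (perim m - 1) + i) % perim m))

theorem lpos_arc {m : ℕ} (hm : 2 ≤ m) (r lo i : ℕ) (h : lo + i < perim m) :
    lpos m r (bvert m ((lo + r * (perim m - 1) + i) % perim m)) = lo + i := by
  rw [lpos_bvert hm]
  have hp := perim_pos hm
  obtain ⟨p, hp'⟩ : ∃ p, perim m = p + 1 := ⟨perim m - 1, by omega⟩
  have : lo + r * (perim m - 1) + i + r = lo + i + r * perim m := by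
    rw [hp', Nat.add_sub_cancel]; ring
  rw [this, Nat.add_mul_mod_self_right, Nat.mod_eq_of_lt h]

theorem mem_arc {m : ℕ} (hm : 2 ≤ m) {r lo len : ℕ} (h : lo + len ≤ perim m) {v : Vtx} :
    v ∈ arc m r lo len ↔ OnBoundary m v ∧ lo ≤ lpos m r v ∧ lpos m r v < lo + len := by
  unfold arc
  simp only [Finset.mem_image, Finset.mem_range]
  constructor
  · rintro ⟨i, hi, rfl⟩
    rw [lpos_arc hm r lo i (by omega)]
    exact ⟨onBoundary_bvert hm (Nat.mod_lt _ (perim_pos hm)), by omega, by omega⟩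
  · rintro ⟨h1, h2, h3⟩
    refine ⟨lpos m r v - lo, by omega, ?_⟩
    refine lpos_inj hm (r := r) (onBoundary_bvert hm (Nat.mod_lt _ (perim_pos hm))) h1 ?_
    rw [lpos_arc hm r lo _ (by have := lpos_lt hm r v; omega)]
    omega

theorem isBInterval_arc {m r lo len : ℕ} (h0 : 0 < len) (h : lo + len ≤ perim m) :
    IsBInterval m (arc m r lo len) :=
  ⟨lo + r * (perim m - 1), len, h0, by omega, rfl⟩

theorem card_arc {m : ℕ} (hm : 2 ≤ m) {r lo len : ℕ} (h : lo + len ≤ perim m) :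
    (arc m r lo len).card = len := by
  unfold arc
  rw [Finset.card_image_of_injOn, Finset.card_range]
  intro i hi j hj hij
  simp only [Finset.coe_range, Set.mem_Iio] at hi hj
  have := congrArg (lpos m r) hij
  simp only at this
  rw [lpos_arc hm r lo i (by omega), lpos_arc hm r lo j (by omega)] at this
  omega

/-- Linearizing `Γ` at the clockwise end of a boundary interval turns it into a final segment. -/
theorem IsBInterval.exists_shift {m : ℕ} (hm : 2 ≤ m) {S : Finset Vtx} (h : IsBInterval m S) :
    ∃ r len, 0 < len ∧ len ≤ perim m ∧ S = arc m r (perim m - len) len := by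
  obtain ⟨a, len, h0, h1, rfl⟩ := h
  have hp := perim_pos hm
  have ha := Nat.mod_lt a hp
  refine ⟨2 * perim m - a % perim m - len, len, h0, h1, ?_⟩
  have hb : ∀ k, OnBoundary m (bvert m (k % perim m)) :=
    fun k => onBoundary_bvert hm (Nat.mod_lt _ hp)
  refine Finset.image_congr ?_
  intro i hi
  simp only [Finset.coe_range, Set.mem_Iio] at hi
  refine lpos_inj hm (r := 2 * perim m - a % perim m - len) (hb _) (hb _) ?_
  rw [lpos_arc hm _ _ i (by omega), lpos_bvert hm]
  have h2 : a = perim m * (a / perim m) + a % perim m := (Nat.div_add_mod a (perim m)).symm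
  have h3 : a + i + (2 * perim m - a % perim m - len) =
      (perim m - len + i) + perim m * (a / perim m + 1) := by
    rw [Nat.mul_add]; omega
  rw [h3, Nat.add_mul_mod_self_left, Nat.mod_eq_of_lt (by omega)]

/-- A boundary interval missing the last position of the linearization does not wrap around. -/
theorem IsBInterval.eq_arc {m : ℕ} (hm : 2 ≤ m) {S : Finset Vtx} (h : IsBInterval m S) (r : ℕ)
    (hlast : ∀ v ∈ S, lpos m r v ≠ perim m - 1) :
    ∃ lo len, lo + len ≤ perim m ∧ S = arc m r lo len := by
  obtain ⟨a, len, h0, h1, rfl⟩ := h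
  have hp := perim_pos hm
  have hlt := Nat.mod_lt (a + r) hp
  have hb : ∀ k, OnBoundary m (bvert m (k % perim m)) :=
    fun k => onBoundary_bvert hm (Nat.mod_lt _ hp)
  have h2 : a + r = perim m * ((a + r) / perim m) + (a + r) % perim m :=
    (Nat.div_add_mod _ (perim m)).symm
  have h3 : ∀ i, (a + r) % perim m + i < perim m →
      lpos m r (bvert m ((a + i) % perim m)) = (a + r) % perim m + i := by
    intro i hi
    rw [lpos_bvert hm]
    have : a + i + r = ((a + r) % perim m + i) + perim m * ((a + r) / perim m) := by omega
    rw [this, Nat.add_mul_mod_self_left, Nat.mod_eq_of_lt hi]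
  have hle : (a + r) % perim m + len ≤ perim m := by
    by_contra hcon
    have h4 := h3 (perim m - 1 - (a + r) % perim m) (by omega)
    refine hlast _ (Finset.mem_image.2 ⟨_, Finset.mem_range.2 (by omega), rfl⟩) (h4.trans ?_)
    omega
  refine ⟨(a + r) % perim m, len, hle, ?_⟩
  refine Finset.image_congr ?_
  intro i hi
  simp only [Finset.coe_range, Set.mem_Iio] at hi
  refine lpos_inj hm (r := r) (hb _) (hb _) ?_
  rw [lpos_arc hm _ _ i (by omega), h3 i (by omega)]

/-- A lower bound on the circular gap from linearized positions: both arcs between `u` and `v` must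
be longer than `k`. -/
theorem lt_cgap {m : ℕ} (hm : 2 ≤ m) {r k : ℕ} {u v : Vtx} (hu : OnBoundary m u)
    (hv : OnBoundary m v) (h1 : lpos m r u + k < lpos m r v)
    (h2 : lpos m r v + k < lpos m r u + perim m) : k < cgap m u v := by
  have hp := perim_pos hm
  have hbu := bpos_lt hm hu
  have hbv := bpos_lt hm hv
  unfold lpos at h1 h2
  unfold cgap
  have e1 := Nat.div_add_mod (bpos m u + r) (perim m)
  have e2 := Nat.div_add_mod (bpos m v + r) (perim m)
  have l1 := Nat.mod_lt (bpos m u + r) hp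
  have l2 := Nat.mod_lt (bpos m v + r) hp
  generalize (bpos m u + r) % perim m = A at *
  generalize (bpos m v + r) % perim m = B at *
  generalize (bpos m u + r) / perim m = s at *
  generalize (bpos m v + r) / perim m = t at *
  generalize perim m = p at *
  have hst : s = t ∨ s = t + 1 ∨ t = s + 1 := by
    rcases lt_trichotomy s t with h | h | h
    · right; right
      by_contra hne
      have : p * (s + 2) ≤ p * t := Nat.mul_le_mul_left _ (by omega)
      rw [Nat.mul_add] at this
      omega
    · exact Or.inl h
    · right; left
      by_contra hne
      have : p * (t + 2) ≤ p * s := Nat.mul_le_mul_left _ (by omega)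
      rw [Nat.mul_add] at this
      omega
  have hmod : ∀ a b : ℕ, a < p → b < p → (a + p - b) % p = if b ≤ a then a - b else a + p - b := by
    intro a b ha hb
    split_ifs with h
    · rw [show a + p - b = (a - b) + p by omega, Nat.add_mod_right, Nat.mod_eq_of_lt (by omega)]
    · rw [Nat.mod_eq_of_lt (by omega)]
  rw [hmod _ _ hbu hbv, hmod _ _ hbv hbu, lt_min_iff]
  rcases hst with rfl | rfl | rfl
  · split_ifs <;> omega
  · rw [Nat.mul_add] at e1; split_ifs <;> omega
  · rw [Nat.mul_add] at e2; split_ifs <;> omega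

theorem cgap_comm (m : ℕ) (u v : Vtx) : cgap m u v = cgap m v u := min_comm _ _

/-! ### Planarity of the grid -/

theorem gridG_adj {m : ℕ} {u v : Vtx} : (gridG m).Adj u v ↔ InGrid m u ∧ InGrid m v ∧
    ((u.1 = v.1 ∧ (u.2 + 1 = v.2 ∨ v.2 + 1 = u.2)) ∨
     (u.2 = v.2 ∧ (u.1 + 1 = v.1 ∨ v.1 + 1 = u.1))) := by
  obtain ⟨a, b⟩ := u
  obtain ⟨a', b'⟩ := v
  simp only [gridG, rectGrid, SimpleGraph.fromRel_adj, InGrid, ne_eq, Prod.mk.injEq]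
  omega

/-- The sum of `f u v` over the steps `u → v` of a walk. -/
def walkSum {V : Type*} {G : SimpleGraph V} (f : V → V → ℤ) : ∀ {a c : V}, G.Walk a c → ℤ
  | _, _, .nil => 0
  | _, _, .cons (u := u) (v := v) _ p => f u v + walkSum f p

/-- If the step weights of `f` and `f'` differ by the increments of a potential `g`, their sums along
a walk differ by the increment of `g` between its ends. -/
theorem walkSum_sub {V : Type*} {G : SimpleGraph V} (f f' : V → V → ℤ) (g : V → ℤ)
    {a c : V} (P : G.Walk a c)
    (h : ∀ u ∈ P.support, ∀ v ∈ P.support, G.Adj u v → f u v - f' u v = g v - g u) :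
    walkSum f P - walkSum f' P = g c - g a := by
  induction P with
  | nil => simp [walkSum]
  | cons hadj p ih =>
    have h1 := ih (fun u hu v hv => h u (by simp [hu]) v (by simp [hv]))
    have h2 := h _ (by simp) _ (by simp) hadj
    simp only [walkSum]
    linarith

theorem walkSum_eq {V : Type*} {G : SimpleGraph V} (f : V → V → ℤ) (g : V → ℤ)
    {a c : V} (P : G.Walk a c)
    (h : ∀ u ∈ P.support, ∀ v ∈ P.support, G.Adj u v → f u v = g v - g u) :
    walkSum f P = g c - g a := by
  have h0 : ∀ {a c : V} (P : G.Walk a c), walkSum (fun _ _ => 0) P = 0 := by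
    intro a c P
    induction P with
    | nil => rfl
    | cons _ _ ih => simp [walkSum, ih]
  have := walkSum_sub f (fun _ _ => 0) g P (by simpa using h)
  rw [h0] at this
  linarith

/-- The signed crossing of the step `u → v` with the horizontal ray running from `q + (1/2, 1/2)`
towards larger columns: `1` for a step from row `q.1` to row `q.1 + 1`, `-1` for its reverse. -/
def rayCross (q u v : Vtx) : ℤ :=
  if u.1 = q.1 ∧ v.1 = q.1 + 1 ∧ q.2 < u.2 then 1
  else if u.1 = q.1 + 1 ∧ v.1 = q.1 ∧ q.2 < u.2 then -1
  else 0

/-- The correction that a boundary endpoint `c` of a walk contributes to make the total crossing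
number with the ray from `q` locally constant in `q`. -/
def endCorr (m : ℕ) (c q : Vtx) : ℤ :=
  if c.2 = m then (if q.1 < c.1 then 1 else 0)
  else if c.1 = m then (if q.1 = m ∧ q.2 < c.2 then -1 else 0)
  else 0

/-- Off the walk `P`, the corrected crossing number of `P` with the ray from `q` is locally constant
in `q`. -/
theorem crossing_step {m : ℕ} {a c : Vtx} (P : (gridG m).Walk a c)
    (ha : OnBoundary m a) (hc : OnBoundary m c) {q q' : Vtx} (hq : q ∉ P.support)
    (hq' : q' ∉ P.support) (hadj : (gridG m).Adj q q') :
    walkSum (rayCross q) P - endCorr m c q + endCorr m a q =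
      walkSum (rayCross q') P - endCorr m c q' + endCorr m a q' := by
  have hca : c ≠ q ∧ c ≠ q' ∧ a ≠ q ∧ a ≠ q' :=
    ⟨fun h => hq (h ▸ P.end_mem_support), fun h => hq' (h ▸ P.end_mem_support),
      fun h => hq (h ▸ P.start_mem_support), fun h => hq' (h ▸ P.start_mem_support)⟩
  -- it suffices to treat steps to the right and downwards
  wlog hdir : (q.1 = q'.1 ∧ q.2 + 1 = q'.2) ∨ (q.2 = q'.2 ∧ q.1 + 1 = q'.1) generalizing q q'
  · refine (this hq' hq hadj.symm ⟨hca.2.1, hca.1, hca.2.2.2, hca.2.2.1⟩ ?_).symm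
    have := (gridG_adj.1 hadj).2.2
    omega
  obtain ⟨gq, gq', -⟩ := gridG_adj.1 hadj
  obtain ⟨h1, h2, h3, h4⟩ := hca
  obtain ⟨q1, q2⟩ := q
  obtain ⟨q1', q2'⟩ := q'
  obtain ⟨c1, c2⟩ := c
  obtain ⟨a1, a2⟩ := a
  simp only [InGrid, OnBoundary, ne_eq, Prod.mk.injEq] at *
  rcases hdir with ⟨rfl, rfl⟩ | ⟨rfl, rfl⟩
  · have hs := walkSum_sub (rayCross (q1, q2)) (rayCross (q1, q2 + 1)) (fun _ => 0) P ?_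
    · have e1 : endCorr m (c1, c2) (q1, q2) = endCorr m (c1, c2) (q1, q2 + 1) := by
        simp only [endCorr]; split_ifs <;> omega
      have e2 : endCorr m (a1, a2) (q1, q2) = endCorr m (a1, a2) (q1, q2 + 1) := by
        simp only [endCorr]; split_ifs <;> omega
      rw [e1, e2]
      linarith
    · rintro ⟨u1, u2⟩ hu ⟨v1, v2⟩ hv huv
      have hu' : ¬ (u1 = q1 ∧ u2 = q2 + 1) := by rintro ⟨rfl, rfl⟩; exact hq' hu
      have hv' : ¬ (v1 = q1 ∧ v2 = q2 + 1) := by rintro ⟨rfl, rfl⟩; exact hq' hv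
      have := (gridG_adj.1 huv).2.2
      simp only [rayCross] at this ⊢
      split_ifs <;> omega
  · have hs := walkSum_sub (rayCross (q1, q2)) (rayCross (q1 + 1, q2))
      (fun u => if u.1 = q1 + 1 ∧ q2 < u.2 then 1 else 0) P ?_
    · have e1 : endCorr m (c1, c2) (q1, q2) - endCorr m (c1, c2) (q1 + 1, q2) =
          if c1 = q1 + 1 ∧ q2 < c2 then 1 else 0 := by
        simp only [endCorr]; split_ifs <;> omega
      have e2 : endCorr m (a1, a2) (q1, q2) - endCorr m (a1, a2) (q1 + 1, q2) =
          if a1 = q1 + 1 ∧ q2 < a2 then 1 else 0 := by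
        simp only [endCorr]; split_ifs <;> omega
      simp only at hs
      linarith
    · rintro ⟨u1, u2⟩ hu ⟨v1, v2⟩ hv huv
      have hu' : ¬ (u1 = q1 + 1 ∧ u2 = q2) := by rintro ⟨rfl, rfl⟩; exact hq' hu
      have hv' : ¬ (v1 = q1 + 1 ∧ v2 = q2) := by rintro ⟨rfl, rfl⟩; exact hq' hv
      have := (gridG_adj.1 huv).2.2
      simp only [rayCross] at this ⊢
      split_ifs <;> omega

/-- The contribution of a boundary endpoint `c` of a walk to its crossing number with the ray from
a boundary vertex `q`. -/
def endCross (m : ℕ) (c q : Vtx) : ℤ :=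
  if q.1 = 1 then (if c.1 = 1 ∧ q.2 < c.2 then -1 else 0)
  else if q.2 = m then 0
  else if q.1 = m then 0
  else (if q.1 < c.1 then 1 else 0)

theorem walkSum_boundary {m : ℕ} {a c : Vtx} (P : (gridG m).Walk a c)
    {q : Vtx} (hq : q ∉ P.support) (hb : OnBoundary m q) :
    walkSum (rayCross q) P = endCross m c q - endCross m a q := by
  refine walkSum_eq _ (fun u => endCross m u q) P ?_
  obtain ⟨q1, q2⟩ := q
  rintro ⟨u1, u2⟩ hu ⟨v1, v2⟩ hv huv
  have hu' : ¬ (u1 = q1 ∧ u2 = q2) := by rintro ⟨rfl, rfl⟩; exact hq hu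
  have hv' : ¬ (v1 = q1 ∧ v2 = q2) := by rintro ⟨rfl, rfl⟩; exact hq hv
  have := gridG_adj.1 huv
  simp only [rayCross, endCross, InGrid, OnBoundary] at this hb ⊢
  split_ifs <;> omega

/-- Up to a constant depending on `c` only, the endpoint `c` contributes to the corrected crossing
number at a boundary vertex `q` according to the clockwise order of `q` and `c`. -/
theorem endCross_sub_endCorr {m : ℕ} {c q : Vtx} (hc : OnBoundary m c) (hq : OnBoundary m q)
    (hne : c ≠ q) : endCross m c q - endCorr m c q =
      (if c.1 = 1 ∨ c.2 = m then 0 else 1) - (if bpos m q < bpos m c then 1 else 0) := by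
  obtain ⟨c1, c2⟩ := c
  obtain ⟨q1, q2⟩ := q
  simp only [OnBoundary, ne_eq, Prod.mk.injEq, endCross, endCorr, bpos] at *
  split_ifs <;> omega

/-- Disjoint walks `a → c` and `b → d` between boundary vertices do not cross: the condition says
that `b` and `d` lie on the same side of the chord `a c`. -/
theorem noncrossing {m : ℕ} {a c b d : Vtx} (P : (gridG m).Walk a c) (Q : (gridG m).Walk b d)
    (ha : OnBoundary m a) (hc : OnBoundary m c) (hb : OnBoundary m b) (hd : OnBoundary m d)
    (hdisj : ∀ x ∈ P.support, x ∉ Q.support) :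
    ((if bpos m b < bpos m c then 1 else 0) - (if bpos m b < bpos m a then 1 else 0) : ℤ) =
      (if bpos m d < bpos m c then 1 else 0) - (if bpos m d < bpos m a then 1 else 0) := by
  have hconst : ∀ {b d : Vtx} (Q : (gridG m).Walk b d), (∀ x ∈ Q.support, x ∉ P.support) →
      walkSum (rayCross b) P - endCorr m c b + endCorr m a b =
        walkSum (rayCross d) P - endCorr m c d + endCorr m a d := by
    intro b d Q
    induction Q with
    | nil => intro _; rfl
    | cons hadj p ih =>
      intro h
      rw [crossing_step P ha hc (h _ (by simp)) (h _ (by simp)) hadj]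
      exact ih (fun x hx => h x (by simp [hx]))
  have hQ : ∀ x ∈ Q.support, x ∉ P.support := fun x hx hx' => hdisj x hx' hx
  have h0 := hconst Q hQ
  have hbP := hQ b Q.start_mem_support
  have hdP := hQ d Q.end_mem_support
  rw [walkSum_boundary P hbP hb, walkSum_boundary P hdP hd] at h0
  have ne : ∀ {x y : Vtx}, x ∈ P.support → y ∉ P.support → x ≠ y :=
    fun hx hy h => hy (h ▸ hx)
  have e1 := endCross_sub_endCorr hc hb (ne P.end_mem_support hbP)
  have e2 := endCross_sub_endCorr ha hb (ne P.start_mem_support hbP)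
  have e3 := endCross_sub_endCorr hc hd (ne P.end_mem_support hdP)
  have e4 := endCross_sub_endCorr ha hd (ne P.start_mem_support hdP)
  linarith

/-- Disjoint walks between boundary vertices: in any linearization of `Γ`, if both sources precede
both ends, then the ends appear in the order opposite to that of the sources. -/
theorem noncrossing_lpos {m : ℕ} (hm : 2 ≤ m) {r : ℕ} {a c b d : Vtx} (P : (gridG m).Walk a c)
    (Q : (gridG m).Walk b d)
    (ha : OnBoundary m a) (hc : OnBoundary m c) (hb : OnBoundary m b) (hd : OnBoundary m d)
    (hdisj : ∀ x ∈ P.support, x ∉ Q.support)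
    (h1 : lpos m r a < lpos m r b) (h2 : lpos m r b < lpos m r c) (h3 : lpos m r b < lpos m r d) :
    lpos m r d < lpos m r c := by
  have hcd : lpos m r c ≠ lpos m r d := by
    intro h
    have := lpos_inj hm hc hd h
    exact hdisj c P.end_mem_support (this ▸ Q.end_mem_support)
  by_contra hcon
  have key := noncrossing P Q ha hc hb hd hdisj
  have hp := perim_pos hm
  -- reduce the shift modulo the perimeter
  have hr := Nat.mod_lt r hp
  have hl : ∀ v, OnBoundary m v → lpos m r v =
      if bpos m v + r % perim m < perim m then bpos m v + r % perim m
      else bpos m v + r % perim m - perim m := by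
    intro v hv
    have := bpos_lt hm hv
    unfold lpos
    rw [← Nat.add_mod_mod]
    split_ifs with h
    · exact Nat.mod_eq_of_lt h
    · rw [Nat.mod_eq_sub_mod (by omega), Nat.mod_eq_of_lt (by omega)]
  rw [hl a ha, hl b hb] at h1
  rw [hl b hb, hl c hc] at h2
  rw [hl c hc, hl d hd] at hcon hcd
  have := bpos_lt hm ha
  have := bpos_lt hm hb
  have := bpos_lt hm hc
  have := bpos_lt hm hd
  clear hl h3
  generalize r % perim m = s at *
  generalize perim m = p at *
  generalize bpos m a = a' at *
  generalize bpos m b = b' at *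
  generalize bpos m c = c' at *
  generalize bpos m d = d' at *
  split_ifs at * <;> omega

/-! ### Coordinates adapted to a boundary edge -/

/-- Coordinates on the grid adapted to the boundary edge `e`: `D` is the distance to `e`, and `Y`
runs clockwise along `e` from `1` to `m`; the clockwise position of a vertex of `e` is `c + Y`
modulo the perimeter. -/
structure Frame (m : ℕ) (e : Finset Vtx) where
  Y : Vtx → ℕ
  D : Vtx → ℕ
  c : ℕ
  bounds : ∀ v, InGrid m v → 1 ≤ Y v ∧ Y v ≤ m ∧ D v + 1 ≤ m
  inj : ∀ u v, InGrid m u → InGrid m v → Y u = Y v → D u = D v → u = v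
  surj : ∀ y δ, 1 ≤ y → y ≤ m → δ + 1 ≤ m → ∃ v, InGrid m v ∧ Y v = y ∧ D v = δ
  adj : ∀ u v, InGrid m u → InGrid m v → ((gridG m).Adj u v ↔
    (D u = D v ∧ (Y u + 1 = Y v ∨ Y v + 1 = Y u)) ∨ (Y u = Y v ∧ (D u + 1 = D v ∨ D v + 1 = D u)))
  mem_edge : ∀ v, v ∈ e ↔ InGrid m v ∧ D v = 0
  boundary : ∀ v, InGrid m v → (OnBoundary m v ↔ (D v = 0 ∨ D v + 1 = m ∨ Y v = 1 ∨ Y v = m))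
  other : ∀ e' ∈ boundaryEdges m, e' ≠ e → ∀ u ∈ e',
    InGrid m u ∧ (D u + 1 = m ∨ Y u = 1 ∨ Y u = m)
  pos : ∀ v ∈ e, bpos m v % perim m = (c + Y v) % perim m

theorem mem_topEdge {m : ℕ} {v : Vtx} : v ∈ topEdge m ↔ v.1 = 1 ∧ 1 ≤ v.2 ∧ v.2 ≤ m := by
  obtain ⟨a, b⟩ := v
  simp only [topEdge, Finset.mem_image, Finset.mem_Icc, Prod.mk.injEq]
  exact ⟨fun ⟨j, h1, h2, h3⟩ => by omega, fun h => ⟨b, by omega⟩⟩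

theorem mem_bottomEdge {m : ℕ} {v : Vtx} : v ∈ bottomEdge m ↔ v.1 = m ∧ 1 ≤ v.2 ∧ v.2 ≤ m := by
  obtain ⟨a, b⟩ := v
  simp only [bottomEdge, Finset.mem_image, Finset.mem_Icc, Prod.mk.injEq]
  exact ⟨fun ⟨j, h1, h2, h3⟩ => by omega, fun h => ⟨b, by omega⟩⟩

theorem mem_leftEdge {m : ℕ} {v : Vtx} : v ∈ leftEdge m ↔ v.2 = 1 ∧ 1 ≤ v.1 ∧ v.1 ≤ m := by
  obtain ⟨a, b⟩ := v
  simp only [leftEdge, Finset.mem_image, Finset.mem_Icc, Prod.mk.injEq]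
  exact ⟨fun ⟨j, h1, h2, h3⟩ => by omega, fun h => ⟨a, by omega⟩⟩

theorem mem_rightEdge {m : ℕ} {v : Vtx} : v ∈ rightEdge m ↔ v.2 = m ∧ 1 ≤ v.1 ∧ v.1 ≤ m := by
  obtain ⟨a, b⟩ := v
  simp only [rightEdge, Finset.mem_image, Finset.mem_Icc, Prod.mk.injEq]
  exact ⟨fun ⟨j, h1, h2, h3⟩ => by omega, fun h => ⟨a, by omega⟩⟩

theorem card_edge_le {m : ℕ} {e : Finset Vtx} (he : e ∈ boundaryEdges m) : e.card ≤ m := by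
  simp only [boundaryEdges, List.mem_cons, List.not_mem_nil, or_false] at he
  rcases he with rfl | rfl | rfl | rfl <;>
    exact Finset.card_image_le.trans (by simp)

theorem edge_cases {m : ℕ} {P : Finset Vtx → Prop} (h1 : P (topEdge m)) (h2 : P (bottomEdge m))
    (h3 : P (leftEdge m)) (h4 : P (rightEdge m)) : ∀ e ∈ boundaryEdges m, P e := by
  intro e he
  simp only [boundaryEdges, List.mem_cons, List.not_mem_nil, or_false] at he
  rcases he with rfl | rfl | rfl | rfl <;> assumption

theorem exists_frame {m : ℕ} (hm : 2 ≤ m) :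
    ∀ e ∈ boundaryEdges m, Nonempty (Frame m e) := by
  refine edge_cases ⟨?_⟩ ⟨?_⟩ ⟨?_⟩ ⟨?_⟩
  · refine ⟨fun v => v.2, fun v => v.1 - 1, perim m - 1, ?_, ?_, ?_, ?_, ?_, ?_, ?_, ?_⟩
    · unfold InGrid; intros; omega
    · unfold InGrid; intros; ext <;> omega
    · intro y δ _ _ _; exact ⟨(δ + 1, y), by unfold InGrid; dsimp only; omega⟩
    · intro u v hu hv; rw [gridG_adj]; simp only [hu, hv, true_and]; unfold InGrid at hu hv; omega
    · intro v; rw [mem_topEdge]; unfold InGrid; omega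
    · unfold OnBoundary InGrid; intros; omega
    · refine edge_cases ?_ ?_ ?_ ?_ <;> intro hne u hu
      · exact absurd rfl hne
      · rw [mem_bottomEdge] at hu; unfold InGrid; omega
      · rw [mem_leftEdge] at hu; unfold InGrid; omega
      · rw [mem_rightEdge] at hu; unfold InGrid; omega
    · intro v hv
      rw [mem_topEdge] at hv
      have hp := perim_pos hm
      rw [show perim m - 1 + v.2 = (v.2 - 1) + perim m by omega, Nat.add_mod_right]
      congr 1
      unfold bpos
      split_ifs <;> omega
  · refine ⟨fun v => m + 1 - v.2, fun v => m - v.1, 2 * (m - 1) - 1, ?_, ?_, ?_, ?_, ?_, ?_, ?_, ?_⟩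
    · unfold InGrid; intros; omega
    · unfold InGrid; intros; ext <;> omega
    · intro y δ _ _ _; exact ⟨(m - δ, m + 1 - y), by unfold InGrid; dsimp only; omega⟩
    · intro u v hu hv; rw [gridG_adj]; simp only [hu, hv, true_and]; unfold InGrid at hu hv; omega
    · intro v; rw [mem_bottomEdge]; unfold InGrid; omega
    · unfold OnBoundary InGrid; intros; omega
    · refine edge_cases ?_ ?_ ?_ ?_ <;> intro hne u hu
      · rw [mem_topEdge] at hu; unfold InGrid; omega
      · exact absurd rfl hne
      · rw [mem_leftEdge] at hu; unfold InGrid; omega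
      · rw [mem_rightEdge] at hu; unfold InGrid; omega
    · intro v hv
      rw [mem_bottomEdge] at hv
      congr 1
      unfold bpos
      split_ifs <;> omega
  · refine ⟨fun v => m + 1 - v.1, fun v => v.2 - 1, 3 * (m - 1) - 1, ?_, ?_, ?_, ?_, ?_, ?_, ?_, ?_⟩
    · unfold InGrid; intros; omega
    · unfold InGrid; intros; ext <;> omega
    · intro y δ _ _ _; exact ⟨(m + 1 - y, δ + 1), by unfold InGrid; dsimp only; omega⟩
    · intro u v hu hv; rw [gridG_adj]; simp only [hu, hv, true_and]; unfold InGrid at hu hv; omega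
    · intro v; rw [mem_leftEdge]; unfold InGrid; omega
    · unfold OnBoundary InGrid; intros; omega
    · refine edge_cases ?_ ?_ ?_ ?_ <;> intro hne u hu
      · rw [mem_topEdge] at hu; unfold InGrid; omega
      · rw [mem_bottomEdge] at hu; unfold InGrid; omega
      · exact absurd rfl hne
      · rw [mem_rightEdge] at hu; unfold InGrid; omega
    · intro v hv
      rw [mem_leftEdge] at hv
      -- the corner `(1, 1)` has position `0`, reached from the left edge by wrapping around
      by_cases h1 : v.1 = 1
      · have e1 : bpos m v = 0 := by unfold bpos; split_ifs; omega
        have e2 : 3 * (m - 1) - 1 + (m + 1 - v.1) = perim m := by unfold perim; omega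
        rw [e1, e2]; simp
      · congr 1
        unfold bpos
        split_ifs <;> omega
  · refine ⟨fun v => v.1, fun v => m - v.2, m - 2, ?_, ?_, ?_, ?_, ?_, ?_, ?_, ?_⟩
    · unfold InGrid; intros; omega
    · unfold InGrid; intros; ext <;> omega
    · intro y δ _ _ _; exact ⟨(y, m - δ), by unfold InGrid; dsimp only; omega⟩
    · intro u v hu hv; rw [gridG_adj]; simp only [hu, hv, true_and]; unfold InGrid at hu hv; omega
    · intro v; rw [mem_rightEdge]; unfold InGrid; omega
    · unfold OnBoundary InGrid; intros; omega
    · refine edge_cases ?_ ?_ ?_ ?_ <;> intro hne u hu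
      · rw [mem_topEdge] at hu; unfold InGrid; omega
      · rw [mem_bottomEdge] at hu; unfold InGrid; omega
      · rw [mem_leftEdge] at hu; unfold InGrid; omega
      · exact absurd rfl hne
    · intro v hv
      rw [mem_rightEdge] at hv
      congr 1
      unfold bpos
      split_ifs <;> omega

theorem inGrid_of_mem_support {m : ℕ} {u v : Vtx} (P : (gridG m).Walk u v) (hu : InGrid m u) :
    ∀ x ∈ P.support, InGrid m x := by
  induction P with
  | nil => intro x hx; simp only [SimpleGraph.Walk.support_nil, List.mem_singleton] at hx; rwa [hx]
  | cons h p ih =>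
    intro x hx
    rw [SimpleGraph.Walk.support_cons, List.mem_cons] at hx
    rcases hx with rfl | hx
    · exact hu
    · exact ih (gridG_adj.1 h).2.1 x hx

namespace Frame

variable {m : ℕ} {e : Finset Vtx}

/-- In adapted coordinates, too, a walk is at least as long as the ℓ¹-distance of its ends. -/
theorem le_length (F : Frame m e) {u v : Vtx} (P : (gridG m).Walk u v) :
    ((F.Y u : ℤ) - F.Y v).natAbs + ((F.D u : ℤ) - F.D v).natAbs ≤ P.length := by
  induction P with
  | nil => simp
  | cons h p ih =>
    have h1 := (F.adj _ _ (gridG_adj.1 h).1 (gridG_adj.1 h).2.1).1 h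
    rw [SimpleGraph.Walk.length_cons]
    omega

theorem le_dist (F : Frame m e) {u v : Vtx} (h : (gridG m).Reachable u v) :
    ((F.Y u : ℤ) - F.Y v).natAbs + ((F.D u : ℤ) - F.D v).natAbs ≤ (gridG m).dist u v := by
  obtain ⟨P, hP⟩ := h.exists_walk_length_eq_dist
  rw [← hP]
  exact F.le_length P

/-- The straight walk from `v` to its foot on `e`. -/
theorem exists_column (F : Frame m e) : ∀ (n : ℕ) (v : Vtx), InGrid m v → F.D v = n →
    ∃ (w : Vtx) (P : (gridG m).Walk v w), InGrid m w ∧ F.Y w = F.Y v ∧ F.D w = 0 ∧ P.length = n ∧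
      ∀ x ∈ P.support, InGrid m x ∧ F.Y x = F.Y v ∧ F.D x ≤ n := by
  intro n
  induction n with
  | zero =>
    intro v hv h
    refine ⟨v, .nil, hv, rfl, h, rfl, ?_⟩
    intro x hx
    simp only [SimpleGraph.Walk.support_nil, List.mem_singleton] at hx
    subst hx
    exact ⟨hv, rfl, h.le⟩
  | succ n ih =>
    intro v hv h
    have hb := F.bounds v hv
    obtain ⟨u, hu, hY, hD⟩ := F.surj (F.Y v) n hb.1 hb.2.1 (by omega)
    obtain ⟨w, P, h1, h2, h3, h4, h5⟩ := ih u hu hD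
    have hadj : (gridG m).Adj v u := (F.adj v u hv hu).2 (by omega)
    refine ⟨w, .cons hadj P, h1, by omega, h3, by simp [h4], ?_⟩
    intro x hx
    rw [SimpleGraph.Walk.support_cons, List.mem_cons] at hx
    rcases hx with rfl | hx
    · exact ⟨hv, rfl, h.le⟩
    · have := h5 x hx
      exact ⟨this.1, by omega, by omega⟩

theorem reachable (F : Frame m e) {u v : Vtx} (hu : InGrid m u) (hv : InGrid m v) :
    (gridG m).Reachable u v := by
  have hrow : ∀ n u v, InGrid m u → InGrid m v → F.D u = 0 → F.D v = 0 → F.Y u + n = F.Y v →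
      (gridG m).Reachable u v := by
    intro n
    induction n with
    | zero =>
      intro u v hu hv h1 h2 h3
      rw [F.inj u v hu hv (by omega) (by omega)]
    | succ n ih =>
      intro u v hu hv h1 h2 h3
      have hb := F.bounds v hv
      obtain ⟨w, hw, hY, hD⟩ := F.surj (F.Y u + 1) 0 (by omega) (by omega) (by omega)
      have hadj : (gridG m).Adj u w := (F.adj u w hu hw).2 (by omega)
      exact hadj.reachable.trans (ih w v hw hv hD h2 (by omega))
  obtain ⟨u', P, hu', -, hu0, -⟩ := F.exists_column _ u hu rfl
  obtain ⟨v', Q, hv', -, hv0, -⟩ := F.exists_column _ v hv rfl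
  refine P.reachable.trans (SimpleGraph.Reachable.trans ?_ Q.reachable.symm)
  rcases le_total (F.Y u') (F.Y v') with h | h
  · exact hrow (F.Y v' - F.Y u') u' v' hu' hv' hu0 hv0 (by omega)
  · exact (hrow (F.Y u' - F.Y v') v' u' hv' hu' hv0 hu0 (by omega)).symm

/-- A closest boundary vertex lying on `e` is the foot of the perpendicular to `e`. -/
theorem foot (F : Frame m e) {t b : Vtx} (ht : InGrid m t) (hb : b ∈ e)
    (hmin : ∀ b', OnBoundary m b' → (gridG m).dist t b ≤ (gridG m).dist t b') :
    F.Y t = F.Y b ∧ F.D t = (gridG m).dist t b := by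
  have hb' := (F.mem_edge b).1 hb
  obtain ⟨w, P, hw, h1, h2, h3, -⟩ := F.exists_column _ t ht rfl
  have h4 := hmin w ((F.boundary w hw).2 (Or.inl h2))
  have h5 := SimpleGraph.dist_le P
  have h6 := F.le_dist (F.reachable ht hb'.1)
  omega

end Frame

/-! ### The combinatorial selection of groups and windows -/

/-- The `N` elements of `S` with the smallest values of `f`. -/
theorem exists_lower {α : Type*} [DecidableEq α] (f : α → ℤ) :
    ∀ (N : ℕ) (S : Finset α), N ≤ S.card →
      ∃ A ⊆ S, A.card = N ∧ ∀ p ∈ A, ∀ q ∈ S \ A, f p ≤ f q := by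
  intro N
  induction N with
  | zero => intro S _; exact ⟨∅, by simp, by simp, by simp⟩
  | succ N ih =>
    intro S hS
    obtain ⟨A, hA, hc, hle⟩ := ih S (by omega)
    have hne : (S \ A).Nonempty := by
      rw [← Finset.card_pos, Finset.card_sdiff_of_subset hA]; omega
    obtain ⟨a, ha, hmin⟩ := Finset.exists_min_image (S \ A) f hne
    rw [Finset.mem_sdiff] at ha
    refine ⟨insert a A, ?_, ?_, ?_⟩
    · intro v hv
      rcases Finset.mem_insert.1 hv with rfl | h
      · exact ha.1
      · exact hA h
    · rw [Finset.card_insert_of_notMem ha.2, hc]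
    · intro p hp q hq
      have hq' : q ∈ S \ A := by
        simp only [Finset.mem_sdiff, Finset.mem_insert, not_or] at hq ⊢
        exact ⟨hq.1, hq.2.2⟩
      rcases Finset.mem_insert.1 hp with rfl | h
      · exact hmin q hq'
      · exact hle p h q hq'

/-- `z` consecutive groups of size `N` in the order given by `x`. -/
theorem exists_groups {α : Type*} [DecidableEq α] (x : α → ℕ) (N : ℕ) :
    ∀ (z : ℕ) (S : Finset α), Set.InjOn x S → z * N ≤ S.card →
      ∃ G : ℕ → Finset α, (∀ i < z, G i ⊆ S ∧ (G i).card = N) ∧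
        ∀ i j, i < j → j < z → ∀ p ∈ G i, ∀ q ∈ G j, x p < x q := by
  intro z
  induction z with
  | zero => intro S _ _; exact ⟨fun _ => ∅, by simp, by simp⟩
  | succ z ih =>
    intro S hx hS
    have hS' : z * N + N ≤ S.card := by rw [← Nat.succ_mul]; exact hS
    obtain ⟨A, hA, hc, hle⟩ := exists_lower (fun p => (x p : ℤ)) N S (by omega)
    obtain ⟨G, h1, h2⟩ := ih (S \ A) (hx.mono (by simp))
      (by rw [Finset.card_sdiff_of_subset hA]; omega)
    refine ⟨fun i => if i = 0 then A else G (i - 1), ?_, ?_⟩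
    · intro i hi
      by_cases h0 : i = 0
      · simp [h0, hA, hc]
      · have := h1 (i - 1) (by omega)
        simp only [h0, if_false]
        exact ⟨this.1.trans Finset.sdiff_subset, this.2⟩
    · intro i j hij hj p hp q hq
      have hj0 : j ≠ 0 := by omega
      simp only [hj0, if_false] at hq
      by_cases h0 : i = 0
      · simp only [h0, if_true] at hp
        have hq' := (h1 (j - 1) (by omega)).1 hq
        have hl := hle p hp q hq'
        rw [Finset.mem_sdiff] at hq'
        have hne : x p ≠ x q := by
          intro h
          have := hx (hA hp) hq'.1 h
          exact hq'.2 (this ▸ hp)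
        simp only [Nat.cast_le] at hl
        omega
      · simp only [h0, if_false] at hp
        exact h2 (i - 1) (j - 1) (by omega) (by omega) p hp q hq

open Classical in
/-- There are at most `2 · 5d · 2d = 20d²` conflicts among the `25d²` couples in `A × B`. -/
theorem exists_nonconflict {α : Type*} (d : ℕ) (M A B : Finset α) (conf : α → α → Prop)
    (hd : 0 < d) (hA : A ⊆ M) (hB : B ⊆ M) (hAc : A.card = 5 * d) (hBc : B.card = 5 * d)
    (hconf : ∀ p ∈ M, (M.filter (fun q => conf p q)).card ≤ 2 * d) :
    ∃ p ∈ A, ∃ q ∈ B, ¬ conf p q ∧ ¬ conf q p := by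
  by_contra! hcon
  have key : ∀ A' B' : Finset α, A' ⊆ M → B' ⊆ M → A'.card = 5 * d →
      ((A' ×ˢ B').filter (fun r => conf r.1 r.2)).card ≤ 5 * d * (2 * d) := by
    intro A' B' hA' hB' hc
    rw [← hc]
    refine Finset.card_le_mul_card_image_of_maps_to (f := Prod.fst) (t := A') ?_ (2 * d) ?_ |>.trans ?_
    · intro r hr
      simp only [Finset.mem_filter, Finset.mem_product] at hr
      exact hr.1.1
    · intro p hp
      refine le_trans ?_ (hconf p (hA' hp))
      refine Finset.card_le_card_of_injOn Prod.snd ?_ ?_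
      · rintro ⟨u, v⟩ hr
        simp only [Finset.coe_filter, Finset.mem_filter, Finset.mem_product,
          Set.mem_ofPred_eq] at hr ⊢
        obtain ⟨⟨⟨_, h2⟩, h3⟩, rfl⟩ := hr
        exact ⟨hB' h2, h3⟩
      · rintro ⟨u, v⟩ hr ⟨u', v'⟩ hr' h
        simp only [Finset.coe_filter, Finset.mem_filter, Finset.mem_product,
          Set.mem_ofPred_eq] at hr hr' h
        rw [Prod.mk.injEq]
        exact ⟨hr.2.trans hr'.2.symm, h⟩
    · rw [mul_comm]
  have h1 := key A B hA hB hAc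
  have h2 := key B A hB hA hBc
  have h3 : (A ×ˢ B).card ≤ ((A ×ˢ B).filter (fun r => conf r.1 r.2)).card +
      ((B ×ˢ A).filter (fun r => conf r.1 r.2)).card := by
    rw [← Finset.card_filter_add_card_filter_not (s := A ×ˢ B) (fun r => conf r.1 r.2)]
    refine Nat.add_le_add_left ?_ _
    refine Finset.card_le_card_of_injOn Prod.swap ?_ (Prod.swap_injective.injOn)
    rintro ⟨u, v⟩ hr
    simp only [Finset.coe_filter, Finset.mem_product, Set.mem_ofPred_eq, Prod.swap] at hr ⊢
    exact ⟨hr.1.symm, hcon u hr.1.1 v hr.1.2 hr.2⟩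
  rw [Finset.card_product, hAc, hBc] at h3
  nlinarith

open Classical in
/-- The abstract form of the partition: `x p` and `y p` are the positions of the source and of `t̃`,
`conf` is the conflict relation, `hnc` is planarity and `hcount` the density bound. The group `G i`
has its `y`-values in the window `[lo i, hi i]`. -/
theorem exists_windows {α : Type*} (M : Finset α) (x y : α → ℕ) (m d z : ℕ)
    (hd : 0 < d) (conf : α → α → Prop) (hx : Set.InjOn x M)
    (hconf : ∀ p ∈ M, (M.filter (fun q => conf p q)).card ≤ 2 * d)
    (hnc : ∀ p ∈ M, ∀ q ∈ M, ¬ conf p q → ¬ conf q p → x p < x q → y q < y p)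
    (hcount : ∀ a b, (∃ p ∈ M, y p ≤ a) → (∃ q ∈ M, b ≤ y q) → a ≤ b →
      (M.filter (fun p => a ≤ y p ∧ y p ≤ b)).card ≤ b + 1 - a + 4 * d)
    (hy : ∀ p ∈ M, ∀ q ∈ M, y p < y q + m)
    (hz : z * (160 * d) ≤ M.card) :
    ∃ (G : Fin z → Finset α) (lo hi : Fin z → ℕ),
      (∀ i, G i ⊆ M ∧ d ≤ (G i).card) ∧
      (∀ i j, i < j → ∀ p ∈ G i, ∀ q ∈ G j, x p < x q) ∧
      (∀ i, ∀ p ∈ G i, lo i ≤ y p ∧ y p ≤ hi i) ∧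
      (∀ i, lo i + 16 * d ≤ hi i + 1 ∧ 2 * (hi i + 1 - lo i) ≤ m) ∧
      (∀ i j, i < j → hi j + 16 * d < lo i) ∧
      (∀ i, (∃ p ∈ M, y p + 16 * d ≤ lo i) ∧ ∃ q ∈ M, hi i + 16 * d ≤ y q) := by
  obtain ⟨G, hG, hGx⟩ := exists_groups x (160 * d) z M hx hz
  -- the extreme `5d` pairs of each group on either side, and the middle ones
  have hmid : ∀ i : Fin z, ∃ A B C : Finset α, A ⊆ G i ∧ B ⊆ G i ∧ C ⊆ G i ∧
      A.card = 5 * d ∧ B.card = 5 * d ∧ C.card = 150 * d ∧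
      (∀ p ∈ A, ∀ q ∈ C, y p ≤ y q) ∧ (∀ p ∈ B, ∀ q ∈ C, y q ≤ y p) := by
    intro i
    obtain ⟨h1, h2⟩ := hG i i.2
    obtain ⟨A, hA, hAc, hAle⟩ := exists_lower (fun p => (y p : ℤ)) (5 * d) (G i) (by omega)
    have hc : (G i \ A).card = 155 * d := by
      rw [Finset.card_sdiff_of_subset hA]; omega
    obtain ⟨B, hB, hBc, hBle⟩ := exists_lower (fun p => -(y p : ℤ)) (5 * d) (G i \ A) (by omega)
    refine ⟨A, B, (G i \ A) \ B, hA, hB.trans Finset.sdiff_subset,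
      Finset.sdiff_subset.trans Finset.sdiff_subset, hAc, hBc, ?_, ?_, ?_⟩
    · rw [Finset.card_sdiff_of_subset hB]; omega
    · intro p hp q hq
      have := hAle p hp q (Finset.sdiff_subset hq)
      simpa using this
    · intro p hp q hq
      have := hBle p hp q hq
      simpa using this
  choose A B C hA hB hC hAc hBc hCc hAC hBC using hmid
  have hsep : ∀ i j : Fin z, i < j → ∀ p ∈ C i, ∀ q ∈ C j, y q < y p := by
    intro i j hij p hp q hq
    obtain ⟨u, hu, v, hv, h1, h2⟩ := exists_nonconflict d M (A i) (B j) conf hd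
      ((hA i).trans (hG i i.2).1) ((hB j).trans (hG j j.2).1) (hAc i) (hBc j) hconf
    have h3 := hnc u ((hG i i.2).1 (hA i hu)) v ((hG j j.2).1 (hB j hv)) h1 h2
      (hGx i j hij j.2 u (hA i hu) v (hB j hv))
    have := hAC i u hu p hp
    have := hBC j v hv q hq
    omega
  have hwin : ∀ i : Fin z, ∃ (N : Finset α) (lo hi : ℕ), N ⊆ C i ∧ d ≤ N.card ∧
      (∀ p ∈ N, lo ≤ y p ∧ y p ≤ hi) ∧ lo + 16 * d ≤ hi + 1 ∧ 2 * (hi + 1 - lo) ≤ m ∧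
      (∃ p ∈ C i, y p + 16 * d ≤ lo) ∧ ∃ q ∈ C i, hi + 16 * d ≤ y q := by
    intro i
    have hCM : C i ⊆ M := (hC i).trans (hG i i.2).1
    have hne : (C i).Nonempty := by rw [← Finset.card_pos, hCc]; omega
    obtain ⟨a, ha, hamin⟩ := Finset.exists_min_image (C i) y hne
    obtain ⟨b, hb, hbmax⟩ := Finset.exists_max_image (C i) y hne
    have hcnt : ∀ l h, y a ≤ l → h ≤ y b → l ≤ h →
        ((C i).filter (fun p => l ≤ y p ∧ y p ≤ h)).card ≤ h + 1 - l + 4 * d := by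
      intro l h h1 h2 h3
      refine le_trans (Finset.card_le_card ?_) (hcount l h ⟨a, hCM ha, h1⟩ ⟨b, hCM hb, h2⟩ h3)
      exact Finset.filter_subset_filter _ hCM
    have hall : (C i).filter (fun p => y a ≤ y p ∧ y p ≤ y b) = C i :=
      Finset.filter_true_of_mem (fun p hp => ⟨hamin p hp, hbmax p hp⟩)
    have h0 := hcnt (y a) (y b) le_rfl le_rfl (hamin b hb)
    rw [hall, hCc] at h0
    have hab := hy b (hCM hb) a (hCM ha)
    -- the four windows below cover the range: two margins of width `16d` and two halves
    obtain ⟨c, hc⟩ : ∃ c, c = (y a + y b) / 2 := ⟨_, rfl⟩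
    have hL := hcnt (y a) (y a + 16 * d - 1) (by omega) (by omega) (by omega)
    have hR := hcnt (y b + 1 - 16 * d) (y b) (by omega) (by omega) (by omega)
    have hM1 := hcnt (y a + 16 * d) c (by omega) (by omega) (by omega)
    have hM2 := hcnt (c + 1) (y b - 16 * d) (by omega) (by omega) (by omega)
    have hcover : C i ⊆
        ((C i).filter (fun p => y a ≤ y p ∧ y p ≤ y a + 16 * d - 1) ∪
         (C i).filter (fun p => y b + 1 - 16 * d ≤ y p ∧ y p ≤ y b)) ∪
        ((C i).filter (fun p => y a + 16 * d ≤ y p ∧ y p ≤ c) ∪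
         (C i).filter (fun p => c + 1 ≤ y p ∧ y p ≤ y b - 16 * d)) := by
      intro p hp
      have := hamin p hp
      have := hbmax p hp
      simp only [Finset.mem_union, Finset.mem_filter, hp, true_and]
      omega
    have h4 := (Finset.card_le_card hcover).trans (Finset.card_union_le _ _)
    have h5 := Finset.card_union_le
      ((C i).filter (fun p => y a ≤ y p ∧ y p ≤ y a + 16 * d - 1))
      ((C i).filter (fun p => y b + 1 - 16 * d ≤ y p ∧ y p ≤ y b))
    have h6 := Finset.card_union_le
      ((C i).filter (fun p => y a + 16 * d ≤ y p ∧ y p ≤ c))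
      ((C i).filter (fun p => c + 1 ≤ y p ∧ y p ≤ y b - 16 * d))
    rw [hCc] at h4
    by_cases hbig : 55 * d ≤ ((C i).filter (fun p => y a + 16 * d ≤ y p ∧ y p ≤ c)).card
    · refine ⟨_, y a + 16 * d, c, Finset.filter_subset _ _, le_trans (by omega) hbig, ?_, by omega,
        by omega, ⟨a, ha, by omega⟩, b, hb, by omega⟩
      intro p hp; exact (Finset.mem_filter.1 hp).2
    · have hbig' : 55 * d ≤ ((C i).filter (fun p => c + 1 ≤ y p ∧ y p ≤ y b - 16 * d)).card := by
        omega
      refine ⟨_, c + 1, y b - 16 * d, Finset.filter_subset _ _, le_trans (by omega) hbig', ?_,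
        by omega, by omega, ⟨a, ha, by omega⟩, b, hb, by omega⟩
      intro p hp; exact (Finset.mem_filter.1 hp).2
  choose N lo hi hN hNc hNy hlen hm hlo hhi using hwin
  refine ⟨N, lo, hi, ?_, ?_, hNy, fun i => ⟨hlen i, hm i⟩, ?_, ?_⟩
  · exact fun i => ⟨(hN i).trans ((hC i).trans (hG i i.2).1), hNc i⟩
  · intro i j hij p hp q hq
    exact hGx i j hij j.2 p (hC i (hN i hp)) q (hC j (hN j hq))
  · intro i j hij
    obtain ⟨p, hp, hp'⟩ := hlo i
    obtain ⟨q, hq, hq'⟩ := hhi j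
    have := hsep i j hij p hp q hq
    omega
  · intro i
    obtain ⟨p, hp, hp'⟩ := hlo i
    obtain ⟨q, hq, hq'⟩ := hhi i
    exact ⟨⟨p, (hG i i.2).1 (hC i hp), hp'⟩, q, (hG i i.2).1 (hC i hq), hq'⟩

/-! ### Cuts -/

/-- Pairwise disjoint sets that all meet `S` are at most `S.card` in number. -/
theorem card_le_of_hit {α β : Type*} [Nonempty β] (N : Finset α) (S : Finset β) (supp : α → Set β)
    (hdisj : ∀ p ∈ N, ∀ q ∈ N, p ≠ q → ∀ x ∈ supp p, x ∉ supp q)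
    (hit : ∀ p ∈ N, ∃ x ∈ S, x ∈ supp p) : N.card ≤ S.card := by
  choose! f hf using hit
  refine Finset.card_le_card_of_injOn f (fun p hp => (hf p hp).1) ?_
  intro p hp q hq hpq
  by_contra hne
  exact hdisj p hp q hq hne _ (hf p hp).2 (hpq ▸ (hf q hq).2)

namespace Frame

variable {m : ℕ} {e : Finset Vtx}

/-- The part of the line perpendicular to `e` at coordinate `y` that is at distance less than `w`
from `e`. -/
def column (F : Frame m e) (y w : ℕ) : Finset Vtx :=
  (Finset.Icc 1 m ×ˢ Finset.Icc 1 m).filter (fun v => F.Y v = y ∧ F.D v < w)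

theorem mem_gridFinset {v : Vtx} : v ∈ Finset.Icc 1 m ×ˢ Finset.Icc 1 m ↔ InGrid m v := by
  simp only [Finset.mem_product, Finset.mem_Icc, InGrid]; tauto

theorem card_column_le (F : Frame m e) (y w : ℕ) : (F.column y w).card ≤ w := by
  rw [← Finset.card_range w]
  refine Finset.card_le_card_of_injOn F.D ?_ ?_
  · intro v hv
    have := (Finset.mem_filter.1 hv).2.2
    simpa using this
  · intro u hu v hv h
    have hu := Finset.mem_filter.1 hu
    have hv := Finset.mem_filter.1 hv
    rw [mem_gridFinset] at hu hv
    exact F.inj u v hu.1 hv.1 (hu.2.1.trans hv.2.1.symm) h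

/-- The vertices of the rectangle `A ≤ Y ≤ B`, `D < w` resting on `e` that have a neighbour outside
it. -/
def rim (F : Frame m e) (A B w : ℕ) : Finset Vtx :=
  F.column A w ∪ F.column B w ∪
    (Finset.Icc 1 m ×ˢ Finset.Icc 1 m).filter (fun v => (A ≤ F.Y v ∧ F.Y v ≤ B) ∧ F.D v + 1 = w)

theorem card_rim_le (F : Frame m e) (A B w : ℕ) : (F.rim A B w).card ≤ B + 1 - A + 2 * w := by
  refine (Finset.card_union_le _ _).trans ?_
  have h1 := (Finset.card_union_le (F.column A w) (F.column B w))
  have h2 := F.card_column_le A w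
  have h3 := F.card_column_le B w
  have h4 : ((Finset.Icc 1 m ×ˢ Finset.Icc 1 m).filter
      (fun v => (A ≤ F.Y v ∧ F.Y v ≤ B) ∧ F.D v + 1 = w)).card ≤ B + 1 - A := by
    rw [← Nat.card_Icc]
    refine Finset.card_le_card_of_injOn F.Y ?_ ?_
    · intro v hv
      have := (Finset.mem_filter.1 hv).2.1
      simpa using this
    · intro u hu v hv h
      have hu := Finset.mem_filter.1 hu
      have hv := Finset.mem_filter.1 hv
      rw [mem_gridFinset] at hu hv
      exact F.inj u v hu.1 hv.1 h (by omega)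
  omega

theorem walk_meets_rim (F : Frame m e) {A B w : ℕ} {s t : Vtx} (P : (gridG m).Walk s t)
    (hs' : ¬ (A ≤ F.Y s ∧ F.Y s ≤ B ∧ F.D s < w))
    (ht' : A ≤ F.Y t ∧ F.Y t ≤ B ∧ F.D t < w) : ∃ x ∈ F.rim A B w, x ∈ P.support := by
  obtain ⟨δ, hδ, h1, h2⟩ := P.reverse.exists_boundary_dart
    {v | A ≤ F.Y v ∧ F.Y v ≤ B ∧ F.D v < w} ht' hs'
  have hx : δ.fst ∈ P.support := by
    have := P.reverse.dart_fst_mem_support_of_mem_darts hδ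
    simpa using this
  refine ⟨δ.fst, ?_, hx⟩
  obtain ⟨g1, g2, -⟩ := gridG_adj.1 δ.adj
  have hadj := (F.adj _ _ g1 g2).1 δ.adj
  change A ≤ F.Y δ.fst ∧ F.Y δ.fst ≤ B ∧ F.D δ.fst < w at h1
  change ¬ (A ≤ F.Y δ.snd ∧ F.Y δ.snd ≤ B ∧ F.D δ.snd < w) at h2
  simp only [rim, column, Finset.mem_union, Finset.mem_filter, mem_gridFinset, g1, true_and]
  omega

/-- On the part of `e` close to the end of the linearization, linearized positions and `Y` differ
by a constant. -/
theorem lpos_add_Y (F : Frame m e) (hm : 2 ≤ m) {r : ℕ} {u v : Vtx} (hu : u ∈ e) (hv : v ∈ e)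
    (hu' : perim m ≤ lpos m r u + m) (hv' : perim m ≤ lpos m r v + m) :
    lpos m r u + F.Y v = lpos m r v + F.Y u := by
  have hp : perim m = 4 * (m - 1) := rfl
  have key : ∀ v ∈ e, lpos m r v = (F.c + F.Y v + r) % perim m := by
    intro v hv
    unfold lpos
    rw [← Nat.mod_add_mod, F.pos v hv, Nat.mod_add_mod]
  have bu := F.bounds u ((F.mem_edge u).1 hu).1
  have bv := F.bounds v ((F.mem_edge v).1 hv).1
  have lu := lpos_lt hm r u
  have lv := lpos_lt hm r v
  have eu := Nat.div_add_mod (F.c + F.Y u + r) (perim m)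
  have ev := Nat.div_add_mod (F.c + F.Y v + r) (perim m)
  rw [← key u hu] at eu
  rw [← key v hv] at ev
  generalize (F.c + F.Y u + r) / perim m = s at *
  generalize (F.c + F.Y v + r) / perim m = t at *
  have hst : s = t := by
    rcases lt_trichotomy s t with h | h | h
    · have : perim m * (s + 1) ≤ perim m * t := Nat.mul_le_mul_left _ (by omega)
      rw [Nat.mul_add] at this
      omega
    · exact h
    · have : perim m * (t + 1) ≤ perim m * s := Nat.mul_le_mul_left _ (by omega)
      rw [Nat.mul_add] at this
      omega
  subst hst
  omega

end Frame

/-! ### The partitioning theorem -/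

/-- Main partitioning theorem. -/
theorem statement6
    (m : ℕ) (hm : 2 ≤ m) (d : ℕ) (hd : 0 < d)
    (π π' : Finset Vtx) (hπ : IsBInterval m π) (hπ' : IsBInterval m π')
    (hππ' : Disjoint π π')
    (hπe : ∃ e ∈ boundaryEdges m, π ⊆ e) (hπ'e : ∃ e ∈ boundaryEdges m, π' ⊆ e)
    (tilde : Vtx → Vtx)
    (M' : Finset DPair)
    (htilde : ∀ p ∈ M', OnBoundary m (tilde p.2) ∧
      ∀ b : Vtx, OnBoundary m b →
        (gridG m).dist p.2 (tilde p.2) ≤ (gridG m).dist p.2 b)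
    (hs : ∀ p ∈ M', p.1 ∈ π) (ht : ∀ p ∈ M', tilde p.2 ∈ π')
    (hdd : ∀ p ∈ M', d ≤ (gridG m).dist p.2 (tilde p.2) ∧
      (gridG m).dist p.2 (tilde p.2) < 2 * d)
    (hbig : 1024 * d ≤ M'.card)
    (hroute : NodeDisjointRoutable (gridG m) M')
    (z : ℕ) (hz : z = ⌈(M'.card : ℝ) / (160 * d)⌉₊ - 1) :
    ∃ σ : Fin z → Finset Vtx, ∃ σ' : Fin z → Finset Vtx,
      (∀ i, IsBInterval m (σ i) ∧ σ i ⊆ π) ∧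
      (∀ i, IsBInterval m (σ' i) ∧ σ' i ⊆ π') ∧
      (∀ i j, i ≠ j → Disjoint (σ i) (σ j)) ∧
      (∀ i j, i ≠ j → Disjoint (σ' i) (σ' j)) ∧
      -- (1) σ₁,…,σ_z,σ'_z,…,σ'₁ appear on Γ in this circular order
      (∃ r : ℕ,
        (∀ i j : Fin z, i < j → OrdBefore m r (σ i) (σ j)) ∧
        (∀ i j : Fin z, OrdBefore m r (σ i) (σ' j)) ∧
        (∀ i j : Fin z, j < i → OrdBefore m r (σ' i) (σ' j))) ∧
      -- (2) separation by at least 16d boundary vertices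
      (∀ i j : Fin z, ∀ u ∈ σ i, ∀ v ∈ σ' j, 16 * d < cgap m u v) ∧
      (∀ i j : Fin z, i ≠ j → ∀ u ∈ σ' i, ∀ v ∈ σ' j, 16 * d < cgap m u v) ∧
      -- (3) size of σ'ᵢ and distance from the other boundary edges
      (∀ i, 16 * d ≤ (σ' i).card ∧ 2 * (σ' i).card ≤ m) ∧
      (∃ e ∈ boundaryEdges m, π' ⊆ e ∧
        ∀ e' ∈ boundaryEdges m, e' ≠ e →
          ∀ i : Fin z, ∀ v ∈ σ' i, ∀ u ∈ e', 16 * d ≤ (gridG m).dist v u) ∧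
      -- (4) each induced instance has optimal value at least d
      (∀ i : Fin z, ∃ N ⊆ M'.filter (fun p => p.1 ∈ σ i ∧ tilde p.2 ∈ σ' i),
        d ≤ N.card ∧ NodeDisjointRoutable (gridG m) N) := by
  classical
  obtain ⟨e, he, hπ'e⟩ := hπ'e
  obtain ⟨e₀, he₀, hπe⟩ := hπe
  obtain ⟨F⟩ := exists_frame hm e he
  obtain ⟨r, len, hlen0, hlenp, rfl⟩ := hπ'.exists_shift hm
  have hp := perim_pos hm
  have hperim : perim m = 4 * (m - 1) := rfl
  have hsum : perim m - len + len ≤ perim m := by omega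
  have hlen : len ≤ m := by
    rw [← card_arc hm (r := r) hsum]
    exact (Finset.card_le_card hπ'e).trans (card_edge_le he)
  -- in this linearization `π` does not wrap around
  obtain ⟨lo₀, len₀, hπle, rfl⟩ := hπ.eq_arc hm r (by
    intro v hv h
    obtain ⟨a, l, -, -, rfl⟩ := hπ
    obtain ⟨i, -, rfl⟩ := Finset.mem_image.1 hv
    refine Finset.disjoint_left.1 hππ' hv ((mem_arc hm hsum).2 ⟨?_, ?_, ?_⟩)
    · exact onBoundary_bvert hm (Nat.mod_lt _ hp)
    · omega
    · omega)
  have hπmem : ∀ {v}, v ∈ arc m r lo₀ len₀ ↔ _ := mem_arc hm hπle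
  have hπ'mem : ∀ {v}, v ∈ arc m r (perim m - len) len ↔ _ := mem_arc hm hsum
  obtain ⟨P, hPpath, hPdisj⟩ := hroute
  obtain ⟨supp, hsupp⟩ : ∃ supp : DPair → Set Vtx,
      ∀ p x, x ∈ supp p ↔ ∃ h : p ∈ M', x ∈ (P ⟨p, h⟩).support :=
    ⟨fun p => {x | ∃ h : p ∈ M', x ∈ (P ⟨p, h⟩).support}, fun p x => Iff.rfl⟩
  have hdisj : ∀ p ∈ M', ∀ q ∈ M', p ≠ q → ∀ x ∈ supp p, x ∉ supp q := by
    intro p hpM q hq hne x hx hx'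
    obtain ⟨h, hx⟩ := (hsupp p x).1 hx
    obtain ⟨h', hx'⟩ := (hsupp q x).1 hx'
    exact hPdisj ⟨p, h⟩ ⟨q, h'⟩ (fun h => hne (congrArg Subtype.val h)) x hx hx'
  have hwalk : ∀ p ∈ M', ∃ W : (gridG m).Walk p.1 p.2, ∀ x ∈ W.support, x ∈ supp p :=
    fun p h => ⟨P ⟨p, h⟩, fun x hx => (hsupp p x).2 ⟨h, hx⟩⟩
  have hfst : ∀ p ∈ M', p.1 ∈ supp p := by
    intro p h; obtain ⟨W, hW⟩ := hwalk p h; exact hW _ W.start_mem_support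
  have hsnd : ∀ p ∈ M', p.2 ∈ supp p := by
    intro p h; obtain ⟨W, hW⟩ := hwalk p h; exact hW _ W.end_mem_support
  have hsb : ∀ p ∈ M', OnBoundary m p.1 := fun p h => (hπmem.1 (hs p h)).1
  have hsinj : Set.InjOn Prod.fst (M' : Set DPair) := by
    intro p hpM q hq h
    by_contra hne
    exact hdisj p hpM q hq hne _ (hfst p hpM) (h ▸ hfst q hq)
  have hmd : 1024 * d ≤ m := by
    refine hbig.trans (le_trans ?_ ((Finset.card_le_card hπe).trans (card_edge_le he₀)))
    exact Finset.card_le_card_of_injOn Prod.fst hs hsinj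
  have htg : ∀ p ∈ M', InGrid m p.2 := by
    intro p h
    obtain ⟨W, -⟩ := hwalk p h
    exact inGrid_of_mem_support W (hsb p h).inGrid _ W.end_mem_support
  have hfoot : ∀ p ∈ M', F.Y p.2 = F.Y (tilde p.2) ∧ F.D p.2 < 2 * d ∧
      2 ≤ F.Y (tilde p.2) ∧ F.Y (tilde p.2) + 1 ≤ m := by
    intro p h
    obtain ⟨h1, h2⟩ := F.foot (htg p h) (hπ'e (ht p h)) (htilde p h).2
    have hb := F.bounds _ (htg p h)
    have hnb : ¬ OnBoundary m p.2 := by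
      intro hb
      have := (htilde p h).2 _ hb
      rw [SimpleGraph.dist_self] at this
      have := (hdd p h).1
      omega
    rw [F.boundary _ (htg p h)] at hnb
    have := (hdd p h).2
    omega
  have hlY : ∀ u ∈ arc m r (perim m - len) len, ∀ v ∈ arc m r (perim m - len) len,
      lpos m r u + F.Y v = lpos m r v + F.Y u := by
    intro u hu v hv
    have := hπ'mem.1 hu
    have := hπ'mem.1 hv
    exact F.lpos_add_Y hm (hπ'e hu) (hπ'e hv) (by omega) (by omega)
  -- `π'` is convex with respect to the coordinate `Y` on its edge
  have hconv : ∀ u ∈ arc m r (perim m - len) len, ∀ v ∈ arc m r (perim m - len) len, ∀ s ∈ e,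
      F.Y u ≤ F.Y s → F.Y s ≤ F.Y v → s ∈ arc m r (perim m - len) len := by
    intro u hu v hv s hs h1 h2
    have h3 := hlY u hu v hv
    have h4 := hπ'mem.1 hu
    have h5 := hπ'mem.1 hv
    obtain ⟨w, hwb, hwl⟩ : ∃ w, OnBoundary m w ∧ lpos m r w = lpos m r u + (F.Y s - F.Y u) :=
      ⟨_, onBoundary_bvert hm (Nat.mod_lt _ hp), lpos_arc hm r _ _ (by omega)⟩
    have hw : w ∈ arc m r (perim m - len) len := hπ'mem.2 ⟨hwb, by omega, by omega⟩
    have h6 := hlY u hu w hw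
    have h7 := (F.mem_edge w).1 (hπ'e hw)
    have h8 := (F.mem_edge s).1 hs
    rwa [F.inj s w h8.1 h7.1 (by omega) (by omega)]
  have hlt : ∀ p ∈ M', ∀ q ∈ M', lpos m r p.1 < lpos m r (tilde q.2) := by
    intro p hpM q hq
    have h1 := hπ'mem.1 (ht q hq)
    by_contra hcon
    refine Finset.disjoint_left.1 hππ' (hs p hpM) (hπ'mem.2 ⟨hsb p hpM, by omega, ?_⟩)
    have := lpos_lt hm r p.1
    omega
  obtain ⟨G, lo, hi, hG, hGx, hGy, hsize, hsep, hends⟩ := exists_windows M'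
    (fun p => lpos m r p.1) (fun p => lpos m r (tilde p.2)) m d z hd
    (fun p q => ∃ x ∈ supp q, InGrid m x ∧ F.Y x = F.Y p.2 ∧ F.D x ≤ F.D p.2)
    (by
      intro p hpM q hq h
      exact hsinj hpM hq (lpos_inj hm (hsb p hpM) (hsb q hq) h))
    (by
      intro p hpM
      refine le_trans ?_ (F.card_column_le (F.Y p.2) (2 * d))
      refine card_le_of_hit _ _ supp ?_ ?_
      · intro q hq q' hq'
        exact hdisj q (Finset.mem_filter.1 hq).1 q' (Finset.mem_filter.1 hq').1
      · intro q hq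
        obtain ⟨x, h1, h2, h3, h4⟩ := (Finset.mem_filter.1 hq).2
        have := (hfoot p hpM).2.1
        exact ⟨x, Finset.mem_filter.2 ⟨Frame.mem_gridFinset.2 h2, h3, by omega⟩, h1⟩)
    (by
      intro p hpM q hq hpq hqp hx
      have hext : ∀ p ∈ M', ∃ W : (gridG m).Walk p.1 (tilde p.2), ∀ x ∈ W.support,
          x ∈ supp p ∨ (InGrid m x ∧ F.Y x = F.Y p.2 ∧ F.D x ≤ F.D p.2) := by
        intro p h
        obtain ⟨W, hW⟩ := hwalk p h
        obtain ⟨w, Q, h1, h2, h3, -, h4⟩ := F.exists_column _ p.2 (htg p h) rfl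
        have h5 := (F.mem_edge _).1 (hπ'e (ht p h))
        have h6 : w = tilde p.2 :=
          F.inj _ _ h1 h5.1 (h2.trans (hfoot p h).1) (h3.trans h5.2.symm)
        subst h6
        refine ⟨W.append Q, fun x hx => ?_⟩
        rcases (SimpleGraph.Walk.mem_support_append_iff _ _).1 hx with h | h
        · exact Or.inl (hW x h)
        · exact Or.inr (h4 x h)
      obtain ⟨W, hW⟩ := hext p hpM
      obtain ⟨W', hW'⟩ := hext q hq
      refine noncrossing_lpos hm W W' (hsb p hpM) (htilde p hpM).1 (hsb q hq) (htilde q hq).1 ?_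
        hx (hlt q hq p hpM) (hlt q hq q hq)
      intro x h1 h2
      rcases hW x h1 with h1 | h1 <;> rcases hW' x h2 with h2 | h2
      · exact hdisj p hpM q hq (by rintro rfl; exact lt_irrefl _ hx) x h1 h2
      · exact hqp ⟨x, h1, h2⟩
      · exact hpq ⟨x, h2, h1⟩
      · -- two columns that meet are nested, so one contains the other's destination
        rcases le_total (F.D p.2) (F.D q.2) with h | h
        · exact hqp ⟨p.2, hsnd p hpM, htg p hpM, by omega, h⟩
        · exact hpq ⟨q.2, hsnd q hq, htg q hq, by omega, h⟩)
    (by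
      rintro a b ⟨p, hpM, hpa⟩ ⟨q, hq, hqb⟩ hab
      obtain ⟨A, hA⟩ : ∃ A, A = F.Y (tilde p.2) + (a - lpos m r (tilde p.2)) := ⟨_, rfl⟩
      obtain ⟨B, hB⟩ : ∃ B, B = A + (b - a) := ⟨_, rfl⟩
      have h1 := hlY _ (ht p hpM) _ (ht q hq)
      have h2 := hfoot p hpM
      have h3 := hfoot q hq
      refine le_trans ?_ ((F.card_rim_le A B (2 * d)).trans (by omega))
      refine card_le_of_hit _ _ supp ?_ ?_
      · intro q hq q' hq'
        exact hdisj q (Finset.mem_filter.1 hq).1 q' (Finset.mem_filter.1 hq').1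
      · intro t htF
        obtain ⟨htM, ht1, ht2⟩ := Finset.mem_filter.1 htF
        obtain ⟨W, hW⟩ := hwalk t htM
        have h4 := hfoot t htM
        have h5 := hlY _ (ht p hpM) _ (ht t htM)
        have hout : ¬ (A ≤ F.Y t.1 ∧ F.Y t.1 ≤ B ∧ F.D t.1 < 2 * d) := by
          rintro ⟨g1, g2, g3⟩
          have hb := (F.boundary _ (hsb t htM).inGrid).1 (hsb t htM)
          have hse : t.1 ∈ e := (F.mem_edge _).2 ⟨(hsb t htM).inGrid, by omega⟩
          exact Finset.disjoint_left.1 hππ' (hs t htM)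
            (hconv _ (ht p hpM) _ (ht q hq) _ hse (by omega) (by omega))
        obtain ⟨x, hx, hx'⟩ := F.walk_meets_rim W hout ⟨by omega, by omega, by omega⟩
        exact ⟨x, hx, hW x hx'⟩)
    (by
      intro p hpM q hq
      have h1 := hπ'mem.1 (ht p hpM)
      have h2 := hπ'mem.1 (ht q hq)
      omega)
    (by
      rcases Nat.eq_zero_or_pos z with h0 | h0
      · simp [h0]
      have h1 : z < ⌈(M'.card : ℝ) / (160 * d)⌉₊ := by omega
      rw [Nat.lt_ceil, lt_div_iff₀ (by positivity)] at h1
      exact_mod_cast h1.le)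
  have hne : ∀ i, (G i).Nonempty := fun i => Finset.card_pos.1 (hd.trans_le (hG i).2)
  choose a ha hamin using fun i => Finset.exists_min_image (G i) (fun p => lpos m r p.1) (hne i)
  choose b hb hbmax using fun i => Finset.exists_max_image (G i) (fun p => lpos m r p.1) (hne i)
  have hab := fun i => hamin i (b i) (hb i)
  have hblt : ∀ i, lpos m r (b i).1 < perim m - len := by
    intro i
    have h1 := lpos_lt hm r (b i).1
    by_contra hcon
    exact Finset.disjoint_left.1 hππ' (hs _ ((hG i).1 (hb i)))
      (hπ'mem.2 ⟨hsb _ ((hG i).1 (hb i)), by omega, by omega⟩)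
  have hlo : ∀ i, perim m - len + 16 * d ≤ lo i := by
    intro i
    obtain ⟨⟨p, hpM, h⟩, -⟩ := hends i
    have := hπ'mem.1 (ht p hpM)
    omega
  have hhi : ∀ i, hi i + 16 * d < perim m := by
    intro i
    obtain ⟨-, q, hq, h⟩ := hends i
    have := lpos_lt hm r (tilde q.2)
    omega
  have hmemσ : ∀ {i v}, v ∈ arc m r (lpos m r (a i).1) (lpos m r (b i).1 + 1 - lpos m r (a i).1) ↔
      OnBoundary m v ∧ lpos m r (a i).1 ≤ lpos m r v ∧ lpos m r v ≤ lpos m r (b i).1 := by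
    intro i v
    have h1 := hab i
    have h2 := hblt i
    rw [mem_arc hm (by omega)]
    refine and_congr_right fun _ => and_congr_right fun _ => ?_
    omega
  have hmemσ' : ∀ {i v}, v ∈ arc m r (lo i) (hi i + 1 - lo i) ↔
      OnBoundary m v ∧ lo i ≤ lpos m r v ∧ lpos m r v ≤ hi i := by
    intro i v
    have h1 := hsize i
    have h2 := hhi i
    rw [mem_arc hm (by omega)]
    refine and_congr_right fun _ => and_congr_right fun _ => ?_
    omega
  have hσ'sub : ∀ i, arc m r (lo i) (hi i + 1 - lo i) ⊆ arc m r (perim m - len) len := by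
    intro i v hv
    obtain ⟨h1, h2, h3⟩ := hmemσ'.1 hv
    have h4 := hlo i
    have h5 := hhi i
    exact hπ'mem.2 ⟨h1, by omega, by omega⟩
  have hσord : ∀ i j : Fin z, i < j → lpos m r (b i).1 < lpos m r (a j).1 :=
    fun i j hij => hGx i j hij _ (hb i) _ (ha j)
  refine ⟨fun i => arc m r (lpos m r (a i).1) (lpos m r (b i).1 + 1 - lpos m r (a i).1),
    fun i => arc m r (lo i) (hi i + 1 - lo i), ?_, ?_, ?_, ?_, ⟨r, ?_, ?_, ?_⟩, ?_, ?_, ?_,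
    ⟨e, he, hπ'e, ?_⟩, ?_⟩
  · intro i
    have h1 := hab i
    have h2 := hblt i
    refine ⟨isBInterval_arc (by omega) (by omega), fun v hv => ?_⟩
    obtain ⟨h3, h4, h5⟩ := hmemσ.1 hv
    have h6 := hπmem.1 (hs _ ((hG i).1 (ha i)))
    have h7 := hπmem.1 (hs _ ((hG i).1 (hb i)))
    exact hπmem.2 ⟨h3, by omega, by omega⟩
  · intro i
    have h1 := hsize i
    have h2 := hhi i
    exact ⟨isBInterval_arc (by omega) (by omega), hσ'sub i⟩
  · intro i j hij
    refine Finset.disjoint_left.2 fun v hv hv' => ?_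
    have h1 := hmemσ.1 hv
    have h2 := hmemσ.1 hv'
    rcases lt_or_gt_of_ne hij with h | h
    · have := hσord i j h; omega
    · have := hσord j i h; omega
  · intro i j hij
    refine Finset.disjoint_left.2 fun v hv hv' => ?_
    have h1 := hmemσ'.1 hv
    have h2 := hmemσ'.1 hv'
    rcases lt_or_gt_of_ne hij with h | h
    · have := hsep i j h; omega
    · have := hsep j i h; omega
  · intro i j hij u hu v hv
    change lpos m r u < lpos m r v
    have h1 := hmemσ.1 hu
    have h2 := hmemσ.1 hv
    have := hσord i j hij
    omega
  · intro i j u hu v hv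
    change lpos m r u < lpos m r v
    have h1 := hmemσ.1 hu
    have h2 := hmemσ'.1 hv
    have h3 := hblt i
    have h4 := hlo j
    omega
  · intro i j hij u hu v hv
    change lpos m r u < lpos m r v
    have h1 := hmemσ'.1 hu
    have h2 := hmemσ'.1 hv
    have h3 := hsep j i hij
    omega
  · intro i j u hu v hv
    have h1 := hmemσ.1 hu
    have h2 := hmemσ'.1 hv
    have h3 := hblt i
    have h4 := hlo j
    have h5 := hhi j
    exact lt_cgap hm (r := r) h1.1 h2.1 (by omega) (by omega)
  · intro i j hij u hu v hv
    have h1 := hmemσ'.1 hu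
    have h2 := hmemσ'.1 hv
    have h3 := hlo i
    have h4 := hlo j
    have h5 := hhi i
    have h6 := hhi j
    rcases lt_or_gt_of_ne hij with h | h
    · have := hsep i j h
      rw [cgap_comm]
      exact lt_cgap hm (r := r) h2.1 h1.1 (by omega) (by omega)
    · have := hsep j i h
      exact lt_cgap hm (r := r) h1.1 h2.1 (by omega) (by omega)
  · intro i
    have h1 := hsize i
    have h2 := hhi i
    rw [card_arc hm (by omega)]
    exact ⟨by omega, h1.2⟩
  · intro e' he' hne' i v hv u hu
    have h1 := hmemσ'.1 hv
    have h2 := (F.mem_edge v).1 (hπ'e (hσ'sub i hv))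
    obtain ⟨h3, h4⟩ := F.other e' he' hne' u hu
    have h5 := F.le_dist (F.reachable h2.1 h3)
    obtain ⟨⟨p, hpM, hp'⟩, q, hq, hq'⟩ := hends i
    have h6 := hlY _ (ht p hpM) _ (hσ'sub i hv)
    have h7 := hlY _ (ht q hq) _ (hσ'sub i hv)
    have h8 := hfoot p hpM
    have h9 := hfoot q hq
    omega
  · intro i
    refine ⟨G i, ?_, (hG i).2, fun p => P ⟨p.1, (hG i).1 p.2⟩, ?_, ?_⟩
    · intro p hpG
      have hpM := (hG i).1 hpG
      refine Finset.mem_filter.2 ⟨hpM, hmemσ.2 ⟨hsb p hpM, hamin i p hpG, hbmax i p hpG⟩,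
        hmemσ'.2 ⟨(htilde p hpM).1, hGy i p hpG⟩⟩
    · intro p
      exact hPpath _
    · intro p q hpq
      refine hPdisj _ _ (fun h => hpq (Subtype.ext ?_))
      exact Subtype.mk.inj h
end
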